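/- arXiv:1501.05388 — 2 statements merged into one kernel-verified Lean document; each statement's English description precedes it below -/
import Mathlib

section
/- Let p, q ≥ 1, let A_1,…,A_p, B_1,…,B_q be strictly positive reals and a_1,…,a_p, b_1,…,b_q be reals with Σ_{i=1}^p A_i = Σ_{j=1}^q B_j and μ = Σ_{j=1}^q b_j − Σ_{k=1}^p a_k + (p−q)/2 > 0. Set ρ = ∏_{k=1}^p A_k^{A_k} · ∏_{j=1}^q B_j^{−B_j} and γ = −min_{1≤k≤p}(a_k/A_k). For c > γ and x > 0, x ≠ ρ, define H(x) = lim_{R→∞} (1/(2π)) ∫_{−R}^{R} [∏_{k=1}^p Γ(A_k(c+it)+a_k) / ∏_{j=1}^q Γ(B_j(c+it)+b_j)] · x^{−(c+it)} dt (a real number independent of c). Then for every complex s with Re s > γ, ∫_0^ρ H(x) x^{s−1} dx = ∏_{k=1}^p Γ(A_k s + a_k) / ∏_{j=1}^q Γ(B_j s + b_j). -/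
open MeasureTheory Filter

/-
By Stirling's formula, `F s := ∏ Γ(A i * s + a i) / ∏ Γ(B j * s + b j)` satisfies
`F s * ρ ^ (-s) = C * s ^ (-μ) + O(|s| ^ (-1 - re μ))` in a right half-plane: the hypothesis
`∑ A = ∑ B` cancels the super-exponential factors. After translating and scaling, `γ = 0` and
`ρ = 1`. The main term `s ^ (-μ)` is the Mellin transform of `(-log x) ^ (μ - 1) / Γ(μ)` on
`(0, 1)`. The remainder is integrable on vertical lines, so it is the Mellin transform of its
inverse Mellin transform, which vanishes for `x > 1`, as moving the line of integration to `+∞`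
shows. Hence `F` is the Mellin transform of a function supported in `(0, ρ]` and continuous on
`(0, ρ)`. At a point of continuity a convergent principal value integral recovers the original
function, because it agrees with its Gaussian summation; so that function is `H`.
-/

section Stirling

open Complex Topology

lemma log_div_of_re_pos {z w : ℂ} (hz : 0 < z.re) (hw : 0 < w.re) :
    log (z / w) = log z - log w := by
  have hz_arg := abs_lt.1 (abs_arg_lt_pi_div_two_iff.2 (Or.inl hz))
  have hw_arg := abs_lt.1 (abs_arg_lt_pi_div_two_iff.2 (Or.inl hw))
  have hexp : z / w = exp (log z - log w) := by
    rw [exp_sub, exp_log (ne_zero_of_re_pos hz), exp_log (ne_zero_of_re_pos hw)]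
  rw [hexp, log_exp]
  all_goals
    simp only [sub_im, log_im]
    linarith

lemma sq_norm_add_ofReal (z : ℂ) (x : ℝ) : ‖z + x‖ ^ 2 = ‖z‖ ^ 2 + 2 * x * z.re + x ^ 2 := by
  simp only [Complex.sq_norm, normSq_apply, add_re, add_im, ofReal_re, ofReal_im]
  ring

lemma norm_le_norm_add_ofReal {z : ℂ} {x : ℝ} (hz : 0 ≤ z.re) (hx : 0 ≤ x) : ‖z‖ ≤ ‖z + x‖ := by
  refine le_of_sq_le_sq ?_ (norm_nonneg _)
  rw [sq_norm_add_ofReal]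
  nlinarith [mul_nonneg hx hz]

lemma sq_norm_add_le_two_mul_sq_norm_add {z : ℂ} {x : ℝ} (hz : 0 ≤ z.re) (hx : 0 ≤ x) :
    (‖z‖ + x) ^ 2 ≤ 2 * ‖z + x‖ ^ 2 := by
  rw [sq_norm_add_ofReal]
  nlinarith [sq_nonneg (‖z‖ - x), mul_nonneg hx hz]

/-- The elementary part `(z - 1/2) log z - z` of Stirling's expansion of `log Γ(z)`. -/
noncomputable def stirlingExponent (z : ℂ) : ℂ := (z - 1 / 2) * log z - z

/-- The amount by which `stirlingExponent` fails the functional equation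
`log Γ(z + 1) - log Γ(z) = log z`. -/
noncomputable def stirlingDefect (z : ℂ) : ℂ :=
  stirlingExponent (z + 1) - stirlingExponent z - log z

/-- Binet's function, the remainder `log Γ(z) - stirlingExponent z - log (2π) / 2` of Stirling's
formula, as a series of defects. -/
noncomputable def binetFunction (z : ℂ) : ℂ := ∑' n : ℕ, stirlingDefect (z + n)

lemma stirlingDefect_eq {z : ℂ} (hz : 0 < z.re) :
    stirlingDefect z = -(z⁻¹) ^ 2 / 4 + (z + 1 / 2) * (log (1 + z⁻¹) - (z⁻¹ - (z⁻¹) ^ 2 / 2)) := by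
  have hz0 := ne_zero_of_re_pos hz
  have hlog : log (1 + z⁻¹) = log (z + 1) - log z := by
    rw [← log_div_of_re_pos (by simpa using hz.trans (lt_add_one _)) hz, add_div, div_self hz0,
      one_div]
  rw [hlog, stirlingDefect, stirlingExponent, stirlingExponent]
  field_simp
  ring

lemma norm_stirlingDefect_le {z : ℂ} (hz : 0 < z.re) (hz2 : 2 ≤ ‖z‖) :
    ‖stirlingDefect z‖ ≤ 2 / ‖z‖ ^ 2 := by
  set v := z⁻¹
  have hzv : ‖z‖ * ‖v‖ = 1 := by
    rw [← norm_mul, mul_inv_cancel₀ (ne_zero_of_re_pos hz), norm_one]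
  have hv : ‖v‖ ≤ 1 / 2 := by nlinarith [norm_nonneg v]
  have hinv : (1 - ‖v‖)⁻¹ ≤ 2 := by
    rw [inv_le_comm₀ (by linarith) (by norm_num)]
    linarith
  have htaylor : ‖log (1 + v) - (v - v ^ 2 / 2)‖ ≤ ‖v‖ ^ 3 * (2 / 3) := by
    have h := norm_log_sub_logTaylor_le 2 (z := v) (by linarith)
    have hT : logTaylor (2 + 1) v = v - v ^ 2 / 2 := by
      simp only [logTaylor_succ, logTaylor_zero]
      norm_num
      ring
    rw [hT] at h
    norm_num at h
    nlinarith [pow_nonneg (norm_nonneg v) 3]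
  have hhalf : ‖z + 1 / 2‖ ≤ ‖z‖ + 1 / 2 := (norm_add_le _ _).trans (by norm_num)
  calc ‖stirlingDefect z‖ ≤ ‖v‖ ^ 2 / 4 + (‖z‖ + 1 / 2) * (‖v‖ ^ 3 * (2 / 3)) := by
        rw [stirlingDefect_eq hz]
        refine norm_add_le_of_le (by simp [v]) ?_
        rw [norm_mul]
        gcongr
    _ = ‖v‖ ^ 2 * (1 / 4 + 2 / 3 + ‖v‖ / 3) := by
        linear_combination (‖v‖ ^ 2 * (2 / 3)) * hzv
    _ ≤ ‖v‖ ^ 2 * 2 := by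
        gcongr
        linarith
    _ = 2 / ‖z‖ ^ 2 := by
        rw [norm_inv]
        ring

lemma norm_stirlingDefect_add_nat_le {z : ℂ} (hz : 0 < z.re) (hz2 : 2 ≤ ‖z‖) (n : ℕ) :
    ‖stirlingDefect (z + n)‖ ≤ 4 / (‖z‖ + n - 1) - 4 / (‖z‖ + (n + 1 : ℕ) - 1) := by
  have hn : (0 : ℝ) ≤ n := n.cast_nonneg
  have hnorm : ‖z‖ ≤ ‖z + n‖ := mod_cast norm_le_norm_add_ofReal hz.le hn
  have hsq : (‖z‖ + n) ^ 2 ≤ 2 * ‖z + n‖ ^ 2 := mod_cast sq_norm_add_le_two_mul_sq_norm_add hz.le hn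
  have hpos : 0 < ‖z + n‖ := by linarith
  calc ‖stirlingDefect (z + n)‖ ≤ 2 / ‖z + n‖ ^ 2 :=
        norm_stirlingDefect_le (by simpa using by linarith) (hz2.trans hnorm)
    _ ≤ 4 / (‖z‖ + n) ^ 2 := by
        rw [div_le_div_iff₀ (by positivity) (by positivity)]
        linarith
    _ ≤ 4 / ((‖z‖ + n - 1) * (‖z‖ + n)) := by
        refine div_le_div_of_nonneg_left (by norm_num) ?_ ?_ <;> nlinarith
    _ = 4 / (‖z‖ + n - 1) - 4 / (‖z‖ + (n + 1 : ℕ) - 1) := by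
        have : ‖z‖ + n - 1 ≠ 0 := by linarith
        have : ‖z‖ + n ≠ 0 := by linarith
        rw [show ‖z‖ + (n + 1 : ℕ) - 1 = ‖z‖ + n by push_cast; ring]
        field_simp
        ring

lemma hasSum_four_div_telescope {r : ℝ} (hr : 1 < r) :
    HasSum (fun n : ℕ ↦ 4 / (r + n - 1) - 4 / (r + (n + 1 : ℕ) - 1)) (4 / (r - 1)) := by
  have hlim : Tendsto (fun n : ℕ ↦ 4 / (r + n - 1)) atTop (𝓝 0) := by
    refine tendsto_const_nhds.div_atTop ?_
    exact tendsto_atTop_add_const_right _ _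
      (tendsto_atTop_add_const_left _ _ tendsto_natCast_atTop_atTop)
  rw [hasSum_iff_tendsto_nat_of_nonneg]
  · simp_rw [Finset.sum_range_sub']
    simpa using tendsto_const_nhds.sub hlim
  · intro n
    have : (0 : ℝ) ≤ n := n.cast_nonneg
    rw [sub_nonneg, Nat.cast_succ]
    gcongr <;> linarith

lemma summable_stirlingDefect {z : ℂ} (hz : 0 < z.re) (hz2 : 2 ≤ ‖z‖) :
    Summable fun n : ℕ ↦ stirlingDefect (z + n) :=
  .of_norm_bounded (hasSum_four_div_telescope (by linarith)).summable
    (norm_stirlingDefect_add_nat_le hz hz2)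

lemma norm_binetFunction_le {z : ℂ} (hz : 0 < z.re) (hz2 : 2 ≤ ‖z‖) :
    ‖binetFunction z‖ ≤ 8 / ‖z‖ := by
  refine (tsum_of_norm_bounded (hasSum_four_div_telescope (by linarith))
    (norm_stirlingDefect_add_nat_le hz hz2)).trans ?_
  rw [div_le_div_iff₀ (by linarith) (by linarith)]
  linarith

lemma prod_range_add_nat_eq_exp {z : ℂ} (hz : 0 < z.re) (N : ℕ) :
    ∏ n ∈ Finset.range N, (z + n) =
      exp (stirlingExponent (z + N) - stirlingExponent z -
        ∑ n ∈ Finset.range N, stirlingDefect (z + n)) := by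
  induction N with
  | zero => simp
  | succ N ih =>
    have hN : z + N ≠ 0 := ne_zero_of_re_pos (by simpa using by positivity)
    rw [Finset.prod_range_succ, Finset.sum_range_succ, ih]
    nth_rewrite 2 [← exp_log hN]
    rw [← exp_add, stirlingDefect]
    push_cast
    ring_nf

lemma tendsto_stirlingExponent_add_nat {z : ℂ} (hz : 0 < z.re) :
    Tendsto (fun N : ℕ ↦ (N + z + 1 / 2) * log N - N - stirlingExponent (z + (N + 1 : ℕ)))
      atTop (𝓝 0) := by
  have hmul : Tendsto (fun N : ℕ ↦ (N : ℂ) * log (1 + (z + 1) / N)) atTop (𝓝 (z + 1)) := by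
    refine tendsto_nat_mul_log_one_add_of_tendsto (tendsto_nhds_of_eventually_eq ?_)
    filter_upwards [eventually_ne_atTop 0] with N hN
    field_simp
  have hlog : Tendsto (fun N : ℕ ↦ log (1 + (z + 1) / N)) atTop (𝓝 0) := by
    have h := (tendsto_const_div_atTop_nhds_zero_nat (z + 1)).const_add 1
    simpa using h.clog (by simp)
  have hlim := (hmul.add (hlog.const_mul (z + 1 / 2))).const_sub (z + 1)
  rw [mul_zero, add_zero, sub_self] at hlim
  refine hlim.congr' ?_
  filter_upwards [eventually_gt_atTop 0] with N hN
  have hN0 : (N : ℂ) ≠ 0 := mod_cast hN.ne'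
  have hdiv : 1 + (z + 1) / N = (z + (N + 1 : ℕ)) / N := by
    push_cast
    field_simp
    ring
  rw [hdiv, log_div_of_re_pos (by simpa using by positivity) (by simpa using hN), stirlingExponent]
  push_cast
  ring

lemma factorial_eq_stirlingSeq_mul {N : ℕ} (hN : N ≠ 0) :
    (N.factorial : ℝ) =
      Stirling.stirlingSeq N * √2 * Real.exp ((N + 1 / 2) * Real.log N - N) := by
  have hN0 : (0 : ℝ) < N := by positivity
  have hexp : Real.exp ((N + 1 / 2) * Real.log N - N) = √N * (N / Real.exp 1) ^ N := by
    rw [add_mul, Real.exp_sub, Real.exp_add, mul_comm (N : ℝ), mul_comm (1 / 2 : ℝ), Real.exp_mul,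
      Real.exp_mul, Real.exp_log hN0, ← Real.sqrt_eq_rpow, Real.rpow_natCast, div_pow,
      ← Real.exp_nat_mul, mul_one]
    ring
  rw [hexp, Stirling.stirlingSeq, Real.sqrt_mul (by norm_num)]
  field_simp

lemma tendsto_cpow_mul_factorial_mul_exp_neg_stirlingExponent {z : ℂ} (hz : 0 < z.re) :
    Tendsto (fun N : ℕ ↦ (N : ℂ) ^ z * N.factorial * exp (-stirlingExponent (z + (N + 1 : ℕ))))
      atTop (𝓝 (exp (Real.log (2 * Real.pi) / 2))) := by
  have hseq : Tendsto (fun N : ℕ ↦ ((Stirling.stirlingSeq N * √2 : ℝ) : ℂ)) atTop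
      (𝓝 (exp (Real.log (2 * Real.pi) / 2))) := by
    have hconst : exp (Real.log (2 * Real.pi) / 2) = ((√Real.pi * √2 : ℝ) : ℂ) := by
      rw [← Real.sqrt_mul Real.pi_pos.le, mul_comm Real.pi,
        Real.sqrt_eq_rpow, Real.rpow_def_of_pos (by positivity)]
      push_cast
      ring_nf
    rw [hconst]
    exact (continuous_ofReal.tendsto _).comp
      (Stirling.tendsto_stirlingSeq_sqrt_pi.mul_const _)
  have hlim := hseq.mul (tendsto_stirlingExponent_add_nat hz).cexp
  rw [exp_zero, mul_one] at hlim
  refine hlim.congr' ?_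
  filter_upwards [eventually_ne_atTop 0] with N hN
  rw [← ofReal_natCast N.factorial, factorial_eq_stirlingSeq_mul hN,
    cpow_def_of_ne_zero (by exact_mod_cast hN), ofReal_mul _ (Real.exp _), ofReal_exp]
  push_cast [natCast_log]
  rw [mul_comm (exp _) (_ * exp _), mul_assoc (_ * _) (exp _), mul_assoc (_ * _) (exp _),
    ← exp_add, ← exp_add]
  ring_nf

theorem Gamma_eq_exp_stirlingExponent_add_binetFunction {z : ℂ} (hz : 0 < z.re) (hz2 : 2 ≤ ‖z‖) :
    Gamma z = exp (stirlingExponent z + Real.log (2 * Real.pi) / 2 + binetFunction z) := by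
  refine tendsto_nhds_unique (GammaSeq_tendsto_Gamma z) ?_
  have hsum := (summable_stirlingDefect hz hz2).hasSum.tendsto_sum_nat.comp
    (tendsto_add_atTop_nat 1)
  have hlim := (tendsto_cpow_mul_factorial_mul_exp_neg_stirlingExponent hz).mul
    (hsum.const_add (stirlingExponent z)).cexp
  rw [← exp_add] at hlim
  convert hlim using 2 with N
  · rw [GammaSeq, prod_range_add_nat_eq_exp hz]
    simp only [Function.comp_apply, exp_sub, exp_add, exp_neg]
    field_simp
  · rw [binetFunction]
    ring_nf

end Stirling

section ExponentialAsymptotics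

open Asymptotics Bornology Complex Topology

/-- The filter of neighbourhoods of infinity in the open right half-plane. -/
noncomputable def rightHalfPlaneAtInfty : Filter ℂ := cobounded ℂ ⊓ 𝓟 {w | 0 < w.re}

/-- `f w = exp (L w + O(1 / w))` as `w → ∞` in the right half-plane, the form of Stirling-type
expansions that is stable under products and quotients. -/
def HasExpAsymptotic (f L : ℂ → ℂ) : Prop :=
  ∃ E : ℂ → ℂ, E =O[rightHalfPlaneAtInfty] (·⁻¹) ∧
    f =ᶠ[rightHalfPlaneAtInfty] fun w ↦ exp (L w + E w)

local notation "∞⁺" => rightHalfPlaneAtInfty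

lemma eventually_re_pos_rightHalfPlaneAtInfty : ∀ᶠ w in ∞⁺, 0 < w.re :=
  eventually_inf_principal.2 (.of_forall fun _ hw ↦ hw)

lemma eventually_le_norm_rightHalfPlaneAtInfty (r : ℝ) : ∀ᶠ w in ∞⁺, r ≤ ‖w‖ :=
  (tendsto_norm_cobounded_atTop.mono_left inf_le_left).eventually_ge_atTop r

lemma tendsto_inv_rightHalfPlaneAtInfty : Tendsto (·⁻¹) ∞⁺ (𝓝 (0 : ℂ)) :=
  tendsto_inv₀_cobounded.mono_left inf_le_left

lemma tendsto_ofReal_mul_add_rightHalfPlaneAtInfty {A : ℝ} {a : ℂ} (hA : 0 < A) (ha : 0 ≤ a.re) :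
    Tendsto (fun w ↦ A * w + a) ∞⁺ ∞⁺ := by
  refine tendsto_inf.2 ⟨?_, tendsto_principal.2 ?_⟩
  · exact (tendsto_add_const_cobounded a).comp
      ((tendsto_mul_left_cobounded (by exact_mod_cast hA.ne')).mono_left inf_le_left)
  · filter_upwards [eventually_re_pos_rightHalfPlaneAtInfty] with w hw
    simpa using by positivity

lemma isBigO_inv_ofReal_mul_add {A : ℝ} (hA : 0 < A) (a : ℂ) :
    (fun w ↦ (A * w + a)⁻¹) =O[∞⁺] (·⁻¹) := by
  have hconst : (fun _ ↦ a) =o[∞⁺] fun w : ℂ ↦ A * w :=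
    ((isLittleO_const_id_cobounded a).mono inf_le_left).trans_isBigO
      (isBigO_self_const_mul (by exact_mod_cast hA.ne') _ _)
  refine IsBigO.inv_rev ?_ ?_
  · simp_rw [add_comm _ a]
    exact (isBigO_self_const_mul (by exact_mod_cast hA.ne') _ _).trans hconst.right_isBigO_add
  · filter_upwards [eventually_re_pos_rightHalfPlaneAtInfty] with w hw h0
    exact absurd h0 (ne_zero_of_re_pos hw)

namespace HasExpAsymptotic

variable {f g L M : ℂ → ℂ}

lemma congr_exponent (hf : HasExpAsymptotic f L) (h : (fun w ↦ L w - M w) =O[∞⁺] (·⁻¹)) :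
    HasExpAsymptotic f M := by
  obtain ⟨E, hE, hfE⟩ := hf
  refine ⟨fun w ↦ L w - M w + E w, h.add hE, hfE.trans (.of_eq ?_)⟩
  funext w
  ring_nf

lemma comp (hf : HasExpAsymptotic f L) {T : ℂ → ℂ} (hT : Tendsto T ∞⁺ ∞⁺)
    (hT' : (fun w ↦ (T w)⁻¹) =O[∞⁺] (·⁻¹)) :
    HasExpAsymptotic (fun w ↦ f (T w)) (fun w ↦ L (T w)) := by
  obtain ⟨E, hE, hfE⟩ := hf
  exact ⟨fun w ↦ E (T w), (hE.comp_tendsto hT).trans hT', hT.eventually hfE⟩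

lemma mul (hf : HasExpAsymptotic f L) (hg : HasExpAsymptotic g M) :
    HasExpAsymptotic (fun w ↦ f w * g w) (fun w ↦ L w + M w) := by
  obtain ⟨E, hE, hfE⟩ := hf
  obtain ⟨F, hF, hgF⟩ := hg
  refine ⟨fun w ↦ E w + F w, hE.add hF, ?_⟩
  filter_upwards [hfE, hgF] with w hfw hgw
  rw [hfw, hgw, ← exp_add, add_add_add_comm]

lemma div (hf : HasExpAsymptotic f L) (hg : HasExpAsymptotic g M) :
    HasExpAsymptotic (fun w ↦ f w / g w) (fun w ↦ L w - M w) := by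
  obtain ⟨E, hE, hfE⟩ := hf
  obtain ⟨F, hF, hgF⟩ := hg
  refine ⟨fun w ↦ E w - F w, hE.sub hF, ?_⟩
  filter_upwards [hfE, hgF] with w hfw hgw
  rw [hfw, hgw, ← exp_sub, add_sub_add_comm]

lemma prod {ι : Type*} (s : Finset ι) {f L : ι → ℂ → ℂ}
    (h : ∀ i ∈ s, HasExpAsymptotic (f i) (L i)) :
    HasExpAsymptotic (fun w ↦ ∏ i ∈ s, f i w) (fun w ↦ ∑ i ∈ s, L i w) := by
  classical
  induction s using Finset.induction_on with
  | empty => exact ⟨fun _ ↦ 0, isBigO_zero _ _, .of_eq (by simp)⟩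
  | insert i s hi ih =>
    simp only [Finset.prod_insert hi, Finset.sum_insert hi]
    exact (h i (s.mem_insert_self i)).mul (ih fun j hj ↦ h j (Finset.mem_insert_of_mem hj))

lemma sub_cpow_isBigO {μ c : ℂ} (hf : HasExpAsymptotic f fun w ↦ -μ * log w + c) :
    (fun w ↦ f w - exp c * w ^ (-μ)) =O[∞⁺] fun w ↦ ‖w‖ ^ (-(1 + μ.re)) := by
  obtain ⟨E, hE, hfE⟩ := hf
  have hexp : (fun w ↦ exp (E w) - 1) =O[∞⁺] fun w ↦ ‖w‖⁻¹ := by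
    have hexp0 := (hasDerivAt_exp 0).isBigO_sub
    simp only [exp_zero, sub_zero] at hexp0
    refine (hexp0.comp_tendsto (hE.trans_tendsto tendsto_inv_rightHalfPlaneAtInfty)).trans
      (hE.trans ?_)
    simpa only [norm_inv] using (isBigO_refl (fun w : ℂ ↦ w⁻¹) ∞⁺).norm_right
  have hpow : (fun w : ℂ ↦ w ^ (-μ)) =O[∞⁺] fun w ↦ ‖w‖ ^ (-μ.re) := by
    simpa using isBigO_cpow_rpow (l := ∞⁺) (f := fun w ↦ w) (g := fun _ ↦ -μ)
      isBoundedUnder_const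
  refine (((hpow.mul hexp).const_mul_left (exp c)).congr' ?_ ?_)
  · filter_upwards [hfE, eventually_re_pos_rightHalfPlaneAtInfty] with w hfw hw
    rw [hfw, cpow_def_of_ne_zero (ne_zero_of_re_pos hw), exp_add, exp_add, mul_comm (log w)]
    ring
  · filter_upwards [eventually_re_pos_rightHalfPlaneAtInfty] with w hw
    rw [← Real.rpow_neg_one, ← Real.rpow_add (norm_pos_iff.2 (ne_zero_of_re_pos hw)), neg_add_rev]

end HasExpAsymptotic

lemma hasExpAsymptotic_exp (L : ℂ → ℂ) : HasExpAsymptotic (fun w ↦ exp (L w)) L :=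
  ⟨fun _ ↦ 0, isBigO_zero _ _, .of_eq (by simp)⟩

lemma binetFunction_isBigO_inv : binetFunction =O[∞⁺] (·⁻¹) := by
  refine .of_bound 8 ?_
  filter_upwards [eventually_re_pos_rightHalfPlaneAtInfty,
    eventually_le_norm_rightHalfPlaneAtInfty 2] with z hz hz2
  rw [norm_inv, ← div_eq_mul_inv]
  exact norm_binetFunction_le hz hz2

lemma hasExpAsymptotic_Gamma :
    HasExpAsymptotic Gamma fun z ↦ stirlingExponent z + Real.log (2 * Real.pi) / 2 := by
  refine ⟨binetFunction, binetFunction_isBigO_inv, ?_⟩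
  filter_upwards [eventually_re_pos_rightHalfPlaneAtInfty,
    eventually_le_norm_rightHalfPlaneAtInfty 2] with z hz hz2
  exact Gamma_eq_exp_stirlingExponent_add_binetFunction hz hz2

section Linear

variable (A : ℝ) (a : ℂ)

lemma div_ofReal_mul_isBigO_inv : (fun w ↦ a / (A * w)) =O[∞⁺] (·⁻¹) := by
  simp_rw [div_eq_mul_inv, mul_inv, ← mul_assoc]
  exact isBigO_const_mul_self _ _ _

lemma tendsto_div_ofReal_mul : Tendsto (fun w ↦ a / (A * w)) ∞⁺ (𝓝 0) :=
  (div_ofReal_mul_isBigO_inv A a).trans_tendsto tendsto_inv_rightHalfPlaneAtInfty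

lemma log_one_add_div_sub_isBigO :
    (fun w ↦ log (1 + a / (A * w)) - a / (A * w)) =O[∞⁺] fun w ↦ (w⁻¹) ^ 2 :=
  (log_sub_self_isBigO.comp_tendsto (tendsto_div_ofReal_mul A a)).trans
    ((div_ofReal_mul_isBigO_inv A a).pow 2)

lemma log_one_add_div_isBigO : (fun w ↦ log (1 + a / (A * w))) =O[∞⁺] (·⁻¹) := by
  have hderiv : HasDerivAt (fun u : ℂ ↦ log (1 + u)) (1 / (1 + 0)) 0 :=
    ((hasDerivAt_id (0 : ℂ)).const_add 1).clog (by simp)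
  have hlog : (fun u : ℂ ↦ log (1 + u)) =O[𝓝 0] fun u ↦ u := by simpa using hderiv.isBigO_sub
  exact (hlog.comp_tendsto (tendsto_div_ofReal_mul A a)).trans (div_ofReal_mul_isBigO_inv A a)

/-- Stirling's exponent of `Γ(A w + a)`, expanded in the variable `w`. -/
noncomputable def linearStirlingExponent (A : ℝ) (a w : ℂ) : ℂ :=
  (A * w + a - 1 / 2) * (Real.log A + log w) - A * w + Real.log (2 * Real.pi) / 2

variable {A a}

lemma hasExpAsymptotic_ofReal_mul_add (hA : 0 < A) :
    HasExpAsymptotic (fun w ↦ A * w + a) fun w ↦ Real.log A + log w := by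
  refine ⟨fun w ↦ log (1 + a / (A * w)), log_one_add_div_isBigO A a, ?_⟩
  have hne : ∀ᶠ w in ∞⁺, 1 + a / (A * w) ≠ 0 := by
    have h := (tendsto_div_ofReal_mul A a).const_add 1
    exact h.eventually_ne (by simp)
  filter_upwards [eventually_re_pos_rightHalfPlaneAtInfty, hne] with w hw h1
  have hw0 := ne_zero_of_re_pos hw
  have hA0 : (A : ℂ) ≠ 0 := mod_cast hA.ne'
  rw [exp_add, ← log_ofReal_mul hA hw0, exp_log (mul_ne_zero hA0 hw0), exp_log h1, mul_add, mul_one,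
    mul_div_cancel₀ _ (mul_ne_zero hA0 hw0)]

lemma stirlingExponent_ofReal_mul_add (hA : 0 < A) (ha : 0 ≤ a.re) {w : ℂ} (hw : 0 < w.re) :
    stirlingExponent (A * w + a) + Real.log (2 * Real.pi) / 2 - linearStirlingExponent A a w =
      A * (w * (log (1 + a / (A * w)) - a / (A * w))) + (a - 1 / 2) * log (1 + a / (A * w)) := by
  have hw0 := ne_zero_of_re_pos hw
  have hA0 : (A : ℂ) ≠ 0 := mod_cast hA.ne'
  have hlog : log (1 + a / (A * w)) = log (A * w + a) - (Real.log A + log w) := by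
    rw [← log_ofReal_mul hA hw0,
      ← log_div_of_re_pos (by simpa using by positivity) (by simpa using by positivity), add_div,
      div_self (mul_ne_zero hA0 hw0)]
  rw [hlog, stirlingExponent, linearStirlingExponent]
  field_simp
  ring

lemma hasExpAsymptotic_Gamma_ofReal_mul_add_of_re_nonneg (hA : 0 < A) (ha : 0 ≤ a.re) :
    HasExpAsymptotic (fun w ↦ Gamma (A * w + a)) (linearStirlingExponent A a) := by
  refine (hasExpAsymptotic_Gamma.comp (tendsto_ofReal_mul_add_rightHalfPlaneAtInfty hA ha)
    (isBigO_inv_ofReal_mul_add hA a)).congr_exponent ?_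
  have hsq : (fun w ↦ w * (log (1 + a / (A * w)) - a / (A * w))) =O[∞⁺] (·⁻¹) := by
    refine ((isBigO_refl (fun w : ℂ ↦ w) ∞⁺).mul (log_one_add_div_sub_isBigO A a)).congr'
      .rfl ?_
    filter_upwards [eventually_re_pos_rightHalfPlaneAtInfty] with w hw
    rw [sq, ← mul_assoc, mul_inv_cancel₀ (ne_zero_of_re_pos hw), one_mul]
  refine ((hsq.const_mul_left A).add ((log_one_add_div_isBigO A a).const_mul_left
    (a - 1 / 2))).congr' ?_ .rfl
  filter_upwards [eventually_re_pos_rightHalfPlaneAtInfty] with w hw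
  exact (stirlingExponent_ofReal_mul_add hA ha hw).symm

lemma hasExpAsymptotic_Gamma_ofReal_mul_add_of_add_one (hA : 0 < A)
    (h : HasExpAsymptotic (fun w ↦ Gamma (A * w + (a + 1))) (linearStirlingExponent A (a + 1))) :
    HasExpAsymptotic (fun w ↦ Gamma (A * w + a)) (linearStirlingExponent A a) := by
  have hlin := hasExpAsymptotic_ofReal_mul_add (a := a) hA
  obtain ⟨E, hE, hΓ⟩ := h.div hlin
  refine ⟨E, hE, ?_⟩
  obtain ⟨F, -, hF⟩ := hlin
  filter_upwards [hΓ, hF] with w hΓw hFw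
  have hne : A * w + a ≠ 0 := hFw ▸ exp_ne_zero _
  have hexponent : linearStirlingExponent A (a + 1) w - (Real.log A + log w) =
      linearStirlingExponent A a w := by
    rw [linearStirlingExponent, linearStirlingExponent]
    ring
  rw [← hexponent, ← hΓw, ← add_assoc, Gamma_add_one _ hne, mul_div_cancel_left₀ _ hne]

theorem hasExpAsymptotic_Gamma_ofReal_mul_add (hA : 0 < A) (a : ℂ) :
    HasExpAsymptotic (fun w ↦ Gamma (A * w + a)) (linearStirlingExponent A a) := by
  obtain ⟨n, hn⟩ := exists_nat_ge (-a.re)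
  induction n generalizing a with
  | zero =>
    exact hasExpAsymptotic_Gamma_ofReal_mul_add_of_re_nonneg hA (by simpa using hn)
  | succ n ih =>
    refine hasExpAsymptotic_Gamma_ofReal_mul_add_of_add_one hA (ih (a + 1) ?_)
    push_cast at hn
    simpa using by linarith

end Linear

end ExponentialAsymptotics

section GammaQuotient

open Asymptotics Complex Topology

variable {ι κ : Type*} [Fintype ι] [Fintype κ]

/-- The quotient `∏ Γ(A i * s + a i) / ∏ Γ(B j * s + b j)`, the kernel of the Mellin-Barnes integral
that defines Fox's function `H^{p,0}_{q,p}`. -/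
noncomputable def gammaQuotient (A : ι → ℝ) (a : ι → ℂ) (B : κ → ℝ) (b : κ → ℂ) (s : ℂ) : ℂ :=
  (∏ i, Gamma (A i * s + a i)) / ∏ j, Gamma (B j * s + b j)

/-- The constant `ρ` such that `gammaQuotient A a B b s` grows like `ρ ^ s` up to a power of `s`,
when `∑ A = ∑ B`. -/
noncomputable def gammaQuotientScale (A : ι → ℝ) (B : κ → ℝ) : ℝ :=
  (∏ i, A i ^ A i) * ∏ j, B j ^ (-B j)

/-- The exponent `μ` such that `gammaQuotient A a B b s` is of order `ρ ^ s * s ^ (-μ)`, when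
`∑ A = ∑ B`. -/
noncomputable def gammaQuotientExponent (a : ι → ℂ) (b : κ → ℂ) : ℂ :=
  (∑ j, b j) - (∑ i, a i) + (Fintype.card ι - Fintype.card κ) / 2

variable {A : ι → ℝ} {a : ι → ℂ} {B : κ → ℝ} {b : κ → ℂ}

lemma gammaQuotientScale_pos (hA : ∀ i, 0 < A i) (hB : ∀ j, 0 < B j) :
    0 < gammaQuotientScale A B :=
  mul_pos (Finset.prod_pos fun i _ ↦ Real.rpow_pos_of_pos (hA i) _)
    (Finset.prod_pos fun j _ ↦ Real.rpow_pos_of_pos (hB j) _)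

lemma log_gammaQuotientScale (hA : ∀ i, 0 < A i) (hB : ∀ j, 0 < B j) :
    Real.log (gammaQuotientScale A B) =
      ∑ i, A i * Real.log (A i) - ∑ j, B j * Real.log (B j) := by
  have hA' : ∀ i, A i ^ A i ≠ 0 := fun i ↦ (Real.rpow_pos_of_pos (hA i) _).ne'
  have hB' : ∀ j, B j ^ (-B j) ≠ 0 := fun j ↦ (Real.rpow_pos_of_pos (hB j) _).ne'
  rw [gammaQuotientScale, Real.log_mul (Finset.prod_ne_zero_iff.2 fun i _ ↦ hA' i)
    (Finset.prod_ne_zero_iff.2 fun j _ ↦ hB' j), Real.log_prod fun i _ ↦ hA' i,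
    Real.log_prod fun j _ ↦ hB' j]
  simp_rw [Real.log_rpow (hA _), Real.log_rpow (hB _), neg_mul, Finset.sum_neg_distrib]
  ring

lemma gammaQuotient_add (A : ι → ℝ) (a : ι → ℂ) (B : κ → ℝ) (b : κ → ℂ) (s z : ℂ) :
    gammaQuotient A a B b (s + z) =
      gammaQuotient A (fun i ↦ A i * z + a i) B (fun j ↦ B j * z + b j) s := by
  simp only [gammaQuotient, mul_add, add_assoc]

lemma gammaQuotientExponent_mul_add (hsum : ∑ i, A i = ∑ j, B j) (z : ℂ) :
    gammaQuotientExponent (fun i ↦ A i * z + a i) (fun j ↦ B j * z + b j) =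
      gammaQuotientExponent a b := by
  have hsum' : ∑ i, (A i : ℂ) = ∑ j, (B j : ℂ) := mod_cast hsum
  simp only [gammaQuotientExponent, Finset.sum_add_distrib, ← Finset.sum_mul, hsum']
  ring

lemma differentiableAt_gammaQuotient {s : ℂ} (h : ∀ i, 0 < (A i * s + a i).re) :
    DifferentiableAt ℂ (gammaQuotient A a B b) s := by
  have hlin : ∀ c d : ℂ, DifferentiableAt ℂ (fun s : ℂ ↦ c * s + d) s := fun c d ↦ by fun_prop
  unfold gammaQuotient
  simp only [div_eq_mul_inv, ← Finset.prod_inv_distrib]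
  refine .mul (.fun_finsetProd fun i _ ↦ ?_) (.fun_finsetProd fun j _ ↦ ?_)
  · refine (differentiableAt_Gamma _ fun m hm ↦ ?_).comp s (hlin _ _)
    have := h i
    rw [hm] at this
    simp only [neg_re, natCast_re, Left.neg_pos_iff] at this
    exact absurd this m.cast_nonneg.not_gt
  · exact (differentiable_one_div_Gamma _).comp s (hlin _ _)

lemma sum_linearStirlingExponent (A : ι → ℝ) (a : ι → ℂ) (w : ℂ) :
    ∑ i, linearStirlingExponent (A i) (a i) w =
      w * (∑ i, A i * Real.log (A i) : ℝ) + (w * log w - w) * (∑ i, A i : ℝ) +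
        log w * (∑ i, a i - Fintype.card ι / 2) +
        ∑ i, ((a i - 1 / 2) * Real.log (A i) + Real.log (2 * Real.pi) / 2) := by
  have hcard : (Fintype.card ι / 2 : ℂ) = ∑ _i : ι, 1 / 2 := by simp [div_eq_mul_inv]
  push_cast
  rw [hcard, ← Finset.sum_sub_distrib, Finset.mul_sum, Finset.mul_sum, Finset.mul_sum]
  simp only [← Finset.sum_add_distrib]
  refine Finset.sum_congr rfl fun i _ ↦ ?_
  rw [linearStirlingExponent]
  ring

theorem hasExpAsymptotic_gammaQuotient (hA : ∀ i, 0 < A i) (hB : ∀ j, 0 < B j)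
    (hsum : ∑ i, A i = ∑ j, B j) (a : ι → ℂ) (b : κ → ℂ) :
    ∃ c, HasExpAsymptotic (fun w ↦ gammaQuotient A a B b w * (gammaQuotientScale A B : ℂ) ^ (-w))
      fun w ↦ -gammaQuotientExponent a b * log w + c := by
  have hΓ : HasExpAsymptotic (gammaQuotient A a B b) fun w ↦
      ∑ i, linearStirlingExponent (A i) (a i) w - ∑ j, linearStirlingExponent (B j) (b j) w :=
    (HasExpAsymptotic.prod _ fun i _ ↦ hasExpAsymptotic_Gamma_ofReal_mul_add (hA i) (a i)).div
      (.prod _ fun j _ ↦ hasExpAsymptotic_Gamma_ofReal_mul_add (hB j) (b j))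
  have hρ : (gammaQuotientScale A B : ℂ) ≠ 0 := mod_cast (gammaQuotientScale_pos hA hB).ne'
  refine ⟨∑ i, ((a i - 1 / 2) * Real.log (A i) + Real.log (2 * Real.pi) / 2) -
    ∑ j, ((b j - 1 / 2) * Real.log (B j) + Real.log (2 * Real.pi) / 2), ?_⟩
  simp only [cpow_def_of_ne_zero hρ]
  convert hΓ.mul (hasExpAsymptotic_exp fun w ↦ log (gammaQuotientScale A B) * -w) using 2 with w
  rw [sum_linearStirlingExponent, sum_linearStirlingExponent, ← ofReal_log
    (gammaQuotientScale_pos hA hB).le, log_gammaQuotientScale hA hB, gammaQuotientExponent, hsum]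
  push_cast
  ring

end GammaQuotient

section MellinInversion

open Complex FourierTransform Topology

variable {E : Type*} [NormedAddCommGroup E] [NormedSpace ℂ E] {f : ℝ → E} {σ : ℝ}

lemma mellinConvergent_ofReal_iff_integrable_exp_smul :
    MellinConvergent f σ ↔
      Integrable fun u : ℝ ↦ Real.exp (-σ * u) • f (Real.exp (-u)) := by
  have hderiv : ∀ u ∈ Set.univ,
      HasDerivWithinAt (fun u : ℝ ↦ Real.exp (-u)) (-Real.exp (-u)) Set.univ u := fun u _ ↦ by
    simpa using (hasDerivAt_neg u).exp
  have himage : (fun u : ℝ ↦ Real.exp (-u)) '' Set.univ = Set.Ioi 0 := by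
    rw [Set.image_univ, ← Real.range_exp]
    exact neg_surjective.range_comp Real.exp
  rw [MellinConvergent, ← himage, integrableOn_image_iff_integrableOn_abs_deriv_smul .univ hderiv
    (Real.exp_injective.comp neg_injective).injOn, integrableOn_univ]
  refine integrable_congr (.of_forall fun u ↦ ?_)
  have hcpow : ((Real.exp (-u) : ℝ) : ℂ) ^ (σ - 1 : ℂ) = (Real.exp (-u) ^ (σ - 1) : ℝ) := by
    rw [ofReal_cpow (Real.exp_pos _).le]
    push_cast
    rfl
  simp only [abs_neg, abs_of_pos (Real.exp_pos _), hcpow, coe_smul, smul_smul,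
    ← Real.exp_mul, ← Real.exp_add]
  ring_nf

lemma mellinInv_exp_neg (σ : ℝ) (f : ℂ → E) (u : ℝ) :
    Real.exp (-σ * u) • mellinInv σ f (Real.exp (-u)) =
      𝓕⁻ (fun y : ℝ ↦ f (σ + 2 * Real.pi * y * I)) u := by
  rw [mellinInv_eq_fourierInv σ f (Real.exp_pos _), Real.log_exp, neg_neg, ← coe_smul, smul_smul,
    ← ofReal_neg, ← ofReal_cpow (Real.exp_pos _).le, ← ofReal_mul, ← Real.exp_mul, ← Real.exp_add,
    neg_mul_neg, mul_comm u, neg_mul, neg_add_cancel, Real.exp_zero, ofReal_one, one_smul]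

theorem mellin_mellinInv_eq [CompleteSpace E] {f : ℂ → E} {s : ℂ}
    (hf : VerticalIntegrable f s.re) (hconv : MellinConvergent (mellinInv s.re f) (s.re : ℂ))
    (hfs : ContinuousAt f s) : mellin (mellinInv s.re f) s = f s := by
  set h : ℝ → E := fun y ↦ f (s.re + 2 * Real.pi * y * I) with h_def
  have h2π : (2 * Real.pi : ℂ) ≠ 0 := mod_cast Real.two_pi_pos.ne'
  have hs : (s.re : ℂ) + 2 * Real.pi * ↑(s.im / (2 * Real.pi)) * I = s := by
    push_cast
    rw [mul_div_cancel₀ _ h2π, re_add_im]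
  have h_int : Integrable h := by
    simpa [h_def, mul_comm] using! hf.comp_mul_left' Real.two_pi_pos.ne'
  have h_conv : Integrable (𝓕 h) := by
    rw [mellinConvergent_ofReal_iff_integrable_exp_smul] at hconv
    simp_rw [mellinInv_exp_neg, Real.fourierInv_eq_fourier_neg] at hconv
    simpa using hconv.comp_neg
  have h_cont : ContinuousAt h (s.im / (2 * Real.pi)) :=
    ContinuousAt.comp (g := f) (by rwa [hs]) (by fun_prop)
  rw [mellin_eq_fourier]
  simp_rw [mellinInv_exp_neg]
  exact (h_int.fourier_fourierInv_eq h_conv h_cont).trans (congrArg f hs)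

lemma norm_mellinInv_le (σ : ℝ) (f : ℂ → E) {x : ℝ} (hx : 0 < x) :
    ‖mellinInv σ f x‖ ≤ (2 * Real.pi)⁻¹ * (∫ t : ℝ, ‖f (σ + t * I)‖) * x ^ (-σ) := by
  have hnorm : ∀ t : ℝ, ‖(x : ℂ) ^ (-(σ + t * I)) • f (σ + t * I)‖ =
      x ^ (-σ) * ‖f (σ + t * I)‖ := fun t ↦ by
    rw [norm_smul, norm_cpow_eq_rpow_re_of_pos hx]
    simp
  rw [mellinInv, norm_smul, mul_assoc, mul_comm (∫ _, _), ← integral_const_mul]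
  simp_rw [← hnorm]
  rw [one_div, norm_inv, Real.norm_of_nonneg Real.two_pi_pos.le]
  gcongr
  exact norm_integral_le_integral_norm _

lemma continuous_fourier_of_integrable {g : ℝ → E} (hg : Integrable g) : Continuous (𝓕 g) :=
  VectorFourier.fourierIntegral_continuous Real.continuous_fourierChar continuous_inner hg

lemma continuousOn_mellinInv {f : ℂ → E} (hf : VerticalIntegrable f σ) :
    ContinuousOn (mellinInv σ f) (Set.Ioi 0) := by
  have h_int : Integrable fun y : ℝ ↦ f (σ + 2 * Real.pi * y * I) := by
    simpa [mul_comm] using! hf.comp_mul_left' Real.two_pi_pos.ne'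
  have h_cont : Continuous (𝓕⁻ fun y : ℝ ↦ f (σ + 2 * Real.pi * y * I)) := by
    rw [Real.fourierInv_eq_fourier_comp_neg]
    exact continuous_fourier_of_integrable h_int.comp_neg
  refine ContinuousOn.congr (fun x hx ↦ ContinuousAt.continuousWithinAt ?_)
    fun x hx ↦ mellinInv_eq_fourierInv σ f hx
  exact (continuousAt_ofReal_cpow_const x (-σ) (.inr (ne_of_gt hx))).smul
    (h_cont.continuousAt.comp (Real.continuousAt_log (ne_of_gt hx)).neg)

end MellinInversion

section ContourShift

open Complex Topology

variable {E : Type*} [NormedAddCommGroup E] [NormedSpace ℂ E] {G : ℂ → E} {σ₁ σ₂ : ℝ} {φ : ℝ → ℝ}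

lemma tendsto_intervalIntegral_horizontal_zero {l : Filter ℝ}
    (hG : ∀ w : ℂ, w.re ∈ Set.uIcc σ₁ σ₂ → ‖G w‖ ≤ φ w.im) (hφ : Tendsto φ l (𝓝 0)) :
    Tendsto (fun T : ℝ ↦ ∫ x in σ₁..σ₂, G (x + T * I)) l (𝓝 0) := by
  have hlim : Tendsto (fun T ↦ φ T * |σ₂ - σ₁|) l (𝓝 0) := by simpa using hφ.mul_const _
  refine squeeze_zero_norm (fun T ↦ ?_) hlim
  refine intervalIntegral.norm_integral_le_of_norm_le_const fun x hx ↦ ?_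
  simpa using hG (x + T * I) (by simpa using Set.uIoc_subset_uIcc hx)

theorem integral_vertical_eq_of_differentiableOn [CompleteSpace E]
    (hd : DifferentiableOn ℂ G {w | w.re ∈ Set.uIcc σ₁ σ₂}) (h₁ : VerticalIntegrable G σ₁)
    (h₂ : VerticalIntegrable G σ₂) (hG : ∀ w : ℂ, w.re ∈ Set.uIcc σ₁ σ₂ → ‖G w‖ ≤ φ w.im)
    (hφ : Tendsto φ (cocompact ℝ) (𝓝 0)) :
    ∫ t : ℝ, G (σ₁ + t * I) = ∫ t : ℝ, G (σ₂ + t * I) := by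
  have hrect : ∀ T : ℝ, (∫ x in σ₁..σ₂, G (x + (-T : ℝ) * I)) - (∫ x in σ₁..σ₂, G (x + T * I)) +
      I • (∫ y in (-T)..T, G (σ₂ + y * I)) - I • (∫ y in (-T)..T, G (σ₁ + y * I)) = 0 := fun T ↦ by
    simpa using! integral_boundary_rect_eq_zero_of_differentiableOn G ⟨σ₁, -T⟩ ⟨σ₂, T⟩
      (hd.mono fun w hw ↦ hw.1)
  rw [cocompact_eq_atBot_atTop, tendsto_sup] at hφ
  have hlim := ((((tendsto_intervalIntegral_horizontal_zero hG hφ.1).comp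
    tendsto_neg_atTop_atBot).sub (tendsto_intervalIntegral_horizontal_zero hG hφ.2)).add
    ((intervalIntegral_tendsto_integral h₂ tendsto_neg_atTop_atBot tendsto_id).const_smul I)).sub
    ((intervalIntegral_tendsto_integral h₁ tendsto_neg_atTop_atBot tendsto_id).const_smul I)
  have hzero := tendsto_nhds_unique (tendsto_const_nhds.congr fun T ↦ (hrect T).symm) hlim
  rw [sub_self, zero_add, ← smul_sub, eq_comm, smul_eq_zero_iff_right I_ne_zero] at hzero
  exact (sub_eq_zero.1 hzero).symm

end ContourShift

section InverseMellinRightHalfPlane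

open Asymptotics Bornology Complex Topology

variable {E : Type*} [NormedAddCommGroup E] {f : ℂ → E} {α σ : ℝ}

lemma one_add_sq_im_le_mul_sq_norm {w : ℂ} (hσ : 0 < σ) (hw : σ ≤ w.re) :
    1 + ‖w.im‖ ^ 2 ≤ (1 + (σ ^ 2)⁻¹) * ‖w‖ ^ 2 := by
  have hre : 1 ≤ (σ ^ 2)⁻¹ * ‖w‖ ^ 2 := by
    rw [inv_mul_eq_div, one_le_div (by positivity)]
    gcongr
    exact hw.trans (re_le_norm w)
  have him : ‖w.im‖ ^ 2 ≤ ‖w‖ ^ 2 := by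
    gcongr
    exact abs_im_le_norm w
  linarith

lemma exists_norm_le_mul_rpow_of_isBigO (hα : 0 ≤ α) (hf : ContinuousOn f {w | 0 < w.re})
    (hO : f =O[rightHalfPlaneAtInfty] fun w ↦ ‖w‖ ^ (-α)) (hσ : 0 < σ) :
    ∃ M, ∀ w : ℂ, σ ≤ w.re → ‖f w‖ ≤ M * (1 + ‖w.im‖ ^ 2) ^ (-α / 2) := by
  obtain ⟨C, hC₀, hC⟩ := hO.exists_nonneg
  obtain ⟨r, -, hr⟩ := hasBasis_cobounded_norm.eventually_iff.1
    (eventually_inf_principal.1 hC.bound)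
  obtain ⟨D, hD⟩ : ∃ D, ∀ w ∈ Metric.closedBall (0 : ℂ) r ∩ {w | σ ≤ w.re},
      ‖‖f w‖ * (1 + ‖w.im‖ ^ 2) ^ (α / 2)‖ ≤ D := by
    refine ((isCompact_closedBall 0 r).inter_right (isClosed_le continuous_const
      continuous_re)).exists_bound_of_continuousOn ?_
    refine (hf.mono fun w hw ↦ hσ.trans_le hw.2).norm.mul (ContinuousOn.rpow_const ?_ ?_)
    · fun_prop
    · exact fun w _ ↦ .inl (by positivity)
  refine ⟨max D (C * (1 + (σ ^ 2)⁻¹) ^ (α / 2)), fun w hw ↦ ?_⟩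
  rw [neg_div, Real.rpow_neg (by positivity), ← div_eq_mul_inv, le_div_iff₀ (by positivity)]
  rcases le_total ‖w‖ r with hwr | hwr
  · exact ((le_abs_self _).trans (hD w ⟨by simpa using hwr, hw⟩)).trans (le_max_left _ _)
  · have hw₀ : 0 < ‖w‖ := norm_pos_iff.2 (ne_zero_of_re_pos (hσ.trans_le hw))
    refine le_max_of_le_right ?_
    calc ‖f w‖ * (1 + ‖w.im‖ ^ 2) ^ (α / 2)
        ≤ C * ‖w‖ ^ (-α) * ((1 + (σ ^ 2)⁻¹) * ‖w‖ ^ 2) ^ (α / 2) := by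
          gcongr
          · simpa [abs_of_nonneg, Real.rpow_nonneg] using hr hwr (hσ.trans_le hw)
          · exact one_add_sq_im_le_mul_sq_norm hσ hw
      _ = C * (1 + (σ ^ 2)⁻¹) ^ (α / 2) := by
          rw [Real.mul_rpow (by positivity) (by positivity), ← Real.rpow_natCast_mul hw₀.le,
            Nat.cast_ofNat, mul_div_cancel₀ α two_ne_zero, Real.rpow_neg hw₀.le]
          field_simp

lemma verticalIntegrable_of_isBigO (hα : 1 < α) (hf : ContinuousOn f {w | 0 < w.re})
    (hO : f =O[rightHalfPlaneAtInfty] fun w ↦ ‖w‖ ^ (-α)) (hσ : 0 < σ) :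
    VerticalIntegrable f σ := by
  obtain ⟨M, hM⟩ := exists_norm_le_mul_rpow_of_isBigO (zero_le_one.trans hα.le) hf hO hσ
  refine ((integrable_rpow_neg_one_add_norm_sq (by simpa using hα)).const_mul M).mono' ?_
    (.of_forall fun t ↦ by simpa using hM (σ + t * I) (by simp))
  exact (hf.comp_continuous (by fun_prop) fun t ↦ by simpa using hσ).aestronglyMeasurable

variable [NormedSpace ℂ E]

lemma exists_norm_mellinInv_le_of_isBigO (hα : 1 < α) (hf : ContinuousOn f {w | 0 < w.re})
    (hO : f =O[rightHalfPlaneAtInfty] fun w ↦ ‖w‖ ^ (-α)) (hσ : 0 < σ) :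
    ∃ N, ∀ τ, σ ≤ τ → ∀ x : ℝ, 0 < x → ‖mellinInv τ f x‖ ≤ N * x ^ (-τ) := by
  obtain ⟨M, hM⟩ := exists_norm_le_mul_rpow_of_isBigO (zero_le_one.trans hα.le) hf hO hσ
  refine ⟨(2 * Real.pi)⁻¹ * ∫ t : ℝ, M * (1 + ‖t‖ ^ 2) ^ (-α / 2), fun τ hτ x hx ↦
    (norm_mellinInv_le τ f hx).trans ?_⟩
  gcongr
  · exact (verticalIntegrable_of_isBigO hα hf hO (hσ.trans_le hτ)).norm
  · exact (integrable_rpow_neg_one_add_norm_sq (by simpa using hα)).const_mul M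
  · intro t
    simpa using hM (τ + t * I) (by simpa using hτ)

lemma verticalIntegrable_cpow_smul {x : ℝ} (hx : 0 < x) (hf : VerticalIntegrable f σ) :
    VerticalIntegrable (fun w ↦ (x : ℂ) ^ (-w) • f w) σ := by
  refine hf.bdd_smul (x ^ (-σ)) (Continuous.aestronglyMeasurable ?_) (.of_forall fun t ↦ ?_)
  · exact (by fun_prop : Continuous fun t : ℝ ↦ -(σ + t * I)).const_cpow
      (.inl (mod_cast hx.ne'))
  · rw [norm_cpow_eq_rpow_re_of_pos hx]
    simp

variable [CompleteSpace E]

theorem mellinInv_eq_mellinInv_of_isBigO {τ x : ℝ} (hα : 1 < α)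
    (hf : DifferentiableOn ℂ f {w | 0 < w.re})
    (hO : f =O[rightHalfPlaneAtInfty] fun w ↦ ‖w‖ ^ (-α)) (hσ : 0 < σ) (hτ : 0 < τ) (hx : 0 < x) :
    mellinInv σ f x = mellinInv τ f x := by
  have hx₀ : (x : ℂ) ≠ 0 := mod_cast hx.ne'
  obtain ⟨M, hM⟩ := exists_norm_le_mul_rpow_of_isBigO (zero_le_one.trans hα.le) hf.continuousOn hO
    (lt_min hσ hτ)
  obtain ⟨K, hK⟩ := isCompact_uIcc.exists_bound_of_continuousOn (s := Set.uIcc σ τ)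
    (f := fun u ↦ x ^ (-u)) (continuous_const.rpow continuous_neg fun _ ↦ .inl hx.ne').continuousOn
  have hint : ∀ {υ : ℝ}, 0 < υ → VerticalIntegrable (fun w ↦ (x : ℂ) ^ (-w) • f w) υ := fun hυ ↦
    verticalIntegrable_cpow_smul hx (verticalIntegrable_of_isBigO hα hf.continuousOn hO hυ)
  rw [mellinInv, mellinInv, integral_vertical_eq_of_differentiableOn
    (G := fun w ↦ (x : ℂ) ^ (-w) • f w) (φ := fun t ↦ K * (M * (1 + ‖t‖ ^ 2) ^ (-α / 2)))
    ?_ (hint hσ) (hint hτ) ?_ ?_]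
  · refine .smul ?_ (hf.mono fun w hw ↦ (lt_min hσ hτ).trans_le hw.1)
    exact fun w _ ↦ (differentiableAt_id.neg.const_cpow (.inl hx₀)).differentiableWithinAt
  · intro w hw
    rw [norm_smul]
    gcongr
    · exact (norm_nonneg _).trans (hK _ hw)
    · rw [norm_cpow_eq_rpow_re_of_pos hx]
      exact (le_abs_self _).trans (hK _ hw)
    · exact hM w hw.1
  · have hsq : Tendsto (fun t : ℝ ↦ 1 + ‖t‖ ^ 2) (cocompact ℝ) atTop :=
      tendsto_atTop_add_const_left _ _
        ((tendsto_pow_atTop two_ne_zero).comp tendsto_norm_cocompact_atTop)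
    simpa [neg_div] using! (((tendsto_rpow_neg_atTop (half_pos (zero_lt_one.trans hα))).comp
      hsq).const_mul M).const_mul K

lemma mellinInv_eq_zero_of_isBigO {x : ℝ} (hα : 1 < α) (hf : DifferentiableOn ℂ f {w | 0 < w.re})
    (hO : f =O[rightHalfPlaneAtInfty] fun w ↦ ‖w‖ ^ (-α)) (hσ : 0 < σ) (hx : 1 < x) :
    mellinInv σ f x = 0 := by
  have hx₀ : 0 < x := zero_lt_one.trans hx
  obtain ⟨N, hN⟩ := exists_norm_mellinInv_le_of_isBigO hα hf.continuousOn hO hσ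
  have hlim : Tendsto (fun τ : ℝ ↦ N * x ^ (-τ)) atTop (𝓝 0) := by
    simpa using! ((tendsto_rpow_atBot_of_base_gt_one x hx).comp
      tendsto_neg_atTop_atBot).const_mul N
  refine norm_le_zero_iff.1 (ge_of_tendsto hlim ?_)
  filter_upwards [eventually_ge_atTop σ] with τ hτ
  rw [mellinInv_eq_mellinInv_of_isBigO hα hf hO hσ (hσ.trans_le hτ) hx₀]
  exact hN τ hτ x hx₀

lemma mellinConvergent_mellinInv_of_isBigO {s : ℂ} (hα : 1 < α)
    (hf : DifferentiableOn ℂ f {w | 0 < w.re})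
    (hO : f =O[rightHalfPlaneAtInfty] fun w ↦ ‖w‖ ^ (-α)) (hσ : 0 < σ) (hs : 0 < s.re) :
    MellinConvergent (mellinInv σ f) s := by
  have hbound : ∀ τ : ℝ, 0 < τ → mellinInv σ f =O[𝓟 (Set.Ioi 0)] (· ^ (-τ)) := fun τ hτ ↦ by
    refine isBigO_principal.2 ⟨(2 * Real.pi)⁻¹ * ∫ t : ℝ, ‖f (τ + t * I)‖, fun x hx ↦ ?_⟩
    rw [mellinInv_eq_mellinInv_of_isBigO hα hf hO hσ hτ hx,
      Real.norm_of_nonneg (Real.rpow_nonneg hx.le _)]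
    exact norm_mellinInv_le τ f hx
  have hcont := continuousOn_mellinInv (verticalIntegrable_of_isBigO hα hf.continuousOn hO hσ)
  exact mellinConvergent_of_isBigO_rpow (hcont.locallyIntegrableOn measurableSet_Ioi)
    ((hbound (s.re + 1) (by positivity)).mono (le_principal_iff.2 (Ioi_mem_atTop 0)))
    (lt_add_one _) ((hbound (s.re / 2) (by positivity)).mono inf_le_right) (half_lt_self hs)

theorem hasMellin_mellinInv_of_isBigO {s : ℂ} (hα : 1 < α)
    (hf : DifferentiableOn ℂ f {w | 0 < w.re})
    (hO : f =O[rightHalfPlaneAtInfty] fun w ↦ ‖w‖ ^ (-α)) (hσ : 0 < σ) (hs : 0 < s.re) :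
    HasMellin (mellinInv σ f) s (f s) := by
  refine ⟨mellinConvergent_mellinInv_of_isBigO hα hf hO hσ hs, ?_⟩
  rw [← mellin_mellinInv_eq (verticalIntegrable_of_isBigO hα hf.continuousOn hO hs)
    (mellinConvergent_mellinInv_of_isBigO hα hf hO hs (by simpa using hs))
    (hf.continuousOn.continuousAt ((isOpen_lt continuous_const continuous_re).mem_nhds hs))]
  refine setIntegral_congr_fun measurableSet_Ioi fun x hx ↦ ?_
  simp only [mellinInv_eq_mellinInv_of_isBigO hα hf hO hσ hs hx]

end InverseMellinRightHalfPlane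

section LogPowerKernel

open Asymptotics Complex FourierTransform Topology

lemma eqOn_re_pos_of_forall_ofReal_eq {E : Type*} [NormedAddCommGroup E] [NormedSpace ℂ E]
    [CompleteSpace E] {f g : ℂ → E} (hf : DifferentiableOn ℂ f {w | 0 < w.re})
    (hg : DifferentiableOn ℂ g {w | 0 < w.re}) (hfg : ∀ r : ℝ, 0 < r → f r = g r) :
    Set.EqOn f g {w | 0 < w.re} := by
  have hopen : IsOpen {w : ℂ | 0 < w.re} := isOpen_lt continuous_const continuous_re
  refine (hf.analyticOnNhd hopen).eqOn_of_preconnected_of_frequently_eq (hg.analyticOnNhd hopen)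
    (convex_halfSpace_re_gt 0).isPreconnected (z₀ := ((1 : ℝ) : ℂ)) (by simp) ?_
  have htendsto : Tendsto (fun r : ℝ ↦ (r : ℂ)) (𝓝[≠] 1) (𝓝[≠] ((1 : ℝ) : ℂ)) :=
    continuous_ofReal.continuousAt.tendsto.inf
      (tendsto_principal_principal.2 fun r hr ↦ by simpa using hr)
  exact htendsto.frequently
    ((eventually_nhdsWithin_of_eventually_nhds (lt_mem_nhds one_pos)).mono hfg).frequently

/-- The function `(-log x) ^ (μ - 1) / Γ(μ)` on `(0, 1)`, extended by zero: the inverse Mellin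
transform of `s ^ (-μ)`. -/
noncomputable def logPowerKernel (μ : ℂ) : ℝ → ℂ :=
  (Set.Ioo 0 1).indicator fun x ↦ ((-Real.log x : ℝ) : ℂ) ^ (μ - 1) / Gamma μ

variable {μ s : ℂ}

lemma logPowerKernel_eq_zero {x : ℝ} (hx : 1 ≤ x) : logPowerKernel μ x = 0 :=
  Set.indicator_of_notMem (fun h ↦ hx.not_gt h.2) _

lemma continuousOn_logPowerKernel (μ : ℂ) : ContinuousOn (logPowerKernel μ) (Set.Ioo 0 1) := by
  refine ContinuousOn.congr (fun x hx ↦ ContinuousAt.continuousWithinAt ?_)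
    fun x hx ↦ Set.indicator_of_mem hx _
  have hlog : 0 < -Real.log x := neg_pos.2 (Real.log_neg hx.1 hx.2)
  exact ((continuousAt_ofReal_cpow_const _ (μ - 1) (.inr hlog.ne')).comp
    (f := fun x ↦ -Real.log x) (Real.continuousAt_log hx.1.ne').neg).div_const _

lemma exp_smul_logPowerKernel_exp_neg (μ : ℂ) (r : ℝ) :
    (fun u : ℝ ↦ Real.exp (-r * u) • logPowerKernel μ (Real.exp (-u))) =
      (Set.Ioi 0).indicator fun u : ℝ ↦ (u : ℂ) ^ (μ - 1) * exp (-(r * u)) / Gamma μ := by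
  funext u
  by_cases hu : 0 < u
  · have hmem : Real.exp (-u) ∈ Set.Ioo (0 : ℝ) 1 := ⟨Real.exp_pos _, by simpa using hu⟩
    rw [logPowerKernel, Set.indicator_of_mem hmem, Set.indicator_of_mem (Set.mem_Ioi.2 hu),
      Real.log_exp, neg_neg, real_smul]
    push_cast
    ring_nf
  · have hmem : Real.exp (-u) ∉ Set.Ioo (0 : ℝ) 1 := fun h ↦ hu (by simpa using h.2)
    rw [logPowerKernel, Set.indicator_of_notMem hmem,
      Set.indicator_of_notMem (Set.mem_Ioi.not.2 hu), smul_zero]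

lemma hasMellin_logPowerKernel_ofReal (hμ : 0 < μ.re) {r : ℝ} (hr : 0 < r) :
    HasMellin (logPowerKernel μ) r ((r : ℂ) ^ (-μ)) := by
  have hΓ : Gamma μ ≠ 0 := Gamma_ne_zero_of_re_pos hμ
  have hr₀ : (r : ℂ) ≠ 0 := mod_cast hr.ne'
  have hint : ∫ u in Set.Ioi (0 : ℝ), (u : ℂ) ^ (μ - 1) * exp (-(r * u)) / Gamma μ =
      (r : ℂ) ^ (-μ) := by
    rw [integral_div, integral_cpow_mul_exp_neg_mul_Ioi hμ hr, mul_div_cancel_right₀ _ hΓ, one_div,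
      inv_cpow _ _ (by rw [arg_ofReal_of_nonneg hr.le]; exact Real.pi_pos.ne), cpow_neg]
  have hintegrable : IntegrableOn (fun u : ℝ ↦ (u : ℂ) ^ (μ - 1) * exp (-(r * u)) / Gamma μ)
      (Set.Ioi 0) :=
    .of_integral_ne_zero (hint.trans_ne (by simp [cpow_eq_zero_iff, hr₀]))
  refine ⟨?_, ?_⟩
  · rw [mellinConvergent_ofReal_iff_integrable_exp_smul, exp_smul_logPowerKernel_exp_neg]
    exact hintegrable.integrable_indicator measurableSet_Ioi
  · rw [mellin_eq_fourier, ofReal_re, ofReal_im, zero_div, exp_smul_logPowerKernel_exp_neg,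
      Real.fourier_eq, ← hint, ← integral_indicator measurableSet_Ioi]
    simp

lemma logPowerKernel_isBigO_rpow (μ : ℂ) {b : ℝ} (hb : 0 < b) :
    logPowerKernel μ =O[𝓝[>] 0] (· ^ (-b)) := by
  refine .trans (.of_norm_eventuallyLE ?_) ((isLittleO_abs_log_rpow_rpow_nhdsGT_zero (μ.re - 1)
    (neg_lt_zero.2 hb)).isBigO.const_mul_left ‖Gamma μ‖⁻¹)
  filter_upwards [Ioo_mem_nhdsGT one_pos] with x hx
  have hlog : 0 < -Real.log x := neg_pos.2 (Real.log_neg hx.1 hx.2)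
  rw [logPowerKernel, Set.indicator_of_mem hx, norm_div, norm_cpow_eq_rpow_re_of_pos hlog,
    abs_of_neg (neg_pos.1 hlog), div_eq_inv_mul]
  rfl

theorem hasMellin_logPowerKernel (hμ : 0 < μ.re) (hs : 0 < s.re) :
    HasMellin (logPowerKernel μ) s (s ^ (-μ)) := by
  have hloc : LocallyIntegrableOn (logPowerKernel μ) (Set.Ioi 0) := by
    have := (hasMellin_logPowerKernel_ofReal hμ one_pos).1
    simp only [MellinConvergent, ofReal_one, sub_self, cpow_zero, one_smul] at this
    exact this.locallyIntegrableOn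
  have htop : ∀ w : ℂ, logPowerKernel μ =O[atTop] (· ^ (-(w.re + 1))) := fun w ↦
    EventuallyEq.trans_isBigO
      ((eventually_ge_atTop 1).mono fun x hx ↦ logPowerKernel_eq_zero hx) (isBigO_zero _ _)
  have hbot : ∀ {w : ℂ}, 0 < w.re → logPowerKernel μ =O[𝓝[>] 0] (· ^ (-(w.re / 2))) := fun hw ↦
    logPowerKernel_isBigO_rpow μ (half_pos hw)
  refine ⟨mellinConvergent_of_isBigO_rpow hloc (htop s) (lt_add_one _) (hbot hs)
    (half_lt_self hs), ?_⟩
  refine eqOn_re_pos_of_forall_ofReal_eq (f := mellin (logPowerKernel μ))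
    (g := fun w ↦ w ^ (-μ)) (fun w hw ↦ ?_) (fun w hw ↦ ?_)
    (fun r hr ↦ (hasMellin_logPowerKernel_ofReal hμ hr).2) hs
  · exact (mellin_differentiableAt_of_isBigO_rpow hloc (htop w) (lt_add_one _) (hbot hw)
      (half_lt_self hw)).differentiableWithinAt
  · exact (differentiableAt_id.cpow_const (.inl hw)).differentiableWithinAt

end LogPowerKernel

section PrincipalValue

open Complex FourierTransform Topology

section RealNormedSpace

variable {E : Type*} [NormedAddCommGroup E] [NormedSpace ℝ E] {φ : ℝ → E} {D : ℝ}

lemma integral_eq_integral_Ioi_add_comp_neg (hφ : Integrable φ) :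
    ∫ t, φ t = ∫ t in Set.Ioi 0, (φ t + φ (-t)) := by
  rw [integral_add hφ.integrableOn hφ.comp_neg.integrableOn, integral_comp_neg_Ioi, neg_zero,
    add_comm, intervalIntegral.integral_Iic_add_Ioi hφ.integrableOn hφ.integrableOn]

lemma norm_intervalIntegral_neg_self_le (hD : ∀ t, ‖φ t‖ ≤ D) {R : ℝ} (hR : 0 ≤ R) :
    ‖∫ t in -R..R, φ t‖ ≤ D * (2 * R) := by
  have := intervalIntegral.norm_integral_le_of_norm_le_const (a := -R) (b := R) fun t _ ↦ hD t
  rwa [sub_neg_eq_add, ← two_mul, abs_of_nonneg (by positivity)] at this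

variable [CompleteSpace E]

lemma hasDerivAt_intervalIntegral_neg_self (hφ : Continuous φ) (R : ℝ) :
    HasDerivAt (fun R : ℝ ↦ ∫ t in -R..R, φ t) (φ R + φ (-R)) R := by
  have hderiv : ∀ R : ℝ, HasDerivAt (fun R ↦ ∫ t in 0..R, φ t) (φ R) R := fun R ↦
    intervalIntegral.integral_hasDerivAt_right (hφ.intervalIntegrable _ _)
      (hφ.stronglyMeasurableAtFilter _ _) hφ.continuousAt
  have hneg : HasDerivAt (fun R ↦ ∫ t in 0..(-R), φ t) (-φ (-R)) R := by
    simpa using! (hderiv (-R)).scomp R (hasDerivAt_neg R)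
  have hsub := (hderiv R).sub hneg
  rw [sub_neg_eq_add] at hsub
  refine hsub.congr_of_eventuallyEq (.of_forall fun x ↦ ?_)
  exact (intervalIntegral.integral_interval_sub_left (hφ.intervalIntegrable _ _)
    (hφ.intervalIntegrable _ _)).symm

lemma continuous_intervalIntegral_neg_self (hφ : Continuous φ) :
    Continuous fun R : ℝ ↦ ∫ t in -R..R, φ t :=
  continuous_iff_continuousAt.2 fun R ↦ (hasDerivAt_intervalIntegral_neg_self hφ R).continuousAt

lemma integrableOn_smul_intervalIntegral_neg_self (hφ : Continuous φ) (hD : ∀ t, ‖φ t‖ ≤ D)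
    {k : ℝ → ℝ} (hk : IntegrableOn (fun t ↦ k t * t) (Set.Ioi 0)) :
    IntegrableOn (fun t ↦ k t • ∫ u in -t..t, φ u) (Set.Ioi 0) := by
  have hmean : AEStronglyMeasurable (fun t : ℝ ↦ t⁻¹ • ∫ u in -t..t, φ u)
      (volume.restrict (Set.Ioi 0)) :=
    measurable_inv.aestronglyMeasurable.smul
      (continuous_intervalIntegral_neg_self hφ).aestronglyMeasurable
  refine IntegrableOn.congr_fun (hk.smul_bdd (2 * D) hmean ?_) (fun t ht ↦ ?_) measurableSet_Ioi
  · filter_upwards [ae_restrict_mem measurableSet_Ioi] with t (ht : 0 < t)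
    rw [norm_smul, norm_inv, Real.norm_of_nonneg ht.le, inv_mul_le_iff₀ ht]
    exact (norm_intervalIntegral_neg_self_le hD ht.le).trans_eq (by ring)
  · simp [smul_smul, mul_inv_cancel_right₀ (Set.mem_Ioi.1 ht).ne']

lemma integral_exp_neg_sq_smul_eq_integral_Ioi (hφ : Continuous φ) (hD : ∀ t, ‖φ t‖ ≤ D) :
    ∫ t : ℝ, Real.exp (-t ^ 2) • φ t =
      ∫ t in Set.Ioi (0 : ℝ), (2 * t * Real.exp (-t ^ 2)) • ∫ u in -t..t, φ u := by
  have hΦ := hasDerivAt_intervalIntegral_neg_self hφ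
  have hgauss : Integrable fun t : ℝ ↦ Real.exp (-t ^ 2) := by
    simpa using integrable_exp_neg_mul_sq one_pos
  have hφ_int : Integrable fun t : ℝ ↦ Real.exp (-t ^ 2) • φ t :=
    hgauss.smul_bdd D hφ.aestronglyMeasurable (.of_forall hD)
  have hφ_int_neg : Integrable fun t : ℝ ↦ Real.exp (-t ^ 2) • φ (-t) := by
    simpa using hφ_int.comp_neg
  have hsum_int : IntegrableOn (fun t : ℝ ↦ Real.exp (-t ^ 2) • (φ t + φ (-t))) (Set.Ioi 0) := by
    simpa only [smul_add] using! (hφ_int.add hφ_int_neg).integrableOn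
  have hΦ_int : IntegrableOn (fun t : ℝ ↦ Real.exp (-t ^ 2) • ∫ u in -t..t, φ u) (Set.Ioi 0) := by
    refine integrableOn_smul_intervalIntegral_neg_self hφ hD ?_
    simpa [mul_comm] using (integrable_mul_exp_neg_mul_sq one_pos).integrableOn
  have hΦ_int' : IntegrableOn (fun t : ℝ ↦ (2 * t * Real.exp (-t ^ 2)) • ∫ u in -t..t, φ u)
      (Set.Ioi 0) := by
    refine integrableOn_smul_intervalIntegral_neg_self hφ hD ?_
    convert! ((integrable_rpow_mul_exp_neg_mul_sq one_pos (s := 2) (by norm_num)).const_mul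
      2).integrableOn using 2 with t
    rw [Real.rpow_two, neg_one_mul]
    ring
  have hderiv : ∀ t, HasDerivAt (fun t ↦ Real.exp (-t ^ 2) • ∫ u in -t..t, φ u)
      (Real.exp (-t ^ 2) • (φ t + φ (-t)) - (2 * t * Real.exp (-t ^ 2)) • ∫ u in -t..t, φ u) t :=
    fun t ↦ by
      convert! (((hasDerivAt_pow 2 t).neg.exp).smul (hΦ t)) using 1
      simp only [Nat.cast_ofNat, Pi.neg_apply]
      module
  have hzero := tendsto_zero_of_hasDerivAt_of_integrableOn_Ioi (fun t _ ↦ hderiv t)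
    (hsum_int.sub hΦ_int') hΦ_int
  have hFTC := integral_Ioi_of_hasDerivAt_of_tendsto' (fun t _ ↦ hderiv t)
    (hsum_int.sub hΦ_int') hzero
  rw [integral_sub hsum_int hΦ_int'] at hFTC
  rw [integral_eq_integral_Ioi_add_comp_neg hφ_int]
  simpa [sub_eq_zero] using hFTC

lemma exists_norm_intervalIntegral_neg_self_le (hφ : Continuous φ) {L : E}
    (hL : Tendsto (fun R : ℝ ↦ ∫ t in -R..R, φ t) atTop (𝓝 L)) :
    ∃ N, ∀ R, 0 ≤ R → ‖∫ t in -R..R, φ t‖ ≤ N := by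
  obtain ⟨R₀, hR₀⟩ := eventually_atTop.1 (hL.norm.eventually_lt_const (lt_add_one ‖L‖))
  obtain ⟨N, hN⟩ := isCompact_Icc.exists_bound_of_continuousOn (s := Set.Icc 0 R₀)
    (continuous_intervalIntegral_neg_self hφ).continuousOn
  refine ⟨max N (‖L‖ + 1), fun R hR ↦ ?_⟩
  rcases le_total R R₀ with h | h
  · exact (hN R ⟨hR, h⟩).trans (le_max_left _ _)
  · exact (hR₀ R h).le.trans (le_max_right _ _)

lemma integral_exp_neg_inv_mul_sq_smul {R : ℝ} (hR : 0 < R) (hφ : Continuous φ)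
    (hD : ∀ t, ‖φ t‖ ≤ D) :
    ∫ t : ℝ, Real.exp (-(R⁻¹ * t) ^ 2) • φ t =
      ∫ t in Set.Ioi (0 : ℝ), (2 * t * Real.exp (-t ^ 2)) • ∫ u in -(R * t)..R * t, φ u := by
  have hscale : ∀ t : ℝ, ∫ u in -(R * t)..R * t, φ u = R • ∫ u in -t..t, φ (R * u) := fun t ↦ by
    rw [intervalIntegral.smul_integral_comp_mul_left, mul_neg]
  have hsubst := Measure.integral_comp_mul_left (fun t ↦ Real.exp (-t ^ 2) • φ (R * t)) R⁻¹
  simp only [mul_inv_cancel_left₀ hR.ne', inv_inv, abs_of_pos hR] at hsubst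
  rw [hsubst, integral_exp_neg_sq_smul_eq_integral_Ioi (φ := fun t ↦ φ (R * t))
    (hφ.comp (continuous_const_mul R)) fun t ↦ hD (R * t), ← integral_smul]
  simp only [hscale, smul_comm R]

theorem tendsto_integral_exp_neg_inv_mul_sq_smul (hφ : Continuous φ) (hD : ∀ t, ‖φ t‖ ≤ D) {L : E}
    (hL : Tendsto (fun R : ℝ ↦ ∫ t in -R..R, φ t) atTop (𝓝 L)) :
    Tendsto (fun R : ℝ ↦ ∫ t : ℝ, Real.exp (-(R⁻¹ * t) ^ 2) • φ t) atTop (𝓝 L) := by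
  obtain ⟨N, hN⟩ := exists_norm_intervalIntegral_neg_self_le hφ hL
  have hone : ∫ t in Set.Ioi (0 : ℝ), 2 * t * Real.exp (-t ^ 2) = 1 := by
    have hΓ := _root_.integral_rpow_mul_exp_neg_mul_rpow (p := 2) (q := 1) (b := 1) (by norm_num)
      (by norm_num) one_pos
    simp only [Real.rpow_one, neg_one_mul, Real.rpow_two] at hΓ
    simp_rw [mul_assoc, integral_const_mul, hΓ]
    norm_num
  have hint : IntegrableOn (fun t : ℝ ↦ 2 * t * Real.exp (-t ^ 2)) (Set.Ioi 0) :=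
    .of_integral_ne_zero (hone.trans_ne one_ne_zero)
  have hlim : Tendsto (fun R : ℝ ↦ ∫ t in Set.Ioi (0 : ℝ),
      (2 * t * Real.exp (-t ^ 2)) • ∫ u in -(R * t)..R * t, φ u) atTop
      (𝓝 (∫ t in Set.Ioi (0 : ℝ), (2 * t * Real.exp (-t ^ 2)) • L)) := by
    refine tendsto_integral_filter_of_dominated_convergence
      (fun t ↦ 2 * t * Real.exp (-t ^ 2) * N) ?_ ?_ (hint.mul_const N) ?_
    · filter_upwards with R
      exact .smul (by fun_prop) ((continuous_intervalIntegral_neg_self hφ).comp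
        (continuous_const_mul R)).aestronglyMeasurable
    · filter_upwards [eventually_ge_atTop 0] with R hR
      filter_upwards [ae_restrict_mem measurableSet_Ioi] with t (ht : 0 < t)
      rw [norm_smul, Real.norm_of_nonneg (by positivity)]
      gcongr
      exact hN _ (by positivity)
    · filter_upwards [ae_restrict_mem measurableSet_Ioi] with t ht
      exact (hL.comp (tendsto_id.atTop_mul_const ht)).const_smul _
  rw [integral_smul_const, hone, one_smul] at hlim
  refine hlim.congr' ?_
  filter_upwards [eventually_gt_atTop 0] with R hR
  exact (integral_exp_neg_inv_mul_sq_smul hR hφ hD).symm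

end RealNormedSpace

variable {E : Type*} [NormedAddCommGroup E] [NormedSpace ℂ E] [CompleteSpace E]

theorem tendsto_integral_gaussian_smul_fourier {V : Type*} [NormedAddCommGroup V]
    [InnerProductSpace ℝ V] [FiniteDimensional ℝ V] [MeasurableSpace V] [BorelSpace V] {g : V → E}
    (hg : Integrable g) {v : V} (hv : ContinuousAt g v) :
    Tendsto (fun c : ℝ ↦ ∫ w : V,
      exp (-(c⁻¹ : ℂ) * ‖w‖ ^ 2 + 2 * Real.pi * I * (inner ℝ v w : ℝ)) • 𝓕 g w) atTop
      (𝓝 (g v)) := by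
  refine (Real.tendsto_integral_gaussian_smul' hg hv).congr' ?_
  filter_upwards [eventually_gt_atTop 0] with c hc
  have hc' : 0 < (c⁻¹ : ℂ).re := by simpa
  have hgauss : Integrable fun w : V ↦
      exp (-(c⁻¹ : ℂ) * ‖w‖ ^ 2 + 2 * Real.pi * I * (inner ℝ v w : ℝ)) :=
    GaussianFourier.integrable_cexp_neg_mul_sq_norm_add hc' _ _
  have hflip : ∫ w : V, 𝓕 (fun w : V ↦
      exp (-(c⁻¹ : ℂ) * ‖w‖ ^ 2 + 2 * Real.pi * I * (inner ℝ v w : ℝ))) w • g w =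
      ∫ w : V, exp (-(c⁻¹ : ℂ) * ‖w‖ ^ 2 + 2 * Real.pi * I * (inner ℝ v w : ℝ)) • 𝓕 g w := by
    simpa using! VectorFourier.integral_fourierIntegral_smul_eq_flip (L := innerₗ V)
      Real.continuous_fourierChar continuous_inner hgauss hg
  rw [← hflip]
  refine integral_congr_ae (.of_forall fun w ↦ ?_)
  dsimp only
  rw [fourier_gaussian_innerProductSpace' hc', div_inv_eq_mul, div_inv_eq_mul]
  congr 3
  ring

theorem eq_of_tendsto_intervalIntegral_fourier {g : ℝ → E} (hg : Integrable g) {v : ℝ}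
    (hv : ContinuousAt g v) {L : E}
    (hL : Tendsto (fun R : ℝ ↦ ∫ t in -R..R, exp (2 * Real.pi * I * (v * t)) • 𝓕 g t) atTop
      (𝓝 L)) : L = g v := by
  have hcont : Continuous fun t : ℝ ↦ exp (2 * Real.pi * I * (v * t)) • 𝓕 g t :=
    .smul (by fun_prop) (continuous_fourier_of_integrable hg)
  have hbound : ∀ t : ℝ, ‖exp (2 * Real.pi * I * (v * t)) • 𝓕 g t‖ ≤ ∫ u, ‖g u‖ := fun t ↦ by
    rw [norm_smul, norm_exp]
    simpa using!
      VectorFourier.norm_fourierIntegral_le_integral_norm Real.fourierChar volume (innerₗ ℝ) g t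
  have habel := tendsto_integral_exp_neg_inv_mul_sq_smul hcont hbound hL
  refine tendsto_nhds_unique habel
    (((tendsto_integral_gaussian_smul_fourier hg hv).comp (tendsto_pow_atTop two_ne_zero)).congr
      fun R ↦ integral_congr_ae (.of_forall fun t ↦ ?_))
  beta_reduce
  rw [← coe_smul (Real.exp _), smul_smul, ofReal_exp, ← exp_add, ← ofReal_pow ‖t‖, Real.norm_eq_abs,
    sq_abs, RCLike.inner_apply, conj_trivial]
  congr 2
  push_cast
  ring

theorem eq_of_tendsto_intervalIntegral_mellin {f : ℝ → E} {σ x : ℝ} (hf : MellinConvergent f σ)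
    (hx : 0 < x) (hfx : ContinuousAt f x) {L : E}
    (hL : Tendsto (fun R : ℝ ↦ (2 * Real.pi)⁻¹ • ∫ t in -R..R,
      (x : ℂ) ^ (-(σ + t * I)) • mellin f (σ + t * I)) atTop (𝓝 L)) : L = f x := by
  have hx₀ : (x : ℂ) ≠ 0 := mod_cast hx.ne'
  set g : ℝ → E := fun u ↦ Real.exp (-σ * u) • f (Real.exp (-u)) with g_def
  have hexp : Real.exp (- -Real.log x) = x := by rw [neg_neg, Real.exp_log hx]
  have hcont : ContinuousAt g (-Real.log x) :=
    (by fun_prop : Continuous fun u ↦ Real.exp (-σ * u)).continuousAt.smul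
      (.comp (g := f) (by rwa [hexp]) (by fun_prop))
  have hintegrand : ∀ t : ℝ, (x : ℂ) ^ (σ : ℂ) • (x : ℂ) ^ (-(σ + t * I)) • mellin f (σ + t * I) =
      exp (2 * Real.pi * I * ((-Real.log x : ℝ) * (t / (2 * Real.pi) : ℝ))) •
        𝓕 g (t / (2 * Real.pi)) := fun t ↦ by
    rw [smul_smul, ← cpow_add _ _ hx₀, cpow_def_of_ne_zero hx₀, ← ofReal_log hx.le,
      mellin_eq_fourier]
    congr 2
    · push_cast
      field_simp
      ring
    · simp [g_def]
  have hg := eq_of_tendsto_intervalIntegral_fourier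
    (mellinConvergent_ofReal_iff_integrable_exp_smul.1 hf) hcont (L := (x : ℂ) ^ (σ : ℂ) • L) ?_
  · have hgx : g (-Real.log x) = (x : ℂ) ^ (σ : ℂ) • f x := by
      simp only [g_def, hexp]
      rw [neg_mul_neg, mul_comm, ← Real.rpow_def_of_pos hx, ← coe_smul, ofReal_cpow hx.le]
    exact smul_right_injective E (cpow_ne_zero_iff.2 (.inl hx₀)) (hg.trans hgx)
  · refine ((hL.const_smul ((x : ℂ) ^ (σ : ℂ))).comp
      (tendsto_id.const_mul_atTop Real.two_pi_pos)).congr fun R ↦ ?_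
    rw [Function.comp_apply, smul_comm, ← intervalIntegral.integral_smul]
    simp_rw [hintegrand]
    rw [intervalIntegral.inv_smul_integral_comp_div
      (f := fun t ↦ exp (2 * Real.pi * I * ((-Real.log x : ℝ) * t)) • 𝓕 g t), neg_div, id,
      mul_div_cancel_left₀ R Real.two_pi_pos.ne']

end PrincipalValue

section InverseMellinGammaQuotient

open Asymptotics Complex Topology

lemma hasMellin_cpow_smul_comp_inv_mul {E : Type*} [NormedAddCommGroup E] [NormedSpace ℂ E]
    {f : ℝ → E} {s z : ℂ} {m : E} {r : ℝ} (hr : 0 < r) (hf : HasMellin f (s - z) m) :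
    HasMellin (fun x ↦ (x : ℂ) ^ (-z) • f (r⁻¹ * x)) s ((r : ℂ) ^ (s - z) • m) := by
  refine ⟨?_, ?_⟩
  · rw [MellinConvergent.cpow_smul, MellinConvergent.comp_mul_left (inv_pos.2 hr)]
    exact hf.1
  · rw [mellin_cpow_smul, mellin_comp_mul_left f _ (inv_pos.2 hr), ← sub_eq_add_neg, hf.2,
      ofReal_inv, inv_cpow _ _ (by rw [arg_ofReal_of_nonneg hr.le]; exact Real.pi_pos.ne),
      cpow_neg, inv_inv]

theorem exists_hasMellin_of_sub_cpow_isBigO {F : ℂ → ℂ} {μ C : ℂ} (hμ : 0 < μ.re)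
    (hF : DifferentiableOn ℂ F {w | 0 < w.re})
    (hO : (fun w ↦ F w - C * w ^ (-μ)) =O[rightHalfPlaneAtInfty] fun w ↦ ‖w‖ ^ (-(1 + μ.re))) :
    ∃ k : ℝ → ℂ, ContinuousOn k (Set.Ioo 0 1) ∧ (∀ x, 1 < x → k x = 0) ∧
      ∀ s : ℂ, 0 < s.re → HasMellin k s (F s) := by
  set g : ℂ → ℂ := fun w ↦ F w - C * w ^ (-μ) with g_def
  have hα : 1 < 1 + μ.re := lt_add_of_pos_right 1 hμ
  have hg : DifferentiableOn ℂ g {w | 0 < w.re} := hF.sub fun w hw ↦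
    ((differentiableAt_id.cpow_const (.inl hw)).const_mul C).differentiableWithinAt
  refine ⟨fun x ↦ C • logPowerKernel μ x + mellinInv 1 g x, ?_, fun x hx ↦ ?_, fun s hs ↦ ?_⟩
  · exact ((continuousOn_logPowerKernel μ).const_smul C).add ((continuousOn_mellinInv
      (verticalIntegrable_of_isBigO hα hg.continuousOn hO one_pos)).mono fun x hx ↦ hx.1)
  · beta_reduce
    rw [logPowerKernel_eq_zero hx.le, smul_zero, zero_add,
      mellinInv_eq_zero_of_isBigO hα hg hO one_pos hx]
  · have hmain := hasMellin_const_smul (hasMellin_logPowerKernel hμ hs).1 C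
    have hrem := hasMellin_mellinInv_of_isBigO hα hg hO one_pos hs
    have hadd := hasMellin_add hmain.1 hrem.1
    rwa [hmain.2, hrem.2, (hasMellin_logPowerKernel hμ hs).2, g_def, smul_eq_mul,
      add_sub_cancel] at hadd

variable {ι κ : Type*} [Fintype ι] [Fintype κ] {A : ι → ℝ} {a : ι → ℂ} {B : κ → ℝ} {b : κ → ℂ}

theorem exists_hasMellin_gammaQuotient {γ : ℝ} (hA : ∀ i, 0 < A i) (hB : ∀ j, 0 < B j)
    (hsum : ∑ i, A i = ∑ j, B j) (hμ : 0 < (gammaQuotientExponent a b).re)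
    (hγ : ∀ i, 0 ≤ A i * γ + (a i).re) :
    ∃ k : ℝ → ℂ, ContinuousOn k (Set.Ioo 0 (gammaQuotientScale A B)) ∧
      (∀ x, gammaQuotientScale A B < x → k x = 0) ∧
      ∀ s : ℂ, γ < s.re → HasMellin k s (gammaQuotient A a B b s) := by
  set ρ := gammaQuotientScale A B
  have hρ : 0 < ρ := gammaQuotientScale_pos hA hB
  have hρ₀ : (ρ : ℂ) ≠ 0 := mod_cast hρ.ne'
  obtain ⟨c, hc⟩ := hasExpAsymptotic_gammaQuotient hA hB hsum (fun i ↦ A i * γ + a i)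
    fun j ↦ B j * γ + b j
  simp only [← gammaQuotient_add, gammaQuotientExponent_mul_add hsum] at hc
  have hdiff : DifferentiableOn ℂ (fun w ↦ gammaQuotient A a B b (w + γ) * (ρ : ℂ) ^ (-w))
      {w | 0 < w.re} := fun w (hw : 0 < w.re) ↦ by
    refine DifferentiableAt.differentiableWithinAt (.mul ?_ (by fun_prop (disch := simp [hρ₀])))
    refine (differentiableAt_gammaQuotient fun i ↦ ?_).comp w (differentiableAt_id.add_const _)
    calc 0 < A i * w.re + (A i * γ + (a i).re) :=
        add_pos_of_pos_of_nonneg (mul_pos (hA i) hw) (hγ i)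
      _ = (A i * (w + γ) + a i).re := by simp [mul_add, add_assoc]
  obtain ⟨k, hk_cont, hk_zero, hk⟩ :=
    exists_hasMellin_of_sub_cpow_isBigO hμ hdiff hc.sub_cpow_isBigO
  refine ⟨fun x ↦ (x : ℂ) ^ (-γ : ℂ) • k (ρ⁻¹ * x), ?_, fun x hx ↦ ?_, fun s hs ↦ ?_⟩
  · refine ContinuousOn.smul (fun x hx ↦
      (continuousAt_ofReal_cpow_const x _ (.inr hx.1.ne')).continuousWithinAt)
      (hk_cont.comp (continuous_const_mul _).continuousOn fun x hx ↦ ?_)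
    exact ⟨mul_pos (inv_pos.2 hρ) hx.1, by rw [inv_mul_lt_one₀ hρ]; exact hx.2⟩
  · beta_reduce
    rw [hk_zero _ (by rwa [inv_mul_eq_div, one_lt_div hρ]), smul_zero]
  · have := hasMellin_cpow_smul_comp_inv_mul hρ (hk (s - γ) (by simpa using hs))
    simpa [sub_add_cancel, mul_left_comm, ← cpow_add _ _ hρ₀] using this

end InverseMellinGammaQuotient

lemma nonneg_mul_neg_iInf_div_add {ι : Type*} [Finite ι] {A a : ι → ℝ} (hA : ∀ i, 0 < A i) (i : ι) :
    0 ≤ A i * -(⨅ k, a k / A k) + a i := by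
  have hle : (⨅ k, a k / A k) * A i ≤ a i :=
    (le_div_iff₀ (hA i)).1 (ciInf_le (Set.finite_range _).bddBelow i)
  linarith

theorem stmt15_general {ι κ : Type*} [Fintype ι] [Fintype κ]
    {A : ι → ℝ} {B : κ → ℝ} {a : ι → ℂ} {b : κ → ℂ} (hA : ∀ i, 0 < A i) (hB : ∀ j, 0 < B j)
    (hsum : ∑ i, A i = ∑ j, B j) (hμ : 0 < (gammaQuotientExponent a b).re)
    {ρ : ℝ} (hρ : ρ = gammaQuotientScale A B) {γ : ℝ} (hγ : ∀ i, 0 ≤ A i * γ + (a i).re)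
    {c : ℝ} (hc : γ < c) {H : ℝ → ℂ}
    (hH : ∀ x ∈ Set.Ioo 0 ρ, Tendsto (fun R : ℝ ↦ (((2 * Real.pi)⁻¹ : ℝ) : ℂ) *
      ∫ t in -R..R, gammaQuotient A a B b (c + t * Complex.I) *
        (x : ℂ) ^ (-((c : ℂ) + t * Complex.I))) atTop (nhds (H x)))
    {s : ℂ} (hs : γ < s.re) :
    IntegrableOn (fun x ↦ H x * (x : ℂ) ^ (s - 1)) (Set.Ioo 0 ρ) ∧
      ∫ x in Set.Ioo 0 ρ, H x * (x : ℂ) ^ (s - 1) = gammaQuotient A a B b s := by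
  subst hρ
  obtain ⟨k, hk_cont, hk_zero, hk⟩ := exists_hasMellin_gammaQuotient hA hB hsum hμ hγ
  have hHk : ∀ x ∈ Set.Ioo 0 (gammaQuotientScale A B), H x = k x := fun x hx ↦ by
    refine eq_of_tendsto_intervalIntegral_mellin (hk c hc).1 hx.1
      (hk_cont.continuousAt (isOpen_Ioo.mem_nhds hx)) ?_
    have hmellin : ∀ t : ℝ, mellin k (c + t * Complex.I) =
        gammaQuotient A a B b (c + t * Complex.I) := fun t ↦ (hk _ (by simpa using hc)).2
    simpa only [hmellin, Complex.real_smul, smul_eq_mul, mul_comm (_ ^ (_ : ℂ))] using hH x hx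
  have hEq : Set.EqOn (fun x ↦ H x * (x : ℂ) ^ (s - 1)) (fun x ↦ (x : ℂ) ^ (s - 1) • k x)
      (Set.Ioo 0 (gammaQuotientScale A B)) := fun x hx ↦ by
    simp only [hHk x hx, smul_eq_mul, mul_comm]
  refine ⟨(integrableOn_congr_fun hEq measurableSet_Ioo).2
    ((hk s hs).1.mono_set Set.Ioo_subset_Ioi_self), ?_⟩
  rw [← (hk s hs).2, mellin, setIntegral_congr_fun measurableSet_Ioo hEq,
    ← integral_Ioc_eq_integral_Ioo]
  refine (setIntegral_eq_of_subset_of_forall_sdiff_eq_zero measurableSet_Ioi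
    Set.Ioc_subset_Ioi_self fun x hx ↦ ?_).symm
  rw [hk_zero x (not_le.1 fun hxρ ↦ hx.2 ⟨hx.1, hxρ⟩), smul_zero]

theorem stmt15 (p q : ℕ) (hp : 1 ≤ p) (hq : 1 ≤ q)
    (A : Fin p → ℝ) (B : Fin q → ℝ) (a : Fin p → ℝ) (b : Fin q → ℝ)
    (hA : ∀ k, 0 < A k) (hB : ∀ j, 0 < B j)
    (hsum : ∑ i, A i = ∑ j, B j)
    (hμ : 0 < (∑ j, b j) - (∑ k, a k) + ((p : ℝ) - (q : ℝ)) / 2)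
    (ρ : ℝ) (hρ : ρ = (∏ k, A k ^ A k) * ∏ j, B j ^ (-B j))
    (γ : ℝ) (hγ : γ = -(⨅ k, a k / A k))
    (c : ℝ) (hc : γ < c)
    (H : ℝ → ℝ)
    (hH : ∀ x, 0 < x → x ≠ ρ →
      Tendsto (fun R : ℝ => (((2 * Real.pi)⁻¹ : ℝ) : ℂ) *
        ∫ t in -R..R,
          (∏ k, Complex.Gamma ((A k : ℂ) * ((c : ℂ) + (t : ℂ) * Complex.I) + (a k : ℂ))) /
            (∏ j, Complex.Gamma ((B j : ℂ) * ((c : ℂ) + (t : ℂ) * Complex.I) + (b j : ℂ))) *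
            (x : ℂ) ^ (-((c : ℂ) + (t : ℂ) * Complex.I)))
        atTop (nhds ((H x : ℂ)))) :
    ∀ s : ℂ, γ < s.re →
      ∫ x in Set.Ioo (0 : ℝ) ρ, (H x : ℂ) * (x : ℂ) ^ (s - 1) =
        (∏ k, Complex.Gamma ((A k : ℂ) * s + (a k : ℂ))) /
          ∏ j, Complex.Gamma ((B j : ℂ) * s + (b j : ℂ)) := by
  intro s hs
  exact (stmt15_general hA hB hsum (a := fun k ↦ a k) (b := fun j ↦ b j)
    (by simpa [gammaQuotientExponent] using hμ) hρ (γ := γ)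
    (fun i ↦ hγ ▸ nonneg_mul_neg_iInf_div_add hA i) hc (H := fun x ↦ H x)
    (fun x hx ↦ hH x hx.1 hx.2.ne) hs).2
end

section
/- Let p, q ≥ 1, let A_1,…,A_p, B_1,…,B_q be strictly positive and a_1,…,a_p, b_1,…,b_q be nonnegative reals with μ = Σ_{j=1}^q b_j − Σ_{k=1}^p a_k + (p−q)/2 > 0, and set W(x) = ∏_{i=1}^p Γ(A_i x + a_i) / ∏_{j=1}^q Γ(B_j x + b_j), ρ = ∏_{k=1}^p A_k^{A_k} · ∏_{j=1}^q B_j^{−B_j}, γ = −min_{1≤k≤p}(a_k/A_k). For c > γ and 0 < u < ρ define H(u) = lim_{R→∞} (1/(2π)) ∫_{−R}^{R} [∏_{k=1}^p Γ(A_k(c+it)+a_k) / ∏_{j=1}^q Γ(B_j(c+it)+b_j)] · u^{−(c+it)} dt (a real number independent of c). If W is logarithmically completely monotonic on (0,∞), then W(x) = ∫_{log(1/ρ)}^∞ e^{−tx} H(e^{−t}) dt for all x > 0, and H(u) ≥ 0 for all u ∈ (0,ρ). -/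
/-
When `∑ A = ∑ B`, Stirling's formula with Binet's remainder reads `log W(x) = x log ρ - μ log x +
K + ∫ e^(-xt) r(t) dt` with a bounded kernel `r`. Since `x ^ (-μ)` is the Laplace transform of
`t ^ (μ - 1) / Γ(μ)` for `μ > 0`, expanding the exponential of the last term turns this into
`W(x) = ρ ^ x ∫ e^(-xt) f(t) dt` with an explicit series `f` of convolutions.

Complete monotonicity of `-(log W)'` forces `∑ A = ∑ B`, as otherwise the term
`(∑ B - ∑ A) log x` makes it unbounded or negative. It then says that the Laplace transform of
`Q(t) = μ + t r(t)` has derivatives of alternating sign, whence `Q ≥ 0` by Post's inversion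
argument. Comparing the largest exponentials in `Q` as `t → ∞` gives
`min b / B ≥ min a / A`, so that a shift of `x` extends the representation to `Re z > γ`.

Differentiating `ρ ^ (-x) W(x)` shows that `t f(t)` is the convolution of `f` and `Q`. By the
Leibniz rule all transforms of `t ^ n f(t)` are nonnegative, and Post's argument gives `f ≥ 0`.
Finally, the inversion integral defining `H` evaluates to `H(ρ e^(-s)) = f(s)`.
-/

open MeasureTheory Filter

/-- A function `f` is completely monotonic on `(0,∞)` if it is infinitely
differentiable there and `(-1)^n f^(n)(x) ≥ 0` for all `n ≥ 0` and `x > 0`. -/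
def CompletelyMonotonicOn (f : ℝ → ℝ) : Prop :=
  (∀ x > (0 : ℝ), ContDiffAt ℝ (⊤ : ℕ∞) f x) ∧
    ∀ (n : ℕ), ∀ x > (0 : ℝ), 0 ≤ (-1 : ℝ) ^ n * iteratedDeriv n f x

/-- A positive function `f` on `(0,∞)` is logarithmically completely monotonic
if `-(log f)'` is completely monotonic on `(0,∞)`. -/
def LogCompletelyMonotonic (f : ℝ → ℝ) : Prop :=
  (∀ x > (0 : ℝ), 0 < f x) ∧
    CompletelyMonotonicOn (fun x => -deriv (fun y => Real.log (f y)) x)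

section LaplaceTransform

open Set Topology

/-- The Laplace transform of a function on the half-line `(0, ∞)`. -/
noncomputable def laplace (φ : ℝ → ℝ) (x : ℝ) : ℝ :=
  ∫ t in Ioi 0, Real.exp (-(x * t)) * φ t

/-- The Laplace transform of a real function on `(0, ∞)`, at a complex argument. -/
noncomputable def complexLaplace (φ : ℝ → ℝ) (z : ℂ) : ℂ :=
  ∫ t in Ioi (0 : ℝ), Complex.exp (-(z * t)) * (φ t : ℂ)

/-- Absolute convergence of the Laplace integral of `φ` at the real abscissa `x`. -/
def LaplaceConvergent (φ : ℝ → ℝ) (x : ℝ) : Prop :=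
  IntegrableOn (fun t => Real.exp (-(x * t)) * φ t) (Ioi 0)

variable {φ ψ : ℝ → ℝ} {x y : ℝ}

theorem laplaceConvergent_one (hx : 0 < x) : LaplaceConvergent (fun _ => 1) x := by
  simpa [LaplaceConvergent] using integrableOn_exp_mul_Ioi (neg_neg_of_pos hx) 0

theorem laplace_congr (h : EqOn φ ψ (Ioi 0)) : laplace φ = laplace ψ := by
  funext x
  exact setIntegral_congr_fun measurableSet_Ioi fun t ht => by simp only [h ht]

theorem laplace_const_mul (c : ℝ) (φ : ℝ → ℝ) (x : ℝ) :
    laplace (fun t => c * φ t) x = c * laplace φ x := by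
  simp only [laplace, ← integral_const_mul, mul_left_comm]

theorem laplace_exp_neg {a : ℝ} (h : 0 < x + a) :
    laplace (fun t => Real.exp (-(a * t))) x = 1 / (x + a) := by
  have hint := integral_exp_mul_Ioi (neg_neg_of_pos h) 0
  rw [mul_zero, Real.exp_zero, neg_div_neg_eq] at hint
  rw [laplace, ← hint]
  congr with t
  rw [← Real.exp_add]
  ring_nf

theorem laplace_one (hx : 0 < x) : laplace (fun _ => 1) x = 1 / x := by
  simpa using laplace_exp_neg (a := 0) (by simpa using hx)

theorem laplace_nonneg (h : ∀ t > 0, 0 ≤ φ t) (x : ℝ) : 0 ≤ laplace φ x :=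
  setIntegral_nonneg measurableSet_Ioi fun t ht => mul_nonneg (Real.exp_pos _).le (h t ht)

theorem complexLaplace_ofReal (φ : ℝ → ℝ) (x : ℝ) :
    complexLaplace φ (x : ℂ) = (laplace φ x : ℂ) := by
  rw [laplace, complexLaplace, ← integral_complex_ofReal]
  congr with t
  push_cast
  rfl

theorem norm_exp_neg_mul_ofReal (z : ℂ) (t : ℝ) :
    ‖Complex.exp (-(z * t))‖ = Real.exp (-(z.re * t)) := by
  simp [Complex.norm_exp]

namespace LaplaceConvergent

theorem congr (h : LaplaceConvergent φ x) (hφψ : EqOn φ ψ (Ioi 0)) : LaplaceConvergent ψ x :=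
  h.congr_fun (fun t ht => by simp only [hφψ ht]) measurableSet_Ioi

theorem const_mul (h : LaplaceConvergent φ x) (c : ℝ) :
    LaplaceConvergent (fun t => c * φ t) x := by
  unfold LaplaceConvergent at h ⊢
  simp only [mul_left_comm _ c]
  exact h.const_mul c

theorem add (h : LaplaceConvergent φ x) (h' : LaplaceConvergent ψ x) :
    LaplaceConvergent (fun t => φ t + ψ t) x := by
  unfold LaplaceConvergent at h h' ⊢
  simp only [mul_add]
  exact h.add h'

theorem sub (h : LaplaceConvergent φ x) (h' : LaplaceConvergent ψ x) :
    LaplaceConvergent (fun t => φ t - ψ t) x := by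
  unfold LaplaceConvergent at h h' ⊢
  simp only [mul_sub]
  exact h.sub h'

theorem sum {ι : Type*} [Fintype ι] {f : ι → ℝ → ℝ} (h : ∀ i, LaplaceConvergent (f i) x) :
    LaplaceConvergent (fun t => ∑ i, f i t) x := by
  unfold LaplaceConvergent at h ⊢
  simp only [Finset.mul_sum]
  exact integrable_finsetSum _ fun i _ => h i

theorem of_bounded {M : ℝ} (hφ : ContinuousOn φ (Ioi 0)) (hM : ∀ t > 0, |φ t| ≤ M)
    (hx : 0 < x) : LaplaceConvergent φ x := by
  refine (Integrable.mul_bdd (c := M) (laplaceConvergent_one hx)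
    (hφ.aestronglyMeasurable measurableSet_Ioi)
    (ae_restrict_of_forall_mem measurableSet_Ioi hM)).congr (Eventually.of_forall fun t => ?_)
  simp only [mul_one]

theorem aestronglyMeasurable (h : LaplaceConvergent φ x) :
    AEStronglyMeasurable φ (volume.restrict (Ioi 0)) := by
  have hexp : Continuous fun t : ℝ => Real.exp (x * t) := by fun_prop
  refine (hexp.aestronglyMeasurable.mul h.1).congr (Eventually.of_forall fun t => ?_)
  simp [← mul_assoc, ← Real.exp_add]

theorem mul_of_bound {c : ℝ} {g : ℝ → ℝ} (h : LaplaceConvergent φ y) (hg : Continuous g)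
    (hc : ∀ t > 0, |Real.exp (-((x - y) * t)) * g t| ≤ c) :
    LaplaceConvergent (fun t => g t * φ t) x := by
  have hm : Continuous fun t => Real.exp (-((x - y) * t)) * g t := by fun_prop
  refine (Integrable.bdd_mul h hm.aestronglyMeasurable
    (ae_restrict_of_forall_mem measurableSet_Ioi hc)).congr (Eventually.of_forall fun t => ?_)
  have hexp : Real.exp (-((x - y) * t)) * Real.exp (-(y * t)) = Real.exp (-(x * t)) := by
    rw [← Real.exp_add]
    ring_nf
  simp only [← hexp]
  ring

theorem mono (h : LaplaceConvergent φ y) (hyx : y ≤ x) : LaplaceConvergent φ x := by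
  simpa using h.mul_of_bound (g := fun _ => 1) (c := 1) continuous_const fun t ht => by
    simpa using mul_nonneg (sub_nonneg.2 hyx) (le_of_lt ht)

theorem id_mul (h : LaplaceConvergent φ y) (hyx : y < x) :
    LaplaceConvergent (fun t => t * φ t) x := by
  refine h.mul_of_bound (g := fun t => t) (c := (x - y)⁻¹) continuous_id fun t ht => ?_
  have hδ : 0 < x - y := sub_pos.2 hyx
  rw [abs_mul, Real.abs_exp, abs_of_pos ht, Real.exp_neg, inv_mul_le_iff₀ (Real.exp_pos _),
    ← div_eq_mul_inv, le_div_iff₀ hδ]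
  linarith [Real.add_one_le_exp ((x - y) * t)]

theorem pow_mul (h : LaplaceConvergent φ y) (hyx : y < x) (n : ℕ) :
    LaplaceConvergent (fun t => t ^ n * φ t) x := by
  induction n generalizing x with
  | zero => simpa using h.mono hyx.le
  | succ n ih =>
    obtain ⟨w, hyw, hwx⟩ := exists_between hyx
    exact ((ih hyw).id_mul hwx).congr fun t _ => by ring

theorem laplace_add (h : LaplaceConvergent φ x) (h' : LaplaceConvergent ψ x) :
    laplace (fun t => φ t + ψ t) x = laplace φ x + laplace ψ x := by
  simp only [laplace, mul_add]
  exact integral_add h h'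

theorem laplace_sub (h : LaplaceConvergent φ x) (h' : LaplaceConvergent ψ x) :
    laplace (fun t => φ t - ψ t) x = laplace φ x - laplace ψ x := by
  simp only [laplace, mul_sub]
  exact integral_sub h h'

theorem laplace_sum {ι : Type*} [Fintype ι] {f : ι → ℝ → ℝ}
    (h : ∀ i, LaplaceConvergent (f i) x) :
    laplace (fun t => ∑ i, f i t) x = ∑ i, laplace (f i) x := by
  simp only [laplace, Finset.mul_sum]
  exact integral_finsetSum _ fun i _ => h i

theorem hasDerivAt_complexLaplace {z : ℂ} (h : LaplaceConvergent φ y) (hz : y < z.re) :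
    HasDerivAt (complexLaplace φ) (-complexLaplace (fun t => t * φ t) z) z := by
  obtain ⟨w, hyw, hwz⟩ := exists_between hz
  have hφ : AEStronglyMeasurable (fun t => (φ t : ℂ)) (volume.restrict (Ioi 0)) :=
    Complex.continuous_ofReal.comp_aestronglyMeasurable h.aestronglyMeasurable
  have hexp (ζ : ℂ) : AEStronglyMeasurable (fun t : ℝ => Complex.exp (-(ζ * t)))
      (volume.restrict (Ioi 0)) := Continuous.aestronglyMeasurable (by fun_prop)
  have hderiv := (hasDerivAt_integral_of_dominated_loc_of_deriv_le
    (F := fun ζ t => Complex.exp (-(ζ * t)) * (φ t : ℂ))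
    (F' := fun ζ t => Complex.exp (-(ζ * t)) * (-(t : ℂ) * φ t))
    (bound := fun t => ‖Real.exp (-(w * t)) * (t * φ t)‖)
    ((isOpen_lt continuous_const Complex.continuous_re).mem_nhds hwz)
    (Eventually.of_forall fun ζ => (hexp ζ).mul hφ) ?_ ((hexp z).mul
      ((Continuous.aestronglyMeasurable (by fun_prop)).mul hφ)) ?_ (h.id_mul hyw).norm ?_).2
  · refine hderiv.congr_deriv ?_
    rw [complexLaplace, ← integral_neg]
    congr with t
    push_cast
    ring
  · refine (h.mono hz.le).norm.mono' ((hexp z).mul hφ) (Eventually.of_forall fun t => ?_)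
    rw [norm_mul, norm_mul, norm_exp_neg_mul_ofReal, Real.norm_eq_abs, Real.abs_exp,
      Complex.norm_real]
  · refine ae_restrict_of_forall_mem measurableSet_Ioi fun t (ht : 0 < t) ζ (hζ : w < ζ.re) => ?_
    rw [norm_mul, norm_mul, norm_mul, norm_mul, norm_exp_neg_mul_ofReal, norm_neg,
      Complex.norm_real, Complex.norm_real, Real.norm_eq_abs (Real.exp _), Real.abs_exp]
    gcongr
  · refine Eventually.of_forall fun t ζ _ => ?_
    have hlin : HasDerivAt (fun ζ : ℂ => -(ζ * t)) (-(t : ℂ)) ζ := by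
      simpa using ((hasDerivAt_id ζ).mul_const (t : ℂ)).fun_neg
    exact (hlin.cexp.mul_const (φ t : ℂ)).congr_deriv (by ring)

theorem analyticAt_complexLaplace {z : ℂ} (h : LaplaceConvergent φ y) (hz : y < z.re) :
    AnalyticAt ℂ (complexLaplace φ) z :=
  DifferentiableOn.analyticAt (s := {ζ | y < ζ.re})
    (fun _ hζ => (h.hasDerivAt_complexLaplace hζ).differentiableAt.differentiableWithinAt)
    ((isOpen_lt continuous_const Complex.continuous_re).mem_nhds hz)

theorem hasDerivAt_laplace (h : LaplaceConvergent φ y) (hyx : y < x) :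
    HasDerivAt (laplace φ) (-laplace (fun t => t * φ t) x) x := by
  have hderiv := (h.hasDerivAt_complexLaplace (z := x) (by simpa using hyx)).real_of_complex
  simpa only [complexLaplace_ofReal, ← Complex.ofReal_neg, Complex.ofReal_re] using hderiv

theorem analyticAt_laplace (h : LaplaceConvergent φ y) (hyx : y < x) :
    AnalyticAt ℝ (laplace φ) x := by
  simpa only [complexLaplace_ofReal, Complex.ofReal_re] using
    (h.analyticAt_complexLaplace (z := x) (by simpa using hyx)).re_ofReal

theorem iteratedDeriv_laplace (h : LaplaceConvergent φ y) (hyx : y < x) (n : ℕ) :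
    iteratedDeriv n (laplace φ) x = (-1) ^ n * laplace (fun t => t ^ n * φ t) x := by
  induction n generalizing x with
  | zero => simp
  | succ n ih =>
    obtain ⟨w, hyw, hwx⟩ := exists_between hyx
    have hev : iteratedDeriv n (laplace φ) =ᶠ[𝓝 x]
        fun v => (-1) ^ n * laplace (fun t => t ^ n * φ t) v := by
      filter_upwards [Ioi_mem_nhds hyx] with v hv using ih hv
    rw [iteratedDeriv_succ, hev.deriv_eq,
      (((h.pow_mul hyw n).hasDerivAt_laplace hwx).const_mul _).deriv]
    simp only [← mul_assoc, ← pow_succ', pow_succ (-1 : ℝ)]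
    ring

theorem tendsto_laplace_atTop (h : LaplaceConvergent φ y) :
    Tendsto (laplace φ) atTop (𝓝 0) := by
  rw [← integral_zero ℝ ℝ (μ := volume.restrict (Ioi 0))]
  refine tendsto_integral_filter_of_dominated_convergence
    (fun t => ‖Real.exp (-(y * t)) * φ t‖) ?_ ?_ h.norm ?_
  · filter_upwards [eventually_ge_atTop y] with x hx using (h.mono hx).1
  · filter_upwards [eventually_ge_atTop y] with x hx
    refine ae_restrict_of_forall_mem measurableSet_Ioi fun t (ht : 0 < t) => ?_
    simp only [norm_mul, Real.norm_eq_abs, Real.abs_exp]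
    gcongr
  · refine ae_restrict_of_forall_mem measurableSet_Ioi fun t (ht : 0 < t) => ?_
    have hexp : Tendsto (fun x : ℝ => Real.exp (-(x * t))) atTop (𝓝 0) :=
      Real.tendsto_exp_neg_atTop_nhds_zero.comp (tendsto_id.atTop_mul_const ht)
    simpa using hexp.mul_const (φ t)

end LaplaceConvergent

end LaplaceTransform

section PostWidder

open Set Topology

theorem exists_integral_pow_mul_neg {α : Type*} [MeasurableSpace α] {m : Measure α}
    {w ψ : α → ℝ} {S : Set α} {θ θ' η : ℝ} (hw : 0 ≤ᵐ[m] w)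
    (hint : ∀ n : ℕ, Integrable (fun t => w t ^ n * ψ t) m)
    (hS : MeasurableSet S) (hS₀ : m S ≠ 0) (hS' : m S ≠ ⊤)
    (hθ : 0 < θ) (hθθ' : θ < θ') (hη : 0 < η)
    (hwS : ∀ t ∈ S, θ' ≤ w t) (hψS : ∀ t ∈ S, ψ t ≤ -η)
    (hout : ∀ᵐ t ∂m, ψ t ≤ 0 ∨ w t ≤ θ) :
    ∃ n : ℕ, ∫ t, w t ^ n * ψ t ∂m < 0 := by
  have hψ : Integrable ψ m := by simpa using hint 0
  have hθ' : 0 < θ' := hθ.trans hθθ'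
  have hmS : 0 < η * m.real S := mul_pos hη (ENNReal.toReal_pos hS₀ hS')
  obtain ⟨n, hn⟩ := ((tendsto_pow_atTop_atTop_of_one_lt
    ((one_lt_div hθ).2 hθθ')).eventually_gt_atTop ((∫ t, |ψ t| ∂m) / (η * m.real S))).exists
  have hind : Integrable (S.indicator fun _ => θ' ^ n * -η) m :=
    (integrable_indicator_iff hS).2 (integrableOn_const hS')
  have hbound : ∀ᵐ t ∂m, w t ^ n * ψ t ≤ S.indicator (fun _ => θ' ^ n * -η) t + θ ^ n * |ψ t| := by
    filter_upwards [hw, hout] with t hwt ht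
    by_cases htS : t ∈ S
    · rw [indicator_of_mem htS]
      have hmain : w t ^ n * ψ t ≤ θ' ^ n * -η :=
        mul_le_mul_of_nonpos_of_nonneg' (pow_le_pow_left₀ hθ'.le (hwS t htS) n) (hψS t htS)
          (pow_nonneg hwt n) (neg_nonpos.2 hη.le)
      linarith [mul_nonneg (pow_nonneg hθ.le n) (abs_nonneg (ψ t))]
    · rw [indicator_of_notMem htS, zero_add]
      rcases ht with hψt | hwθ
      · exact (mul_nonpos_of_nonneg_of_nonpos (pow_nonneg hwt n) hψt).trans (by positivity)
      · exact (mul_le_mul_of_nonneg_left (le_abs_self _) (pow_nonneg hwt n)).trans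
          (mul_le_mul_of_nonneg_right (pow_le_pow_left₀ hwt hwθ n) (abs_nonneg _))
  refine ⟨n, (integral_mono_ae (hint n) (hind.add (hψ.abs.const_mul _)) hbound).trans_lt ?_⟩
  rw [integral_add' hind (hψ.abs.const_mul _), integral_indicator hS, setIntegral_const,
    integral_const_mul, smul_eq_mul]
  rw [div_lt_iff₀ hmS, div_pow, div_mul_eq_mul_div, lt_div_iff₀ (pow_pos hθ n)] at hn
  linarith

theorem hasDerivAt_mul_exp_neg_div (s t : ℝ) :
    HasDerivAt (fun t : ℝ => t * Real.exp (-(t / s))) (Real.exp (-(t / s)) * (1 - t / s)) t := by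
  have hlin : HasDerivAt (fun t : ℝ => -(t / s)) (-(1 / s)) t :=
    ((hasDerivAt_id t).div_const s).neg
  exact ((hasDerivAt_id' t).mul hlin.exp).congr_deriv (by ring)

theorem strictMonoOn_mul_exp_neg_div {s : ℝ} (hs : 0 < s) :
    StrictMonoOn (fun t : ℝ => t * Real.exp (-(t / s))) (Iic s) := by
  refine strictMonoOn_of_deriv_pos (convex_Iic s) (by fun_prop) fun t ht => ?_
  rw [interior_Iic, mem_Iio] at ht
  rw [(hasDerivAt_mul_exp_neg_div s t).deriv]
  exact mul_pos (Real.exp_pos _) (sub_pos.2 ((div_lt_one hs).2 ht))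

theorem strictAntiOn_mul_exp_neg_div {s : ℝ} (hs : 0 < s) :
    StrictAntiOn (fun t : ℝ => t * Real.exp (-(t / s))) (Ici s) := by
  refine strictAntiOn_of_deriv_neg (convex_Ici s) (by fun_prop) fun t ht => ?_
  rw [interior_Ici, mem_Ioi] at ht
  rw [(hasDerivAt_mul_exp_neg_div s t).deriv]
  exact mul_neg_of_pos_of_neg (Real.exp_pos _) (sub_neg.2 ((one_lt_div hs).2 ht))

theorem exists_forall_mul_exp_neg_div_le {s δ : ℝ} (hδ : 0 < δ) (hδs : δ < s) :
    ∃ θ > 0, θ < s * Real.exp (-(s / s)) ∧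
      ∀ t, δ ≤ |t - s| → t * Real.exp (-(t / s)) ≤ θ := by
  have hs : 0 < s := hδ.trans hδs
  refine ⟨max ((s - δ) * Real.exp (-((s - δ) / s))) ((s + δ) * Real.exp (-((s + δ) / s))),
    lt_max_of_lt_right (by positivity), max_lt ?_ ?_, fun t ht => ?_⟩
  · exact strictMonoOn_mul_exp_neg_div hs (sub_le_self s hδ.le) self_mem_Iic (sub_lt_self s hδ)
  · exact strictAntiOn_mul_exp_neg_div hs self_mem_Ici (le_add_of_nonneg_right hδ.le)
      (lt_add_of_pos_right s hδ)
  · rcases le_abs.1 ht with ht | ht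
    · exact le_max_of_le_right ((strictAntiOn_mul_exp_neg_div hs).antitoneOn
        (mem_Ici.2 (by linarith)) (mem_Ici.2 (by linarith)) (by linarith))
    · exact le_max_of_le_left ((strictMonoOn_mul_exp_neg_div hs).monotoneOn
        (mem_Iic.2 (by linarith)) (mem_Iic.2 (by linarith)) (by linarith))

theorem exists_isOpen_mul_exp_neg_div_peak {φ : ℝ → ℝ} {s : ℝ} (hφ : ContinuousAt φ s) (hs : 0 < s)
    (hneg : φ s < 0) :
    ∃ S : Set ℝ, IsOpen S ∧ s ∈ S ∧ S ⊆ Ioo 0 (2 * s) ∧ ∃ θ θ' : ℝ, 0 < θ ∧ θ < θ' ∧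
      (∀ t ∈ S, θ' ≤ t * Real.exp (-(t / s)) ∧ φ t ≤ φ s / 2) ∧
      ∀ t, φ t ≤ 0 ∨ t * Real.exp (-(t / s)) ≤ θ := by
  have hnear : ∀ᶠ t in 𝓝 s, φ t < φ s / 2 ∧ t ∈ Ioo 0 (2 * s) :=
    (hφ.eventually_lt_const (by linarith)).and (Ioo_mem_nhds hs (by linarith))
  obtain ⟨δ, hδ, hball⟩ := Metric.nhds_basis_closedBall.eventually_iff.1 hnear
  have hδs : δ < s := by
    simpa using (hball (x := s - δ) (by simp [abs_of_pos hδ])).2.1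
  obtain ⟨θ, hθ, hθs, hfar⟩ := exists_forall_mul_exp_neg_div_le hδ hδs
  obtain ⟨θ', hθθ', hθ's⟩ := exists_between hθs
  have hS : ∀ t ∈ Metric.ball s δ ∩ {t | θ' < t * Real.exp (-(t / s))},
      φ t < φ s / 2 ∧ t ∈ Ioo 0 (2 * s) := fun t ht => hball (Metric.ball_subset_closedBall ht.1)
  refine ⟨Metric.ball s δ ∩ {t | θ' < t * Real.exp (-(t / s))},
    Metric.isOpen_ball.inter (isOpen_lt continuous_const (by fun_prop)),
    ⟨Metric.mem_ball_self hδ, hθ's⟩, fun t ht => (hS t ht).2, θ, θ', hθ, hθθ',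
    fun t ht => ⟨ht.2.le, (hS t ht).1.le⟩, fun t => ?_⟩
  rcases le_total |t - s| δ with htδ | htδ
  · exact Or.inl (by linarith [(hball (x := t) htδ).1])
  · exact Or.inr (hfar t htδ)

/- The `n`-th derivatives at `n / s` test `φ` against the powers of the weight `t * exp (-(t / s))`,
which concentrate at its maximum `t = s`. -/
theorem nonneg_of_laplace_pow_mul_nonneg {φ : ℝ → ℝ} (hφ : ContinuousOn φ (Ioi 0))
    (hconv : ∀ x > 0, LaplaceConvergent φ x)
    (hpos : ∀ n : ℕ, 0 < n → ∀ x > 0, 0 ≤ laplace (fun t => t ^ n * φ t) x)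
    {s : ℝ} (hs : 0 < s) : 0 ≤ φ s := by
  by_contra! hneg
  obtain ⟨S, hSopen, hsS, hSsub, θ, θ', hθ, hθθ', hpeak, hout⟩ :=
    exists_isOpen_mul_exp_neg_div_peak (hφ.continuousAt (Ioi_mem_nhds hs)) hs hneg
  set w : ℝ → ℝ := fun t => t * Real.exp (-(t / s))
  have hw₀ : ∀ t > 0, 0 ≤ w t := fun t ht => mul_nonneg (le_of_lt ht) (Real.exp_pos _).le
  have hpow (n : ℕ) (t : ℝ) : w t ^ n * (w t * φ t) =
      Real.exp (-((n + 1 : ℕ) / s * t)) * (t ^ (n + 1) * φ t) := by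
    rw [show -((n + 1 : ℕ) / s * t) = (n + 1 : ℕ) * -(t / s) by ring, Real.exp_nat_mul]
    ring
  have hx (n : ℕ) : 0 < ((n + 1 : ℕ) : ℝ) / s := by positivity
  have hvol : volume.restrict (Ioi 0) S = volume S := by
    rw [Measure.restrict_apply hSopen.measurableSet,
      inter_eq_left.2 (hSsub.trans Ioo_subset_Ioi_self)]
  have hψS : ∀ t ∈ S, w t * φ t ≤ -(θ' * -(φ s / 2)) := fun t ht => by
    obtain ⟨hwt, hφt⟩ := hpeak t ht
    nlinarith
  have hout' : ∀ t > 0, w t * φ t ≤ 0 ∨ w t ≤ θ := fun t ht =>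
    (hout t).imp_left (mul_nonpos_of_nonneg_of_nonpos (hw₀ t ht))
  have hint (n : ℕ) : IntegrableOn (fun t => w t ^ n * (w t * φ t)) (Ioi 0) := by
    simp only [hpow]
    exact (hconv _ (half_pos (hx n))).pow_mul (half_lt_self (hx n)) _
  obtain ⟨n, hn⟩ := exists_integral_pow_mul_neg
    (ae_restrict_of_forall_mem measurableSet_Ioi hw₀) hint hSopen.measurableSet
    (hvol ▸ (hSopen.measure_pos volume ⟨s, hsS⟩).ne')
    (hvol ▸ ((measure_mono hSsub).trans_lt measure_Ioo_lt_top).ne)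
    hθ hθθ' (mul_pos (hθ.trans hθθ') (by linarith)) (fun t ht => (hpeak t ht).1) hψS
    (ae_restrict_of_forall_mem measurableSet_Ioi hout')
  simp only [hpow] at hn
  exact hn.not_ge (hpos (n + 1) n.succ_pos _ (hx n))

end PostWidder

section Binet

open Set Topology

/-- The kernel of Binet's first formula for `log Γ(x + a)`: the remainder
`log Γ(x + a) - ((x + a - 1 / 2) log x - x + log (2 π) / 2)` is its Laplace transform. -/
noncomputable def binetKernel (a t : ℝ) : ℝ :=
  (Real.exp (-(a * t)) / (1 - Real.exp (-t)) - 1 / t - 1 / 2 + a) / t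

theorem one_sub_exp_neg_pos {t : ℝ} (ht : 0 < t) : 0 < 1 - Real.exp (-t) :=
  sub_pos.2 (Real.exp_lt_one_iff.2 (neg_neg_of_pos ht))

theorem div_one_add_le_one_sub_exp_neg {t : ℝ} (ht : 0 ≤ t) :
    t / (1 + t) ≤ 1 - Real.exp (-t) := by
  have hexp : Real.exp (-t) ≤ (1 + t)⁻¹ := by
    rw [Real.exp_neg]
    exact inv_anti₀ (by linarith) (by linarith [Real.add_one_le_exp t])
  have hdiv : t / (1 + t) = 1 - (1 + t)⁻¹ := by
    field_simp
    ring
  linarith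

theorem abs_exp_neg_sub_one_add_le {x : ℝ} (hx : 0 ≤ x) : |Real.exp (-x) - 1 + x| ≤ x ^ 2 := by
  rw [abs_of_nonneg (by linarith [Real.add_one_le_exp (-x)])]
  rcases le_total x 1 with h | h
  · have hbound := Real.abs_exp_sub_one_sub_id_le (x := -x) (by rwa [abs_neg, abs_of_nonneg hx])
    linarith [le_abs_self (Real.exp (-x) - 1 - -x)]
  · nlinarith [Real.exp_le_one_iff.2 (neg_nonpos.2 hx)]

theorem abs_exp_neg_sub_one_add_sub_le {t : ℝ} (ht : 0 ≤ t) (ht1 : t ≤ 1) :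
    |Real.exp (-t) - 1 + t - t ^ 2 / 2| ≤ t ^ 3 := by
  have hbound := Real.exp_bound (x := -t) (by rwa [abs_neg, abs_of_nonneg ht]) (n := 3)
    (by norm_num)
  norm_num [Finset.sum_range_succ, Nat.factorial, abs_of_nonneg ht] at hbound
  rw [show Real.exp (-t) - 1 + t - t ^ 2 / 2 = Real.exp (-t) - (1 + -t + t ^ 2 / 2) by ring]
  linarith [pow_nonneg ht 3]

theorem continuousOn_binetKernel (a : ℝ) : ContinuousOn (binetKernel a) (Ioi 0) := by
  unfold binetKernel
  fun_prop (disch := first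
    | exact fun t ht => (ne_of_gt ht) | exact fun t ht => (one_sub_exp_neg_pos ht).ne')

theorem abs_binetKernel_le_of_le_one {a t : ℝ} (ha : 0 ≤ a) (ht : 0 < t) (ht1 : t ≤ 1) :
    |binetKernel a t| ≤ 2 * (a ^ 2 + (3 / 2 + a) + (1 / 2 + a) / 2) := by
  have hE := one_sub_exp_neg_pos ht
  have hden : t / 2 ≤ 1 - Real.exp (-t) := le_trans
    (div_le_div_of_nonneg_left ht.le (by linarith) (by linarith))
    (div_one_add_le_one_sub_exp_neg ht.le)
  have hnum : binetKernel a t = (t * (Real.exp (-(a * t)) - 1 + a * t)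
      + (Real.exp (-t) - 1 + t - t ^ 2 / 2) * (1 + (1 / 2 - a) * t) + (1 / 2 - a) / 2 * t ^ 3)
      / (t ^ 2 * (1 - Real.exp (-t))) := by
    unfold binetKernel
    have := hE.ne'
    field_simp
    ring
  have hlin : |1 + (1 / 2 - a) * t| ≤ 3 / 2 + a := by
    rw [abs_le]
    constructor <;> nlinarith
  have hconst : |(1 / 2 - a) / 2| ≤ (1 / 2 + a) / 2 := by
    rw [abs_le]
    constructor <;> linarith
  rw [hnum, abs_div, abs_of_pos (a := t ^ 2 * (1 - Real.exp (-t))) (by positivity),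
    div_le_iff₀ (by positivity)]
  calc _ ≤ |t * (Real.exp (-(a * t)) - 1 + a * t)|
        + |(Real.exp (-t) - 1 + t - t ^ 2 / 2) * (1 + (1 / 2 - a) * t)|
        + |(1 / 2 - a) / 2 * t ^ 3| := abs_add_three _ _ _
    _ ≤ t * (a * t) ^ 2 + t ^ 3 * (3 / 2 + a) + (1 / 2 + a) / 2 * t ^ 3 := by
        rw [abs_mul, abs_mul, abs_mul, abs_of_pos ht, abs_of_pos (pow_pos ht 3)]
        gcongr
        · exact abs_exp_neg_sub_one_add_le (by positivity)
        · exact abs_exp_neg_sub_one_add_sub_le ht.le ht1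
    _ = 2 * (a ^ 2 + (3 / 2 + a) + (1 / 2 + a) / 2) * (t ^ 2 * (t / 2)) := by ring
    _ ≤ _ := by gcongr

theorem abs_binetKernel_le_of_one_le {a t : ℝ} (ha : 0 ≤ a) (ht : 1 ≤ t) :
    |binetKernel a t| ≤ 7 / 2 + a := by
  have ht₀ : 0 < t := by linarith
  have hden : 1 / 2 ≤ 1 - Real.exp (-t) := le_trans
    (by rw [div_le_div_iff₀] <;> linarith) (div_one_add_le_one_sub_exp_neg ht₀.le)
  have hquot : Real.exp (-(a * t)) / (1 - Real.exp (-t)) ≤ 2 := by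
    rw [div_le_iff₀ (by linarith)]
    linarith [Real.exp_le_one_iff.2 (neg_nonpos.2 (mul_nonneg ha ht₀.le))]
  have hquot₀ : 0 ≤ Real.exp (-(a * t)) / (1 - Real.exp (-t)) :=
    div_nonneg (Real.exp_pos _).le (by linarith)
  have hinv : 1 / t ≤ 1 := (div_le_one ht₀).2 ht
  have hinv₀ : 0 < 1 / t := by positivity
  have hnum : |Real.exp (-(a * t)) / (1 - Real.exp (-t)) - 1 / t - 1 / 2 + a| ≤ 7 / 2 + a := by
    rw [abs_le]
    constructor <;> linarith
  rw [binetKernel, abs_div, abs_of_pos ht₀, div_le_iff₀ ht₀]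
  nlinarith

theorem exists_abs_binetKernel_le {a : ℝ} (ha : 0 ≤ a) : ∃ M, ∀ t > 0, |binetKernel a t| ≤ M :=
  ⟨_, fun t ht => (le_total t 1).elim
    (fun h => (abs_binetKernel_le_of_le_one ha ht h).trans (le_max_left _ _))
    (fun h => (abs_binetKernel_le_of_one_le ha h).trans (le_max_right _ _))⟩

theorem laplaceConvergent_binetKernel {a x : ℝ} (ha : 0 ≤ a) (hx : 0 < x) :
    LaplaceConvergent (binetKernel a) x :=
  let ⟨_, hM⟩ := exists_abs_binetKernel_le ha
  .of_bounded (continuousOn_binetKernel a) hM hx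

theorem eq_of_hasDerivAt_of_tendsto_atTop {F G F' : ℝ → ℝ} {c l x : ℝ}
    (hF : ∀ y > c, HasDerivAt F (F' y) y) (hG : ∀ y > c, HasDerivAt G (F' y) y)
    (hF_lim : Tendsto F atTop (𝓝 l)) (hG_lim : Tendsto G atTop (𝓝 l)) (hx : c < x) :
    F x = G x := by
  obtain ⟨k, hk⟩ := isOpen_Ioi.exists_is_const_of_deriv_eq_zero isPreconnected_Ioi
    (f := fun y => F y - G y) (s := Ioi c)
    (fun y hy => ((hF y hy).fun_sub (hG y hy)).differentiableAt.differentiableWithinAt)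
    (fun y hy => by simpa using ((hF y hy).fun_sub (hG y hy)).deriv)
  have hlim : Tendsto (fun y => F y - G y) atTop (𝓝 k) := tendsto_const_nhds.congr' <| by
    filter_upwards [eventually_gt_atTop c] with y hy using (hk y hy).symm
  have hk₀ : k = 0 := tendsto_nhds_unique hlim (by simpa using hF_lim.sub hG_lim)
  exact sub_eq_zero.1 ((hk x hx).trans hk₀)

theorem tendsto_mul_log_add_sub_log_atTop (b : ℝ) :
    Tendsto (fun z : ℝ => z * (Real.log (z + b) - Real.log z)) atTop (𝓝 b) := by
  refine (Real.tendsto_mul_log_one_add_div_atTop b).congr' ?_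
  filter_upwards [eventually_gt_atTop 0, eventually_gt_atTop (-b)] with z hz hzb
  rw [← Real.log_div (by linarith) hz.ne', add_div, div_self hz.ne']

theorem tendsto_log_add_sub_log_atTop (b : ℝ) :
    Tendsto (fun z : ℝ => Real.log (z + b) - Real.log z) atTop (𝓝 0) := by
  refine ((tendsto_mul_log_add_sub_log_atTop b).div_atTop tendsto_id).congr' ?_
  filter_upwards [eventually_ne_atTop 0] with z hz using mul_div_cancel_left₀ _ hz

theorem laplaceConvergent_exp_neg_mul {a x : ℝ} (h : -a < x) :
    LaplaceConvergent (fun t => Real.exp (-(a * t))) x := by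
  have hint := integrableOn_exp_mul_Ioi (a := -(x + a)) (by linarith) 0
  refine hint.congr_fun (fun t _ => ?_) measurableSet_Ioi
  rw [← Real.exp_add]
  ring_nf

theorem laplaceConvergent_one_sub_exp_neg {x : ℝ} (hx : 0 < x) :
    LaplaceConvergent (fun t => 1 - Real.exp (-t)) x := by
  simpa using (laplaceConvergent_one hx).sub
    (laplaceConvergent_exp_neg_mul (a := 1) (by linarith))

theorem laplace_one_sub_exp_neg {x : ℝ} (hx : 0 < x) :
    laplace (fun t => 1 - Real.exp (-t)) x = 1 / x - 1 / (x + 1) := by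
  have hexp := laplaceConvergent_exp_neg_mul (a := 1) (x := x) (by linarith)
  have hexp' := laplace_exp_neg (a := 1) (x := x) (by linarith)
  simp only [one_mul] at hexp hexp'
  rw [(laplaceConvergent_one hx).laplace_sub hexp, laplace_one hx, hexp']

theorem laplaceConvergent_one_sub_exp_neg_div {x : ℝ} (hx : 0 < x) :
    LaplaceConvergent (fun t => (1 - Real.exp (-t)) / t) x := by
  refine .of_bounded (M := 1) ?_ (fun t ht => ?_) hx
  · exact ContinuousOn.div (by fun_prop) continuousOn_id fun t ht => ne_of_gt ht
  · rw [abs_div, abs_of_pos ht, abs_of_pos (one_sub_exp_neg_pos ht), div_le_one ht]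
    linarith [Real.add_one_le_exp (-t)]

theorem hasDerivAt_log_add {a x : ℝ} (h : 0 < x + a) :
    HasDerivAt (fun x => Real.log (x + a)) (1 / (x + a)) x :=
  ((hasDerivAt_id' x).add_const a).log h.ne'

theorem laplace_one_sub_exp_neg_div {x : ℝ} (hx : 0 < x) :
    laplace (fun t => (1 - Real.exp (-t)) / t) x = Real.log (x + 1) - Real.log x := by
  refine eq_of_hasDerivAt_of_tendsto_atTop (F' := fun x => 1 / (x + 1) - 1 / x)
    (fun y hy => ?_) (fun y hy => ?_)
    (laplaceConvergent_one_sub_exp_neg_div one_pos).tendsto_laplace_atTop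
    (tendsto_log_add_sub_log_atTop 1) hx
  · obtain ⟨w, hw, hwy⟩ := exists_between hy
    refine ((laplaceConvergent_one_sub_exp_neg_div hw).hasDerivAt_laplace hwy).congr_deriv ?_
    rw [laplace_congr (ψ := fun t => 1 - Real.exp (-t))
      fun t ht => mul_div_cancel₀ _ (ne_of_gt ht), laplace_one_sub_exp_neg hy, neg_sub]
  · rw [one_div y]
    exact (hasDerivAt_log_add (by linarith)).fun_sub (Real.hasDerivAt_log (ne_of_gt hy))

theorem laplace_mul_binetKernel_sub_add_one {a x : ℝ} (ha : 0 ≤ a) (hx : 0 < x) :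
    laplace (fun t => t * binetKernel a t) x - laplace (fun t => t * binetKernel a t) (x + 1) =
      1 / (x + a) - (Real.log (x + 1) - Real.log x) - (1 / 2 - a) * (1 / x - 1 / (x + 1)) := by
  have hB := laplaceConvergent_binetKernel ha (half_pos hx)
  have hexp := laplaceConvergent_exp_neg_mul (a := a) (x := x) (by linarith)
  have hquot := laplaceConvergent_one_sub_exp_neg_div hx
  have hone := (laplaceConvergent_one_sub_exp_neg hx).const_mul (1 / 2 - a)
  rw [← laplace_one_sub_exp_neg hx, ← laplace_one_sub_exp_neg_div hx,
    ← laplace_exp_neg (by linarith), ← laplace_const_mul, ← hexp.laplace_sub hquot,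
    ← (hexp.sub hquot).laplace_sub hone]
  simp only [laplace]
  rw [← integral_sub (hB.id_mul (by linarith)) (hB.id_mul (by linarith))]
  refine setIntegral_congr_fun measurableSet_Ioi fun t (ht : 0 < t) => ?_
  have hne := (one_sub_exp_neg_pos ht).ne'
  have hshift : Real.exp (-((x + 1) * t)) = Real.exp (-(x * t)) * Real.exp (-t) := by
    rw [← Real.exp_add]
    ring_nf
  simp only [hshift, binetKernel]
  field_simp
  ring

/-- The remainder in Stirling's formula for `log Γ(x + a)`. -/
noncomputable def stirlingRemainder (a x : ℝ) : ℝ :=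
  Real.log (Real.Gamma (x + a)) -
    ((x + a - 1 / 2) * Real.log x - x + Real.log (2 * Real.pi) / 2)

theorem log_Gamma_add_one {x : ℝ} (hx : 0 < x) :
    Real.log (Real.Gamma (x + 1)) = Real.log (Real.Gamma x) + Real.log x := by
  rw [Real.Gamma_add_one hx.ne', Real.log_mul hx.ne' (Real.Gamma_pos_of_pos hx).ne', add_comm]

theorem stirlingRemainder_sub_add_one {a x : ℝ} (hxa : 0 < x + a) :
    stirlingRemainder a x - stirlingRemainder a (x + 1) =
      x * (Real.log (x + 1) - Real.log x) + (a + 1 / 2) * (Real.log (x + 1) - Real.log x) -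
        (Real.log (x + a) - Real.log x) - 1 := by
  rw [stirlingRemainder, stirlingRemainder, add_right_comm x 1 a, log_Gamma_add_one hxa]
  ring

theorem laplace_binetKernel_sub_add_one {a x : ℝ} (ha : 0 ≤ a) (hx : 0 < x) :
    laplace (binetKernel a) x - laplace (binetKernel a) (x + 1) =
      stirlingRemainder a x - stirlingRemainder a (x + 1) := by
  rw [stirlingRemainder_sub_add_one (by linarith)]
  have hlim := (laplaceConvergent_binetKernel ha one_pos).tendsto_laplace_atTop
  refine eq_of_hasDerivAt_of_tendsto_atTop (c := 0) (l := 0)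
    (F := fun x => laplace (binetKernel a) x - laplace (binetKernel a) (x + 1))
    (G := fun x => x * (Real.log (x + 1) - Real.log x) +
      (a + 1 / 2) * (Real.log (x + 1) - Real.log x) - (Real.log (x + a) - Real.log x) - 1)
    (F' := fun y => -(1 / (y + a) - (Real.log (y + 1) - Real.log y) -
      (1 / 2 - a) * (1 / y - 1 / (y + 1)))) (fun y hy => ?_) (fun y hy => ?_) ?_ ?_ hx
  · have hB := laplaceConvergent_binetKernel ha (half_pos hy)
    refine ((hB.hasDerivAt_laplace (half_lt_self hy)).fun_sub
      ((hB.hasDerivAt_laplace (by linarith)).comp_add_const y 1)).congr_deriv ?_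
    rw [← laplace_mul_binetKernel_sub_add_one ha hy]
    ring
  · have hlog := Real.hasDerivAt_log (ne_of_gt hy)
    have hlog₁ := (hasDerivAt_log_add (a := 1) (x := y) (by linarith)).fun_sub hlog
    have hloga := (hasDerivAt_log_add (a := a) (x := y) (by linarith)).fun_sub hlog
    refine (((((hasDerivAt_id' y).fun_mul hlog₁).fun_add
      (hlog₁.const_mul (a + 1 / 2))).fun_sub hloga).sub_const 1).congr_deriv ?_
    have : y + 1 ≠ 0 := by linarith
    have := ne_of_gt hy
    field_simp
    ring
  · simpa using hlim.sub (hlim.comp (tendsto_atTop_add_const_right _ 1 tendsto_id))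
  · simpa using (((tendsto_mul_log_add_sub_log_atTop 1).add
      ((tendsto_log_add_sub_log_atTop 1).const_mul (a + 1 / 2))).sub
      (tendsto_log_add_sub_log_atTop a)).sub_const 1

theorem tendsto_log_factorial_sub_atTop :
    Tendsto (fun n : ℕ => Real.log n.factorial -
      ((n + 1 / 2) * Real.log n - n + Real.log (2 * Real.pi) / 2)) atTop (𝓝 0) := by
  have hlog := (Stirling.tendsto_stirlingSeq_sqrt_pi.log (by positivity)).sub_const
    (Real.log (Real.sqrt Real.pi))
  rw [sub_self] at hlog
  refine hlog.congr' ?_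
  filter_upwards [eventually_gt_atTop 0] with n hn
  have hn' : (0 : ℝ) < n := by exact_mod_cast hn
  rw [Stirling.log_stirlingSeq_formula, Real.log_sqrt Real.pi_pos.le,
    Real.log_mul two_ne_zero Real.pi_pos.ne', Real.log_mul two_ne_zero hn'.ne',
    Real.log_div hn'.ne' (Real.exp_pos _).ne', Real.log_exp]
  ring

theorem tendsto_stirlingRemainder_add_natCast {a x : ℝ} (hxa : 0 < x + a) :
    Tendsto (fun n : ℕ => stirlingRemainder a (x + (n + 1 : ℕ))) atTop (𝓝 0) := by
  have hGamma := (Real.BohrMollerup.tendsto_log_gamma hxa).const_sub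
    (Real.log (Real.Gamma (x + a)))
  have hlog := tendsto_log_add_sub_log_atTop (x + 1)
  have hmul := tendsto_mul_log_add_sub_log_atTop (x + 1)
  have hsum := (((hGamma.add tendsto_log_factorial_sub_atTop).sub
    (hmul.comp tendsto_natCast_atTop_atTop)).sub
    ((hlog.comp tendsto_natCast_atTop_atTop).const_mul (x + 1 + a - 1 / 2))).add_const (x + 1)
  convert hsum using 2 with n
  · have hshift : Real.log (Real.Gamma (x + a + (n + 1 : ℕ))) = _ :=
      Real.BohrMollerup.f_add_nat_eq (f := Real.log ∘ Real.Gamma) log_Gamma_add_one hxa (n + 1)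
    rw [stirlingRemainder, add_right_comm x _ a, hshift, Real.BohrMollerup.logGammaSeq]
    simp only [Function.comp_apply]
    push_cast
    ring_nf
  · ring

theorem log_Gamma_add_eq {a x : ℝ} (ha : 0 ≤ a) (hx : 0 < x) :
    Real.log (Real.Gamma (x + a)) = (x + a - 1 / 2) * Real.log x - x +
      Real.log (2 * Real.pi) / 2 + laplace (binetKernel a) x := by
  set D : ℝ → ℝ := fun y => stirlingRemainder a y - laplace (binetKernel a) y with hD
  have hperiod (n : ℕ) : D (x + n) = D x := by
    induction n with
    | zero => simp
    | succ n ih =>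
      have hstep := laplace_binetKernel_sub_add_one ha (x := x + n) (by positivity)
      rw [Nat.cast_succ, ← add_assoc, ← ih]
      simp only [hD]
      linarith
  have hlaplace : Tendsto (fun n : ℕ => laplace (binetKernel a) (x + (n + 1 : ℕ))) atTop (𝓝 0) :=
    (laplaceConvergent_binetKernel ha one_pos).tendsto_laplace_atTop.comp <|
      tendsto_atTop_add_const_left _ x <|
        tendsto_natCast_atTop_atTop.comp (tendsto_add_atTop_nat 1)
  have hlim : Tendsto (fun n : ℕ => D (x + (n + 1 : ℕ))) atTop (𝓝 0) := by
    simpa using (tendsto_stirlingRemainder_add_natCast (by linarith)).sub hlaplace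
  have hzero : D x = 0 := tendsto_nhds_unique
    (tendsto_const_nhds.congr fun n => (hperiod (n + 1)).symm) hlim
  simp only [hD, stirlingRemainder] at hzero
  linarith

end Binet

section LaplaceConvolution

open Set Topology

variable {f r : ℝ → ℝ} {x M μ : ℝ}

/-- Convolution of two functions on the half-line `(0, ∞)`. -/
noncomputable def laplaceConv (f r : ℝ → ℝ) : ℝ → ℝ :=
  posConvolution f r (ContinuousLinearMap.mul ℝ ℝ)

theorem laplaceConv_apply (f r : ℝ → ℝ) (t : ℝ) :
    laplaceConv f r t = ∫ s, (Ioi 0).indicator f s * (Ioi 0).indicator r (t - s) := by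
  rw [laplaceConv, posConvolution_eq_convolution_indicator f r _ volume]
  rfl

theorem laplaceConv_of_pos (f r : ℝ → ℝ) {t : ℝ} (ht : 0 < t) :
    laplaceConv f r t = ∫ s in 0..t, f s * r (t - s) :=
  by simp [laplaceConv, posConvolution, ht]

theorem exp_neg_mul_laplaceConv (f r : ℝ → ℝ) (x : ℝ) {t : ℝ} (ht : 0 < t) :
    Real.exp (-(x * t)) * laplaceConv f r t =
      laplaceConv (fun s => Real.exp (-(x * s)) * f s) (fun s => Real.exp (-(x * s)) * r s) t := by
  rw [laplaceConv_of_pos _ _ ht, laplaceConv_of_pos _ _ ht, ← intervalIntegral.integral_const_mul]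
  congr with s
  have hexp : Real.exp (-(x * t)) = Real.exp (-(x * s)) * Real.exp (-(x * (t - s))) := by
    rw [← Real.exp_add]
    ring_nf
  rw [hexp]
  ring

theorem abs_laplaceConv_le (f r : ℝ → ℝ) {t : ℝ} (ht : 0 < t) :
    |laplaceConv f r t| ≤ laplaceConv (fun s => |f s|) (fun s => |r s|) t := by
  rw [laplaceConv_of_pos _ _ ht, laplaceConv_of_pos _ _ ht]
  simp only [← abs_mul]
  exact intervalIntegral.abs_integral_le_integral_abs ht.le

namespace LaplaceConvergent

theorem abs (h : LaplaceConvergent f x) : LaplaceConvergent (fun t => |f t|) x := by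
  unfold LaplaceConvergent at h ⊢
  simpa only [IntegrableOn, norm_mul, Real.norm_eq_abs, Real.abs_exp] using h.norm

theorem conv (hf : LaplaceConvergent f x) (hr : LaplaceConvergent r x) :
    LaplaceConvergent (laplaceConv f r) x :=
  (integrable_posConvolution hf hr (ContinuousLinearMap.mul ℝ ℝ)).integrableOn.congr_fun
    (fun _ ht => (exp_neg_mul_laplaceConv f r x ht).symm) measurableSet_Ioi

theorem laplace_laplaceConv (hf : LaplaceConvergent f x) (hr : LaplaceConvergent r x) :
    laplace (laplaceConv f r) x = laplace f x * laplace r x :=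
  (setIntegral_congr_fun measurableSet_Ioi fun _ ht =>
    (exp_neg_mul_laplaceConv f r x ht).trans (laplaceConv_of_pos _ _ ht)).trans
    (integral_posConvolution hf hr (ContinuousLinearMap.mul ℝ ℝ))

theorem laplace_abs_laplaceConv_le (hf : LaplaceConvergent f x) (hr : LaplaceConvergent r x) :
    laplace (fun t => |laplaceConv f r t|) x ≤
      laplace (fun t => |f t|) x * laplace (fun t => |r t|) x := by
  rw [← hf.abs.laplace_laplaceConv hr.abs]
  exact setIntegral_mono_on (hf.conv hr).abs (hf.abs.conv hr.abs) measurableSet_Ioi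
    fun t ht => mul_le_mul_of_nonneg_left (abs_laplaceConv_le f r ht) (Real.exp_pos _).le

end LaplaceConvergent

theorem norm_laplaceConv_integrand_le (hM : ∀ t > 0, |r t| ≤ M) (hx : 0 ≤ x) (s t : ℝ) :
    ‖(Ioi 0).indicator f s * (Ioi 0).indicator r (t - s)‖ ≤
      M * Real.exp (x * t) * (Ioi 0).indicator (fun s => Real.exp (-(x * s)) * |f s|) s := by
  have hM0 : 0 ≤ M := (abs_nonneg _).trans (hM 1 one_pos)
  by_cases hs : s ∈ Ioi 0
  · by_cases hts : t - s ∈ Ioi 0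
    · have hexp : 1 ≤ Real.exp (x * t) * Real.exp (-(x * s)) := by
        rw [← Real.exp_add]
        exact Real.one_le_exp (by nlinarith [mul_nonneg hx (le_of_lt hts)])
      simp only [indicator_of_mem hs, indicator_of_mem hts, norm_mul, Real.norm_eq_abs]
      calc |f s| * |r (t - s)| ≤ |f s| * M := by gcongr; exact hM _ hts
        _ = M * 1 * |f s| := by ring
        _ ≤ M * (Real.exp (x * t) * Real.exp (-(x * s))) * |f s| := by gcongr
        _ = M * Real.exp (x * t) * (Real.exp (-(x * s)) * |f s|) := by ring
    · simp only [indicator_of_notMem hts, indicator_of_mem hs, mul_zero, norm_zero]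
      positivity
  · simp [indicator_of_notMem hs]

theorem abs_laplaceConv_le_laplace (hM : ∀ t > 0, |r t| ≤ M) (hx : 0 ≤ x)
    (hf : LaplaceConvergent f x) (t : ℝ) :
    |laplaceConv f r t| ≤ M * Real.exp (x * t) * laplace (fun t => |f t|) x := by
  rw [laplaceConv_apply, laplace, ← integral_indicator measurableSet_Ioi, ← integral_const_mul]
  exact norm_integral_le_of_norm_le
    (((integrable_indicator_iff measurableSet_Ioi).2 hf.abs).const_mul _)
    (Eventually.of_forall fun s => norm_laplaceConv_integrand_le hM hx s t)

theorem continuousAt_indicator_Ioi (hr : ContinuousOn r (Ioi 0)) {t : ℝ} (ht : t ≠ 0) :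
    ContinuousAt ((Ioi 0).indicator r) t := by
  rcases ht.lt_or_gt with ht | ht
  · refine continuousAt_const.congr (f := fun _ => 0) ?_
    filter_upwards [Iio_mem_nhds ht] with s hs
    rw [indicator_of_notMem (notMem_Ioi.2 (le_of_lt hs))]
  · refine (hr.continuousAt (Ioi_mem_nhds ht)).congr ?_
    filter_upwards [Ioi_mem_nhds ht] with s hs
    rw [indicator_of_mem hs]

theorem continuous_laplaceConv (hr : ContinuousOn r (Ioi 0)) (hM : ∀ t > 0, |r t| ≤ M)
    (hx : 0 ≤ x) (hf : LaplaceConvergent f x) : Continuous (laplaceConv f r) := by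
  have hM0 : 0 ≤ M := (abs_nonneg _).trans (hM 1 one_pos)
  have hmeas : AEStronglyMeasurable ((Ioi 0).indicator r) :=
    (aestronglyMeasurable_indicator_iff measurableSet_Ioi).2
      (hr.aestronglyMeasurable measurableSet_Ioi)
  refine continuous_iff_continuousAt.2 fun t => ?_
  simp only [funext (laplaceConv_apply f r)]
  refine continuousAt_of_dominated (bound := fun s => M * Real.exp (x * (t + 1)) *
    (Ioi 0).indicator (fun s => Real.exp (-(x * s)) * |f s|) s) ?_ ?_
    (((integrable_indicator_iff measurableSet_Ioi).2 hf.abs).const_mul _) ?_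
  · exact Eventually.of_forall fun y => AEStronglyMeasurable.mul
      ((aestronglyMeasurable_indicator_iff measurableSet_Ioi).2 hf.aestronglyMeasurable)
      (hmeas.comp_quasiMeasurePreserving
        (quasiMeasurePreserving_sub_left_of_right_invariant volume y))
  · filter_upwards [Iio_mem_nhds (lt_add_one t)] with y (hy : y < t + 1)
    refine Eventually.of_forall fun s => (norm_laplaceConv_integrand_le hM hx s y).trans ?_
    have hnonneg := indicator_nonneg (s := Ioi 0)
      (fun s _ => mul_nonneg (Real.exp_pos (-(x * s))).le (abs_nonneg (f s))) s
    gcongr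
  · filter_upwards [compl_mem_ae_iff.2 (measure_singleton t)] with s hs
    exact continuousAt_const.mul <| ContinuousAt.comp (f := fun y => y - s)
      (continuousAt_indicator_Ioi hr (sub_ne_zero.2 (Ne.symm hs))) (by fun_prop)

/-- The `n`-fold convolution of `t ^ (μ - 1) / Γ(μ)` with `r`, whose Laplace transform is
`x ^ (-μ) * laplace r x ^ n`. -/
noncomputable def gammaConv (μ : ℝ) (r : ℝ → ℝ) : ℕ → ℝ → ℝ
  | 0 => fun t => t ^ (μ - 1) / Real.Gamma μ
  | n + 1 => laplaceConv (gammaConv μ r n) r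

/-- The function whose Laplace transform is `x ^ (-μ) * exp (laplace r x)`, obtained by
transforming the exponential series back term by term. -/
noncomputable def gammaExpDensity (μ : ℝ) (r : ℝ → ℝ) (t : ℝ) : ℝ :=
  ∑' n : ℕ, gammaConv μ r n t / n.factorial

theorem laplace_gammaConv_zero (hμ : 0 < μ) (r : ℝ → ℝ) (hx : 0 < x) :
    laplace (gammaConv μ r 0) x = x ^ (-μ) := by
  rw [Real.rpow_neg hx.le, ← Real.inv_rpow hx.le, ← one_div,
    eq_div_of_mul_eq (Real.Gamma_pos_of_pos hμ).ne'
      (Real.integral_rpow_mul_exp_neg_mul_Ioi hμ hx).symm, ← integral_div, laplace]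
  congr with t
  simp only [gammaConv]
  ring

theorem laplaceConvergent_gammaConv (hμ : 0 < μ) (hx : 0 < x) (hr : LaplaceConvergent r x)
    (n : ℕ) : LaplaceConvergent (gammaConv μ r n) x := by
  induction n with
  | zero =>
    refine Integrable.of_integral_ne_zero ?_
    rw [← laplace, laplace_gammaConv_zero hμ r hx]
    positivity
  | succ n ih => exact ih.conv hr

theorem laplace_gammaConv (hμ : 0 < μ) (hx : 0 < x) (hr : LaplaceConvergent r x) (n : ℕ) :
    laplace (gammaConv μ r n) x = x ^ (-μ) * laplace r x ^ n := by
  induction n with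
  | zero => rw [laplace_gammaConv_zero hμ r hx, pow_zero, mul_one]
  | succ n ih =>
    rw [gammaConv, (laplaceConvergent_gammaConv hμ hx hr n).laplace_laplaceConv hr, ih, pow_succ,
      mul_assoc]

theorem laplace_abs_gammaConv_le (hμ : 0 < μ) (hx : 0 < x) (hr : LaplaceConvergent r x) (n : ℕ) :
    laplace (fun t => |gammaConv μ r n t|) x ≤ x ^ (-μ) * laplace (fun t => |r t|) x ^ n := by
  induction n with
  | zero =>
    rw [pow_zero, mul_one, ← laplace_gammaConv_zero hμ r hx]
    exact (congrFun (laplace_congr fun t ht => abs_of_pos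
      (div_pos (Real.rpow_pos_of_pos ht _) (Real.Gamma_pos_of_pos hμ))) x).le
  | succ n ih =>
    refine ((laplaceConvergent_gammaConv hμ hx hr n).laplace_abs_laplaceConv_le hr).trans ?_
    rw [pow_succ, ← mul_assoc]
    exact mul_le_mul_of_nonneg_right ih (laplace_nonneg (fun t _ => abs_nonneg _) x)

theorem abs_gammaConv_succ_le (hμ : 0 < μ) (hM : ∀ t > 0, |r t| ≤ M)
    (hr : LaplaceConvergent r 1) (n : ℕ) (t : ℝ) :
    |gammaConv μ r (n + 1) t| ≤ M * Real.exp t * laplace (fun t => |r t|) 1 ^ n := by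
  have hM0 : 0 ≤ M := (abs_nonneg _).trans (hM 1 one_pos)
  have hconv := laplaceConvergent_gammaConv hμ one_pos hr n
  have hsup := abs_laplaceConv_le_laplace hM zero_le_one hconv t
  have hlap := laplace_abs_gammaConv_le hμ one_pos hr n
  rw [one_mul] at hsup
  rw [Real.one_rpow, one_mul] at hlap
  exact hsup.trans (by gcongr)

theorem norm_gammaConv_succ_div_factorial_le (hμ : 0 < μ) (hM : ∀ t > 0, |r t| ≤ M)
    (hr : LaplaceConvergent r 1) {t T : ℝ} (htT : t ≤ T) (n : ℕ) :
    ‖gammaConv μ r (n + 1) t / (n + 1).factorial‖ ≤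
      M * Real.exp T * (laplace (fun t => |r t|) 1 ^ n / n.factorial) := by
  have hM0 : 0 ≤ M := (abs_nonneg _).trans (hM 1 one_pos)
  have hr0 : 0 ≤ laplace (fun t => |r t|) 1 := laplace_nonneg (fun t _ => abs_nonneg _) 1
  rw [norm_div, Real.norm_eq_abs, RCLike.norm_natCast, ← mul_div_assoc]
  have hle := abs_gammaConv_succ_le hμ hM hr n t
  gcongr
  · exact hle.trans (by gcongr)
  · exact Nat.le_succ n

theorem summable_gammaConv_div_factorial (hμ : 0 < μ) (hM : ∀ t > 0, |r t| ≤ M)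
    (hr : LaplaceConvergent r 1) (t : ℝ) :
    Summable fun n : ℕ => gammaConv μ r n t / n.factorial :=
  (summable_nat_add_iff 1).1 <| Summable.of_norm_bounded
    ((Real.summable_pow_div_factorial _).mul_left _)
    (norm_gammaConv_succ_div_factorial_le hμ hM hr le_rfl)

theorem continuousOn_gammaExpDensity (hμ : 0 < μ) (hrc : ContinuousOn r (Ioi 0))
    (hM : ∀ t > 0, |r t| ≤ M) : ContinuousOn (gammaExpDensity μ r) (Ioi 0) := by
  have hr : LaplaceConvergent r 1 := .of_bounded hrc hM one_pos
  have hsplit : gammaExpDensity μ r = fun t => gammaConv μ r 0 t / Nat.factorial 0 +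
      ∑' n : ℕ, gammaConv μ r (n + 1) t / (n + 1).factorial :=
    funext fun t => (summable_gammaConv_div_factorial hμ hM hr t).tsum_eq_zero_add
  have hhead : ContinuousOn (gammaConv μ r 0) (Ioi 0) := fun t ht =>
    ((Real.continuousAt_rpow_const t (μ - 1) (Or.inl (ne_of_gt ht))).div_const
      _).continuousWithinAt
  have htail (T : ℝ) : ContinuousOn
      (fun t => ∑' n : ℕ, gammaConv μ r (n + 1) t / (n + 1).factorial) (Iio T) :=
    continuousOn_tsum
      (fun n => ((continuous_laplaceConv hrc hM zero_le_one
        (laplaceConvergent_gammaConv hμ one_pos hr n)).div_const _).continuousOn)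
      ((Real.summable_pow_div_factorial _).mul_left _)
      fun n t ht => norm_gammaConv_succ_div_factorial_le hμ hM hr (le_of_lt ht) n
  rw [hsplit]
  exact (hhead.div_const _).add fun t _ =>
    ((htail (t + 1)).continuousAt (Iio_mem_nhds (lt_add_one t))).continuousWithinAt

theorem laplace_gammaExpDensity (hμ : 0 < μ) (hx : 0 < x) (hr : LaplaceConvergent r x) :
    laplace (gammaExpDensity μ r) x = x ^ (-μ) * Real.exp (laplace r x) := by
  have hterm (n : ℕ) := (laplaceConvergent_gammaConv hμ hx hr n).const_mul (n.factorial : ℝ)⁻¹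
  have hnorm (n : ℕ) : ∫ t in Ioi 0,
      ‖Real.exp (-(x * t)) * ((n.factorial : ℝ)⁻¹ * gammaConv μ r n t)‖ =
        (n.factorial : ℝ)⁻¹ * laplace (fun t => |gammaConv μ r n t|) x := by
    rw [← laplace_const_mul, laplace]
    simp only [norm_mul, Real.norm_eq_abs, Real.abs_exp, norm_inv, Nat.abs_cast]
  have hsummable : Summable fun n : ℕ => ∫ t in Ioi 0,
      ‖Real.exp (-(x * t)) * ((n.factorial : ℝ)⁻¹ * gammaConv μ r n t)‖ := by
    refine Summable.of_nonneg_of_le (fun n => integral_nonneg fun t => norm_nonneg _) (fun n => ?_)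
      ((Real.summable_pow_div_factorial (laplace (fun t => |r t|) x)).mul_left (x ^ (-μ)))
    rw [hnorm, ← mul_div_assoc, div_eq_inv_mul]
    exact mul_le_mul_of_nonneg_left (laplace_abs_gammaConv_le hμ hx hr n) (by positivity)
  have hseries := hasSum_integral_of_summable_integral_norm hterm hsummable
  simp only [← laplace.eq_1, laplace_const_mul, laplace_gammaConv hμ hx hr] at hseries
  have hexp : HasSum (fun n : ℕ => (n.factorial : ℝ)⁻¹ * (x ^ (-μ) * laplace r x ^ n))
      (x ^ (-μ) * Real.exp (laplace r x)) := by
    rw [Real.exp_eq_exp_ℝ]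
    refine ((NormedSpace.expSeries_div_hasSum_exp (laplace r x)).mul_left _).congr_fun fun n => ?_
    ring
  rw [← hseries.unique hexp, laplace]
  simp only [gammaExpDensity, ← tsum_mul_left, div_eq_inv_mul]

theorem laplaceConvergent_gammaExpDensity (hμ : 0 < μ) (hx : 0 < x)
    (hr : LaplaceConvergent r x) : LaplaceConvergent (gammaExpDensity μ r) x := by
  refine Integrable.of_integral_ne_zero ?_
  rw [← laplace, laplace_gammaExpDensity hμ hx hr]
  positivity

end LaplaceConvolution

section PrincipalValue

open Set Topology

variable {E : Type*} [NormedAddCommGroup E] [NormedSpace ℝ E] {Ψ : ℝ → E} {M : ℝ}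

theorem norm_integral_neg_self_le (hM : ∀ t, ‖Ψ t‖ ≤ M) (R : ℝ) :
    ‖∫ t in -R..R, Ψ t‖ ≤ M * (2 * |R|) := by
  have h := intervalIntegral.norm_integral_le_of_norm_le_const (a := -R) (b := R) fun t _ => hM t
  rwa [sub_neg_eq_add, ← two_mul, abs_mul, abs_two] at h

theorem exists_norm_integral_neg_self_le (hM : ∀ t, ‖Ψ t‖ ≤ M) {L : E}
    (hL : Tendsto (fun R : ℝ => ∫ t in -R..R, Ψ t) atTop (𝓝 L)) :
    ∃ N, ∀ R > 0, ‖∫ t in -R..R, Ψ t‖ ≤ N := by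
  obtain ⟨R₀, hR₀⟩ := eventually_atTop.1 (hL.norm.eventually_lt_const (lt_add_one ‖L‖))
  have hM0 : 0 ≤ M := (norm_nonneg _).trans (hM 0)
  refine ⟨max (‖L‖ + 1) (M * (2 * R₀)), fun R hR => ?_⟩
  rcases le_total R₀ R with h | h
  · exact le_max_of_le_left (hR₀ R h).le
  · refine le_max_of_le_right ((norm_integral_neg_self_le hM R).trans ?_)
    rw [abs_of_pos hR]
    gcongr

theorem integral_eq_integral_Ioi_add_comp_neg_s16 {f : ℝ → E} (hf : Integrable f) :
    ∫ x, f x = ∫ x in Ioi 0, (f x + f (-x)) := by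
  rw [integral_add hf.integrableOn hf.comp_neg.integrableOn, integral_comp_neg_Ioi, neg_zero,
    add_comm]
  exact (intervalIntegral.integral_Iic_add_Ioi hf.integrableOn hf.integrableOn).symm

theorem integrable_exp_neg_sq_smul (hΨ : Continuous Ψ) (hM : ∀ t, ‖Ψ t‖ ≤ M) :
    Integrable fun w : ℝ => Real.exp (-w ^ 2) • Ψ w := by
  have hgauss : Integrable fun w : ℝ => Real.exp (-w ^ 2) := by
    simpa using integrable_exp_neg_mul_sq one_pos
  exact hgauss.smul_bdd M hΨ.aestronglyMeasurable (Eventually.of_forall hM)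

variable [CompleteSpace E]

theorem hasDerivAt_integral_neg_self (hΨ : Continuous Ψ) (R : ℝ) :
    HasDerivAt (fun R => ∫ t in -R..R, Ψ t) (Ψ R + Ψ (-R)) R := by
  have hprim (R : ℝ) : HasDerivAt (fun R => ∫ t in 0..R, Ψ t) (Ψ R) R :=
    hΨ.integral_hasStrictDerivAt 0 R |>.hasDerivAt
  have hsplit : (fun R => ∫ t in -R..R, Ψ t) =
      fun R => (∫ t in 0..R, Ψ t) - ∫ t in 0..-R, Ψ t := funext fun R =>
    (intervalIntegral.integral_interval_sub_left (hΨ.intervalIntegrable _ _)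
      (hΨ.intervalIntegrable _ _)).symm
  rw [hsplit]
  exact ((hprim R).fun_sub ((hprim (-R)).scomp R (hasDerivAt_neg R))).congr_deriv (by simp)

theorem continuous_integral_neg_self (hΨ : Continuous Ψ) :
    Continuous fun R => ∫ t in -R..R, Ψ t :=
  continuous_iff_continuousAt.2 fun R => (hasDerivAt_integral_neg_self hΨ R).continuousAt

theorem integrableOn_exp_neg_sq_smul_integral (hΨ : Continuous Ψ) (hM : ∀ t, ‖Ψ t‖ ≤ M) :
    IntegrableOn (fun v : ℝ => Real.exp (-v ^ 2) • ∫ t in -v..v, Ψ t) (Ioi 0) := by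
  have hdom : Integrable fun v : ℝ => v * Real.exp (-v ^ 2) := by
    simpa using integrable_mul_exp_neg_mul_sq one_pos
  have hcont := continuous_integral_neg_self hΨ
  refine ((hdom.norm.const_mul (2 * M)).mono' (by fun_prop)
    (Eventually.of_forall fun v => ?_)).integrableOn
  rw [norm_smul, norm_mul, Real.norm_eq_abs, Real.norm_eq_abs, Real.abs_exp]
  calc Real.exp (-v ^ 2) * ‖∫ t in -v..v, Ψ t‖ ≤ Real.exp (-v ^ 2) * (M * (2 * |v|)) := by
        gcongr
        exact norm_integral_neg_self_le hM v
    _ = 2 * M * (|v| * Real.exp (-v ^ 2)) := by ring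

theorem integrableOn_mul_exp_neg_sq_smul_integral (hΨ : Continuous Ψ) (hM : ∀ t, ‖Ψ t‖ ≤ M) :
    IntegrableOn (fun v : ℝ => (2 * v * Real.exp (-v ^ 2)) • ∫ t in -v..v, Ψ t) (Ioi 0) := by
  have hdom : Integrable fun v : ℝ => v ^ 2 * Real.exp (-v ^ 2) := by
    simpa using integrable_rpow_mul_exp_neg_mul_sq one_pos (s := 2) (by norm_num)
  have hcont := continuous_integral_neg_self hΨ
  refine ((hdom.const_mul (4 * M)).mono' (by fun_prop)
    (Eventually.of_forall fun v => ?_)).integrableOn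
  rw [norm_smul, Real.norm_eq_abs, abs_mul, abs_mul, abs_two, Real.abs_exp]
  calc 2 * |v| * Real.exp (-v ^ 2) * ‖∫ t in -v..v, Ψ t‖
      ≤ 2 * |v| * Real.exp (-v ^ 2) * (M * (2 * |v|)) := by
        gcongr
        exact norm_integral_neg_self_le hM v
    _ = 4 * M * (|v| ^ 2 * Real.exp (-v ^ 2)) := by ring
    _ = 4 * M * (v ^ 2 * Real.exp (-v ^ 2)) := by rw [sq_abs]

theorem integral_gaussian_smul_eq_integral_Ioi (hΨ : Continuous Ψ) (hM : ∀ t, ‖Ψ t‖ ≤ M) :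
    ∫ w, Real.exp (-w ^ 2) • Ψ w =
      ∫ v in Ioi 0, (2 * v * Real.exp (-v ^ 2)) • ∫ t in -v..v, Ψ t := by
  have hΨint := integrable_exp_neg_sq_smul hΨ hM
  have hsymm : IntegrableOn (fun w : ℝ => Real.exp (-w ^ 2) • Ψ w +
      Real.exp (-(-w) ^ 2) • Ψ (-w)) (Ioi 0) := (hΨint.add hΨint.comp_neg).integrableOn
  have hmul := integrableOn_mul_exp_neg_sq_smul_integral hΨ hM
  have hderiv (v : ℝ) : HasDerivAt (fun v : ℝ => Real.exp (-v ^ 2) • ∫ t in -v..v, Ψ t)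
      ((Real.exp (-v ^ 2) • Ψ v + Real.exp (-(-v) ^ 2) • Ψ (-v)) -
        (2 * v * Real.exp (-v ^ 2)) • ∫ t in -v..v, Ψ t) v := by
    have hexp : HasDerivAt (fun v : ℝ => Real.exp (-v ^ 2)) (-(2 * v * Real.exp (-v ^ 2))) v :=
      (hasDerivAt_pow 2 v).fun_neg.exp.congr_deriv (by push_cast; ring)
    refine (hexp.fun_smul (hasDerivAt_integral_neg_self hΨ v)).congr_deriv ?_
    rw [neg_sq, smul_add, neg_smul, sub_eq_add_neg]
  have hzero := tendsto_zero_of_hasDerivAt_of_integrableOn_Ioi (a := 0) (fun v _ => hderiv v)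
    (hsymm.sub hmul) (integrableOn_exp_neg_sq_smul_integral hΨ hM)
  have hftc := integral_Ioi_of_hasDerivAt_of_tendsto' (a := 0) (fun v _ => hderiv v)
    (hsymm.sub hmul) hzero
  rw [integral_sub hsymm hmul, neg_zero, intervalIntegral.integral_same, smul_zero, sub_zero,
    sub_eq_zero] at hftc
  rw [integral_eq_integral_Ioi_add_comp_neg_s16 hΨint, hftc]

theorem integrableOn_mul_exp_neg_sq :
    IntegrableOn (fun v : ℝ => 2 * v * Real.exp (-v ^ 2)) (Ioi 0) := by
  simpa [mul_assoc] using ((integrable_mul_exp_neg_mul_sq one_pos).const_mul 2).integrableOn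

theorem integral_mul_exp_neg_sq : ∫ v in Ioi (0 : ℝ), 2 * v * Real.exp (-v ^ 2) = 1 := by
  have h := integral_rpow_mul_exp_neg_rpow (p := 2) (q := 1) two_pos (by norm_num)
  norm_num at h
  simp only [mul_assoc, integral_const_mul, h]
  norm_num

theorem integral_gaussian_scaled_smul_eq (hΨ : Continuous Ψ) (hM : ∀ t, ‖Ψ t‖ ≤ M) {k : ℝ}
    (hk : 0 < k) :
    ∫ w, Real.exp (-(w / k) ^ 2) • Ψ w =
      ∫ v in Ioi 0, (2 * v * Real.exp (-v ^ 2)) • ∫ t in -(k * v)..k * v, Ψ t := by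
  have hscale := Measure.integral_comp_mul_left (fun w => Real.exp (-(w / k) ^ 2) • Ψ w) k
  simp only [mul_div_cancel_left₀ _ hk.ne', abs_inv, abs_of_pos hk] at hscale
  rw [integral_gaussian_smul_eq_integral_Ioi (Ψ := fun w => Ψ (k * w)) (by fun_prop)
    fun t => hM (k * t), eq_inv_smul_iff₀ hk.ne', ← integral_smul] at hscale
  simp only [← hscale, smul_comm k, intervalIntegral.smul_integral_comp_mul_left, mul_neg]

-- An Abelian theorem: principal values are summed correctly by Gaussian means.
theorem tendsto_integral_gaussian_smul_of_tendsto (hΨ : Continuous Ψ) (hM : ∀ t, ‖Ψ t‖ ≤ M) {L : E}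
    (hL : Tendsto (fun R : ℝ => ∫ t in -R..R, Ψ t) atTop (𝓝 L)) :
    Tendsto (fun k : ℝ => ∫ w, Real.exp (-(w / k) ^ 2) • Ψ w) atTop (𝓝 L) := by
  obtain ⟨N, hN⟩ := exists_norm_integral_neg_self_le hM hL
  have hlim : Tendsto (fun k : ℝ => ∫ v in Ioi 0, (2 * v * Real.exp (-v ^ 2)) •
      ∫ t in -(k * v)..k * v, Ψ t) atTop
      (𝓝 (∫ v in Ioi (0 : ℝ), (2 * v * Real.exp (-v ^ 2)) • L)) := by
    refine tendsto_integral_filter_of_dominated_convergence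
      (fun v => 2 * v * Real.exp (-v ^ 2) * N) (Eventually.of_forall fun k => ?_) ?_
      (integrableOn_mul_exp_neg_sq.mul_const N) ?_
    · have hcont := (continuous_integral_neg_self hΨ).comp (continuous_const_mul k)
      exact (Continuous.smul (by fun_prop) hcont).aestronglyMeasurable
    · filter_upwards [eventually_gt_atTop 0] with k hk
      refine ae_restrict_of_forall_mem measurableSet_Ioi fun v (hv : 0 < v) => ?_
      rw [norm_smul, Real.norm_eq_abs, abs_of_nonneg (by positivity)]
      exact mul_le_mul_of_nonneg_left (hN _ (mul_pos hk hv)) (by positivity)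
    · exact ae_restrict_of_forall_mem measurableSet_Ioi fun v (hv : 0 < v) =>
        (hL.comp (tendsto_id.atTop_mul_const hv)).const_smul _
  rw [integral_smul_const, integral_mul_exp_neg_sq, one_smul] at hlim
  refine hlim.congr' ?_
  filter_upwards [eventually_gt_atTop 0] with k hk using
    (integral_gaussian_scaled_smul_eq hΨ hM hk).symm

end PrincipalValue

section FourierInversion

open Set Topology FourierTransform RealInnerProductSpace

theorem integral_gaussian_smul_fourier {V E : Type*} [NormedAddCommGroup V]
    [InnerProductSpace ℝ V] [MeasurableSpace V] [BorelSpace V] [FiniteDimensional ℝ V]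
    [NormedAddCommGroup E] [NormedSpace ℂ E] [CompleteSpace E] {g : V → E} (hg : Integrable g)
    {c : ℝ} (hc : 0 < c) (s : V) :
    ∫ w, Complex.exp (-(c : ℂ)⁻¹ * ‖w‖ ^ 2 + 2 * Real.pi * Complex.I * ⟪s, w⟫) • 𝓕 g w =
      ∫ w, ((Real.pi * c : ℂ) ^ (Module.finrank ℝ V / 2 : ℂ) *
        Complex.exp (-(Real.pi : ℂ) ^ 2 * c * ‖s - w‖ ^ 2)) • g w := by
  have hre : 0 < ((c : ℂ)⁻¹).re := by simpa using hc
  have hflip := VectorFourier.integral_fourierIntegral_smul_eq_flip (L := innerₗ V)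
    Real.continuous_fourierChar continuous_inner
    (GaussianFourier.integrable_cexp_neg_mul_sq_norm_add hre (2 * Real.pi * Complex.I) s) hg
  rw [flip_innerₗ] at hflip
  refine hflip.symm.trans (integral_congr_ae (Eventually.of_forall fun w => ?_))
  refine congrArg (· • g w) ((fourier_gaussian_innerProductSpace' hre s w).trans ?_)
  congr 2
  · rw [div_inv_eq_mul]
  · rw [div_inv_eq_mul]
    ring

variable {E : Type*} [NormedAddCommGroup E] [NormedSpace ℂ E] [CompleteSpace E]

theorem eq_of_tendsto_integral_fourier {g : ℝ → E} (hg : Integrable g) {s : ℝ}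
    (hs : ContinuousAt g s) {L : E}
    (hL : Tendsto (fun R : ℝ => ∫ t in -R..R,
      Complex.exp (2 * Real.pi * Complex.I * (s * t : ℝ)) • 𝓕 g t) atTop (𝓝 L)) :
    L = g s := by
  have hcont : Continuous (𝓕 g) := VectorFourier.fourierIntegral_continuous
    Real.continuous_fourierChar (L := innerₗ ℝ) continuous_inner hg
  have hbound (t : ℝ) : ‖Complex.exp (2 * Real.pi * Complex.I * (s * t : ℝ)) • 𝓕 g t‖ ≤
      ∫ v, ‖g v‖ := by
    have hexp : (2 * Real.pi * Complex.I * (s * t : ℝ) : ℂ) =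
        (2 * Real.pi * (s * t) : ℝ) * Complex.I := by
      push_cast
      ring
    rw [norm_smul, hexp, Complex.norm_exp_ofReal_mul_I, one_mul]
    exact VectorFourier.norm_fourierIntegral_le_integral_norm _ _ _ _ _
  have habel := tendsto_integral_gaussian_smul_of_tendsto (by fun_prop) hbound hL
  have hgauss := (Real.tendsto_integral_gaussian_smul' hg hs).comp
    (tendsto_pow_atTop (α := ℝ) two_ne_zero)
  refine tendsto_nhds_unique habel (hgauss.congr' ?_)
  filter_upwards [eventually_gt_atTop 0] with k hk
  rw [Function.comp_apply, ← integral_gaussian_smul_fourier hg (pow_pos hk 2)]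
  congr with w
  rw [Complex.exp_add, mul_smul, ← Complex.coe_smul, Complex.ofReal_exp]
  congr 2
  · rw [Real.norm_eq_abs, ← Complex.ofReal_pow |w|, sq_abs]
    simp [mul_pow, div_eq_inv_mul]
  · simp [mul_comm]

theorem fourier_indicator_exp_neg_mul (φ : ℝ → ℝ) (d ξ : ℝ) :
    𝓕 ((Ioi 0).indicator fun t => ((Real.exp (-(d * t)) * φ t : ℝ) : ℂ)) ξ =
      complexLaplace φ (d + (2 * Real.pi * ξ : ℝ) * Complex.I) := by
  rw [Real.fourier_real_eq_integral_exp_smul, complexLaplace,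
    ← integral_indicator measurableSet_Ioi]
  congr with t
  by_cases ht : t ∈ Ioi 0
  · rw [indicator_of_mem ht, indicator_of_mem ht, smul_eq_mul]
    push_cast
    rw [← mul_assoc, ← Complex.exp_add]
    ring_nf
  · rw [indicator_of_notMem ht, indicator_of_notMem ht, smul_zero]

theorem eq_of_tendsto_bromwich {φ : ℝ → ℝ} {d s : ℝ} (hφ : LaplaceConvergent φ d)
    (hs : 0 < s) (hc : ContinuousAt φ s) {L : ℂ}
    (hL : Tendsto (fun R : ℝ => (((2 * Real.pi)⁻¹ : ℝ) : ℂ) * ∫ t in -R..R,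
      Complex.exp ((d + t * Complex.I) * s) * complexLaplace φ (d + t * Complex.I))
        atTop (𝓝 L)) :
    L = φ s := by
  have hint : Integrable ((Ioi 0).indicator fun t => ((Real.exp (-(d * t)) * φ t : ℝ) : ℂ)) :=
    (integrable_indicator_iff measurableSet_Ioi).2 (Integrable.ofReal hφ)
  have hcont : ContinuousAt ((Ioi 0).indicator
      fun t => ((Real.exp (-(d * t)) * φ t : ℝ) : ℂ)) s := by
    refine ContinuousAt.congr (f := fun t => ((Real.exp (-(d * t)) * φ t : ℝ) : ℂ))
      (by fun_prop) ?_
    filter_upwards [Ioi_mem_nhds hs] with t ht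
    rw [indicator_of_mem ht]
  have hinv := eq_of_tendsto_integral_fourier hint hcont (L := Complex.exp (-(d * s)) * L) ?_
  · rw [indicator_of_mem (mem_Ioi.2 hs)] at hinv
    push_cast at hinv
    exact mul_left_cancel₀ (Complex.exp_ne_zero _) hinv
  · refine ((hL.comp (tendsto_id.const_mul_atTop Real.two_pi_pos)).const_mul
      (Complex.exp (-(d * s)))).congr fun R => ?_
    have hscale := intervalIntegral.integral_comp_mul_left (a := -R) (b := R)
      (fun t : ℝ => Complex.exp ((d + t * Complex.I) * s) *
        complexLaplace φ (d + t * Complex.I)) Real.two_pi_pos.ne'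
    rw [Complex.real_smul, mul_neg] at hscale
    rw [Function.comp_apply, id, ← hscale, ← intervalIntegral.integral_const_mul]
    congr with ξ
    rw [fourier_indicator_exp_neg_mul, smul_eq_mul, ← mul_assoc, ← Complex.exp_add]
    push_cast
    ring_nf

end FourierInversion

section LaplaceIdentities

open Set Topology

theorem eqOn_re_pos_of_eq_ofReal {E : Type*} [NormedAddCommGroup E] [NormedSpace ℂ E]
    [CompleteSpace E] {f g : ℂ → E} (hf : ∀ z, 0 < z.re → DifferentiableAt ℂ f z)
    (hg : ∀ z, 0 < z.re → DifferentiableAt ℂ g z) (h : ∀ x : ℝ, 0 < x → f x = g x) :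
    EqOn f g {z | 0 < z.re} := by
  have hopen : IsOpen {z : ℂ | 0 < z.re} := isOpen_lt continuous_const Complex.continuous_re
  have hanalytic {k : ℂ → E} (hk : ∀ z, 0 < z.re → DifferentiableAt ℂ k z) :
      AnalyticOnNhd ℂ k {z | 0 < z.re} :=
    DifferentiableOn.analyticOnNhd (fun z hz => (hk z hz).differentiableWithinAt) hopen
  have hofReal : Tendsto ((↑) : ℝ → ℂ) (𝓝[≠] 1) (𝓝[≠] 1) := by
    simpa using Complex.continuous_ofReal.continuousAt.continuousWithinAt.tendsto_nhdsWithin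
      (s := {(1 : ℝ)}ᶜ) (t := {(1 : ℂ)}ᶜ) (x := 1) fun x hx => by simpa using hx
  refine (hanalytic hf).eqOn_of_preconnected_of_frequently_eq (hanalytic hg)
    (convex_halfSpace_re_gt 0).isPreconnected (z₀ := 1) (by simp) (hofReal.frequently
      (Eventually.frequently ?_))
  filter_upwards [nhdsWithin_le_nhds (Ioi_mem_nhds one_pos)] with x hx using h x hx

theorem setIntegral_Ioi_comp_add_right {E : Type*} [NormedAddCommGroup E] [NormedSpace ℝ E]
    (g : ℝ → E) (c m : ℝ) : ∫ t in Ioi c, g (t + m) = ∫ t in Ioi (c + m), g t := by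
  have h := (measurePreserving_add_right volume m).setIntegral_preimage_emb
    (measurableEmbedding_addRight m) g (Ioi (c + m))
  rwa [preimage_add_const_Ioi, add_sub_cancel_right] at h

theorem exp_mul_laplace (φ : ℝ → ℝ) (x l : ℝ) :
    Real.exp (x * l) * laplace φ x = ∫ t in Ioi (-l), Real.exp (-t * x) * φ (t + l) := by
  have hshift := setIntegral_Ioi_comp_add_right
    (fun t => Real.exp (-(x * (t - l))) * φ t) (-l) l
  rw [neg_add_cancel] at hshift
  rw [laplace, ← integral_const_mul]
  simp only [add_sub_cancel_right, ← neg_mul, mul_comm x] at hshift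
  rw [hshift]
  congr with t
  rw [← mul_assoc, ← Real.exp_add]
  ring_nf

theorem LaplaceConvergent.comp_div_const {φ : ℝ → ℝ} {c x : ℝ} (h : LaplaceConvergent φ (c * x))
    (hc : 0 < c) : LaplaceConvergent (fun t => φ (t / c) / c) x := by
  have hscale := integrableOn_Ioi_comp_mul_left_iff
    (fun t => Real.exp (-(x * t)) * (φ (t / c) / c)) 0 hc
  rw [mul_zero] at hscale
  refine hscale.1 ((Integrable.div_const h c).congr (Eventually.of_forall fun t => ?_))
  simp only [mul_div_cancel_left₀ _ hc.ne', mul_div_assoc]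
  ring_nf

theorem laplace_comp_div_const (φ : ℝ → ℝ) {c : ℝ} (hc : 0 < c) (x : ℝ) :
    laplace (fun t => φ (t / c) / c) x = laplace φ (c * x) := by
  have hscale := integral_comp_mul_left_Ioi
    (fun t => Real.exp (-(x * t)) * (φ (t / c) / c)) 0 hc
  rw [mul_zero, smul_eq_mul, eq_inv_mul_iff_mul_eq₀ hc.ne', ← integral_const_mul] at hscale
  rw [laplace, ← hscale]
  congr with t
  rw [mul_div_cancel_left₀ _ hc.ne']
  field_simp

theorem LaplaceConvergent.exp_neg_mul {φ : ℝ → ℝ} {x κ : ℝ} (h : LaplaceConvergent φ (x + κ)) :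
    LaplaceConvergent (fun t => Real.exp (-(κ * t)) * φ t) x := by
  unfold LaplaceConvergent at h ⊢
  simpa only [← mul_assoc, ← Real.exp_add, ← neg_add, ← add_mul] using h

theorem complexLaplace_exp_neg_mul (φ : ℝ → ℝ) (κ : ℝ) (z : ℂ) :
    complexLaplace (fun t => Real.exp (-(κ * t)) * φ t) z = complexLaplace φ (z + κ) := by
  unfold complexLaplace
  congr with t
  push_cast
  rw [← mul_assoc, ← Complex.exp_add, ← neg_add, ← add_mul]

theorem complexLaplace_const_mul (c : ℝ) (φ : ℝ → ℝ) (z : ℂ) :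
    complexLaplace (fun t => c * φ t) z = c * complexLaplace φ z := by
  simp only [complexLaplace, ← integral_const_mul, Complex.ofReal_mul, mul_left_comm]

section Recurrence

variable {f q : ℝ → ℝ} (hf : ∀ x > 0, LaplaceConvergent f x) (hq : ∀ x > 0, LaplaceConvergent q x)
  (hmul : ∀ x > 0, laplace (fun t => t * f t) x = laplace f x * laplace q x)
include hf hq hmul

theorem laplace_pow_succ_mul_eq_sum (n : ℕ) {x : ℝ} (hx : 0 < x) :
    laplace (fun t => t ^ (n + 1) * f t) x = ∑ i ∈ Finset.range (n + 1), (n.choose i : ℝ) *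
      laplace (fun t => t ^ i * f t) x * laplace (fun t => t ^ (n - i) * q t) x := by
  have hx2 := half_lt_self hx
  have hf2 := hf _ (half_pos hx)
  have hq2 := hq _ (half_pos hx)
  have hfid : LaplaceConvergent (fun t => t * f t) (x / 2) :=
    (hf _ (half_pos (half_pos hx))).id_mul (half_lt_self (half_pos hx))
  have hcongr : laplace (fun t => t * f t) =ᶠ[𝓝 x] laplace f * laplace q :=
    eventually_of_mem (Ioi_mem_nhds hx) hmul
  have hleibniz := hcongr.iteratedDeriv_eq n
  rw [iteratedDeriv_mul (hf2.analyticAt_laplace hx2).contDiffAt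
    (hq2.analyticAt_laplace hx2).contDiffAt, hfid.iteratedDeriv_laplace hx2] at hleibniz
  simp only [← mul_assoc, ← pow_succ] at hleibniz
  refine mul_left_cancel₀ (pow_ne_zero n (neg_ne_zero.2 one_ne_zero)) (hleibniz.trans ?_)
  rw [Finset.mul_sum]
  refine Finset.sum_congr rfl fun i hi => ?_
  rw [hf2.iteratedDeriv_laplace hx2, hq2.iteratedDeriv_laplace hx2,
    ← Nat.add_sub_cancel' (Finset.mem_range_succ_iff.1 hi), pow_add, Nat.add_sub_cancel_left]
  ring

theorem laplace_pow_mul_nonneg (hf0 : ∀ x > 0, 0 ≤ laplace f x) (hq0 : ∀ t > 0, 0 ≤ q t) (n : ℕ)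
    {x : ℝ} (hx : 0 < x) : 0 ≤ laplace (fun t => t ^ n * f t) x := by
  induction n using Nat.strong_induction_on with
  | _ n ih =>
    cases n with
    | zero => simpa using hf0 x hx
    | succ n =>
      rw [laplace_pow_succ_mul_eq_sum hf hq hmul n hx]
      refine Finset.sum_nonneg fun i hi => mul_nonneg (mul_nonneg (Nat.cast_nonneg _)
        (ih i (Finset.mem_range.1 hi))) (laplace_nonneg (fun t ht => ?_) x)
      exact mul_nonneg (pow_nonneg (le_of_lt ht) _) (hq0 t ht)

end Recurrence

theorem eq_of_tendsto_mellin_inversion {F : ℂ → ℂ} {f : ℝ → ℝ} {c l s : ℝ}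
    (hf : LaplaceConvergent f c) (hF : ∀ z : ℂ, z.re = c → F z = Complex.exp (z * l) *
      complexLaplace f z) (hs : 0 < s) (hfs : ContinuousAt f s) {L : ℂ}
    (hL : Tendsto (fun R : ℝ => (((2 * Real.pi)⁻¹ : ℝ) : ℂ) * ∫ t in -R..R,
      F (c + t * Complex.I) * (Real.exp (l - s) : ℂ) ^ (-(c + t * Complex.I))) atTop (𝓝 L)) :
    L = f s := by
  refine eq_of_tendsto_bromwich hf hs hfs (hL.congr fun R => ?_)
  congr with t
  rw [hF _ (by simp), Complex.cpow_def_of_ne_zero (Complex.ofReal_ne_zero.2 (Real.exp_pos _).ne'),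
    ← Complex.ofReal_log (Real.exp_pos _).le, Real.log_exp, mul_right_comm, ← Complex.exp_add]
  push_cast
  ring_nf

end LaplaceIdentities

section GammaProduct

open Set Topology

variable {ι : Type*} [Fintype ι] {A a : ι → ℝ} {t x κ : ℝ}

/-- The gamma product `∏ i, Γ(A i * x + a i)`. -/
noncomputable def gammaProd (A a : ι → ℝ) (x : ℝ) : ℝ := ∏ i, Real.Gamma (A i * x + a i)

/-- The gamma product `∏ i, Γ(A i * z + a i)` of a complex variable. -/
noncomputable def complexGammaProd (A a : ι → ℝ) (z : ℂ) : ℂ :=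
  ∏ i, Complex.Gamma ((A i : ℂ) * z + (a i : ℂ))

/-- The Binet kernel of a gamma product: `laplace (binetSum A a)` is the remainder of Stirling's
formula for `log (gammaProd A a x)`. -/
noncomputable def binetSum (A a : ι → ℝ) (t : ℝ) : ℝ := ∑ i, binetKernel (a i) (t / A i) / A i

/-- The kernel `∑ i, exp (-(a i / A i) t) / (1 - exp (-t / A i))`, which represents, up to
regularisation at `0`, minus the logarithmic derivative of a gamma product. -/
noncomputable def expSum (A a : ι → ℝ) (t : ℝ) : ℝ :=
  ∑ i, Real.exp (-(a i / A i * t)) / (1 - Real.exp (-(t / A i)))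

theorem gammaProd_pos (hA : ∀ i, 0 < A i) (ha : ∀ i, 0 ≤ a i) (hx : 0 < x) :
    0 < gammaProd A a x :=
  Finset.prod_pos fun i _ =>
    Real.Gamma_pos_of_pos (add_pos_of_pos_of_nonneg (mul_pos (hA i) hx) (ha i))

theorem complexGammaProd_ofReal (A a : ι → ℝ) (x : ℝ) :
    complexGammaProd A a (x : ℂ) = (gammaProd A a x : ℂ) := by
  simp [complexGammaProd, gammaProd, ← Complex.Gamma_ofReal]

theorem complexGammaProd_sub_mul_add (A a : ι → ℝ) (κ : ℝ) (z : ℂ) :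
    complexGammaProd A (fun i => a i - κ * A i) (z + κ) = complexGammaProd A a z := by
  unfold complexGammaProd
  congr with i
  congr 1
  push_cast
  ring

theorem re_mul_add_pos {r s : ℝ} {z : ℂ} (hr : 0 < r) (hs : 0 ≤ s) (hz : 0 < z.re) :
    0 < ((r : ℂ) * z + s).re := by
  simpa using add_pos_of_pos_of_nonneg (mul_pos hr hz) hs

theorem complexGammaProd_ne_zero {z : ℂ} (hA : ∀ i, 0 < A i) (ha : ∀ i, 0 ≤ a i)
    (hz : 0 < z.re) : complexGammaProd A a z ≠ 0 :=
  Finset.prod_ne_zero_iff.2 fun i _ =>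
    Complex.Gamma_ne_zero_of_re_pos (re_mul_add_pos (hA i) (ha i) hz)

theorem differentiableAt_complexGammaProd {z : ℂ} (hA : ∀ i, 0 < A i) (ha : ∀ i, 0 ≤ a i)
    (hz : 0 < z.re) : DifferentiableAt ℂ (complexGammaProd A a) z := by
  refine DifferentiableAt.fun_finsetProd fun i _ => DifferentiableAt.fun_comp' z
    (Complex.differentiableAt_Gamma _ fun m hm => ?_) (by fun_prop)
  have hpos := re_mul_add_pos (hA i) (ha i) hz
  rw [hm, Complex.neg_re, Complex.natCast_re] at hpos
  exact (neg_nonpos.2 m.cast_nonneg).not_gt hpos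

theorem continuousOn_binetSum (hA : ∀ i, 0 < A i) (a : ι → ℝ) :
    ContinuousOn (binetSum A a) (Ioi 0) :=
  continuousOn_finsetSum _ fun i _ => ((continuousOn_binetKernel (a i)).comp (by fun_prop)
    fun _ ht => div_pos ht (hA i)).div_const _

theorem exists_abs_binetSum_le (hA : ∀ i, 0 < A i) (ha : ∀ i, 0 ≤ a i) :
    ∃ M, ∀ t > 0, |binetSum A a t| ≤ M := by
  choose M hM using fun i => exists_abs_binetKernel_le (ha i)
  refine ⟨∑ i, M i / A i, fun t ht => (Finset.abs_sum_le_sum_abs _ _).trans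
    (Finset.sum_le_sum fun i _ => ?_)⟩
  rw [abs_div, abs_of_pos (hA i)]
  exact div_le_div_of_nonneg_right (hM i _ (div_pos ht (hA i))) (hA i).le

theorem laplaceConvergent_binetSum (hA : ∀ i, 0 < A i) (ha : ∀ i, 0 ≤ a i) (hx : 0 < x) :
    LaplaceConvergent (binetSum A a) x :=
  .sum fun i => (laplaceConvergent_binetKernel (ha i) (mul_pos (hA i) hx)).comp_div_const (hA i)

theorem laplace_binetSum (hA : ∀ i, 0 < A i) (ha : ∀ i, 0 ≤ a i) (hx : 0 < x) :
    laplace (binetSum A a) x = ∑ i, laplace (binetKernel (a i)) (A i * x) := by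
  unfold binetSum
  rw [LaplaceConvergent.laplace_sum fun i => (laplaceConvergent_binetKernel (ha i)
    (mul_pos (hA i) hx)).comp_div_const (hA i)]
  exact Finset.sum_congr rfl fun i _ => laplace_comp_div_const _ (hA i) x

theorem log_gammaProd_eq (hA : ∀ i, 0 < A i) (ha : ∀ i, 0 ≤ a i) (hx : 0 < x) :
    Real.log (gammaProd A a x) = (∑ i, A i) * (x * Real.log x - x) +
      x * ∑ i, A i * Real.log (A i) + (∑ i, (a i - 1 / 2)) * Real.log x +
      ∑ i, ((a i - 1 / 2) * Real.log (A i) + Real.log (2 * Real.pi) / 2) +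
      laplace (binetSum A a) x := by
  have hAx (i : ι) : 0 < A i * x := mul_pos (hA i) hx
  rw [laplace_binetSum hA ha hx, gammaProd, Real.log_prod fun i _ =>
    (Real.Gamma_pos_of_pos (add_pos_of_pos_of_nonneg (hAx i) (ha i))).ne', Finset.sum_mul,
    Finset.mul_sum, Finset.sum_mul]
  simp only [← Finset.sum_add_distrib]
  refine Finset.sum_congr rfl fun i _ => ?_
  rw [log_Gamma_add_eq (ha i) (hAx i), Real.log_mul (hA i).ne' hx.ne']
  ring

theorem expSum_eq (hA : ∀ i, A i ≠ 0) (a : ι → ℝ) (ht : t ≠ 0) :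
    expSum A a t = (∑ i, A i) / t - ∑ i, (a i - 1 / 2) + t * binetSum A a t := by
  rw [Finset.sum_div, ← Finset.sum_sub_distrib, binetSum, Finset.mul_sum,
    ← Finset.sum_add_distrib]
  refine Finset.sum_congr rfl fun i _ => ?_
  rw [binetKernel, one_div_div, mul_div_left_comm]
  have := hA i
  field_simp
  ring

theorem exp_neg_mul_le_expSum (hA : ∀ i, 0 < A i) (a : ι → ℝ) (ht : 0 < t) (i : ι) :
    Real.exp (-(a i / A i * t)) ≤ expSum A a t := by
  have hden (i : ι) : 0 < 1 - Real.exp (-(t / A i)) := one_sub_exp_neg_pos (div_pos ht (hA i))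
  calc Real.exp (-(a i / A i * t))
      ≤ Real.exp (-(a i / A i * t)) / (1 - Real.exp (-(t / A i))) :=
        le_div_self (Real.exp_pos _).le (hden i) (sub_le_self _ (Real.exp_pos _).le)
    _ ≤ expSum A a t := Finset.single_le_sum
        (f := fun i => Real.exp (-(a i / A i * t)) / (1 - Real.exp (-(t / A i))))
        (fun i _ => div_nonneg (Real.exp_pos _).le (hden i).le) (Finset.mem_univ i)

theorem expSum_le_exp_neg_mul (hA : ∀ i, 0 < A i) (hκ : ∀ i, κ ≤ a i / A i) (ht : 0 < t) :
    expSum A a t ≤ Real.exp (-(κ * t)) * ∑ i, 1 / (1 - Real.exp (-(t / A i))) := by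
  rw [Finset.mul_sum]
  refine Finset.sum_le_sum fun i _ => ?_
  rw [mul_one_div]
  have hden := one_sub_exp_neg_pos (div_pos ht (hA i))
  gcongr
  exact hκ i

theorem tendsto_sum_one_div_one_sub_exp_neg (hA : ∀ i, 0 < A i) :
    Tendsto (fun t : ℝ => ∑ i, 1 / (1 - Real.exp (-(t / A i)))) atTop
      (𝓝 (Fintype.card ι : ℝ)) := by
  have hterm (i : ι) : Tendsto (fun t : ℝ => 1 / (1 - Real.exp (-(t / A i)))) atTop
      (𝓝 (1 / (1 - 0))) :=
    tendsto_const_nhds.div ((Real.tendsto_exp_neg_atTop_nhds_zero.comp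
      (tendsto_id.atTop_div_const (hA i))).const_sub 1) (by norm_num)
  simpa using tendsto_finsetSum Finset.univ fun i _ => hterm i

end GammaProduct

section GammaRatio

open Set Topology

theorem CompletelyMonotonicOn.nonneg {f : ℝ → ℝ} {x : ℝ} (hf : CompletelyMonotonicOn f)
    (hx : 0 < x) : 0 ≤ f x := by
  simpa using hf.2 0 x hx

theorem CompletelyMonotonicOn.antitoneOn {f : ℝ → ℝ} (hf : CompletelyMonotonicOn f) :
    AntitoneOn f (Ioi 0) := by
  have hdiff : DifferentiableOn ℝ f (Ioi 0) := fun x hx =>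
    ((hf.1 x hx).differentiableAt (by simp)).differentiableWithinAt
  refine antitoneOn_of_deriv_nonpos (convex_Ioi 0) hdiff.continuousOn
    (by rwa [interior_Ioi]) fun x hx => ?_
  rw [interior_Ioi] at hx
  simpa [iteratedDeriv_one] using hf.2 1 x hx

theorem eq_zero_of_antitoneOn_of_eq_mul_log_add {g e : ℝ → ℝ} {D L : ℝ}
    (hanti : AntitoneOn g (Ioi 0)) (hpos : ∀ x > 0, 0 ≤ g x)
    (hg : ∀ x > 0, g x = D * Real.log x + e x) (he : Tendsto e atTop (𝓝 L)) : D = 0 := by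
  have hzero : Tendsto (fun x => g x / Real.log x) atTop (𝓝 0) := by
    refine squeeze_zero' ?_ ?_ (Real.tendsto_log_atTop.const_div_atTop (g 1))
    · filter_upwards [eventually_ge_atTop 1] with x hx using
        div_nonneg (hpos x (one_pos.trans_le hx)) (Real.log_nonneg hx)
    · filter_upwards [eventually_ge_atTop 1] with x hx using div_le_div_of_nonneg_right
        (hanti (mem_Ioi.2 one_pos) (mem_Ioi.2 (one_pos.trans_le hx)) hx) (Real.log_nonneg hx)
  have hD : Tendsto (fun x => g x / Real.log x) atTop (𝓝 (D + 0)) := by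
    refine ((he.div_atTop Real.tendsto_log_atTop).const_add D).congr' ?_
    filter_upwards [eventually_gt_atTop 1] with x hx
    rw [hg x (one_pos.trans hx), add_div, mul_div_cancel_right₀ _ (Real.log_pos hx).ne']
  rw [add_zero] at hD
  exact tendsto_nhds_unique hD hzero

variable {ι ι' : Type*} [Fintype ι] [Fintype ι'] {A a : ι → ℝ} {B b : ι' → ℝ} {x κ : ℝ}

/-- The ratio of gamma products `W(x) = ∏ i, Γ(A i * x + a i) / ∏ j, Γ(B j * x + b j)`. -/
noncomputable def gammaRatio (A : ι → ℝ) (B : ι' → ℝ) (a : ι → ℝ) (b : ι' → ℝ) (x : ℝ) : ℝ :=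
  gammaProd A a x / gammaProd B b x

/-- The ratio of gamma products `W` at a complex argument. -/
noncomputable def complexGammaRatio (A : ι → ℝ) (B : ι' → ℝ) (a : ι → ℝ) (b : ι' → ℝ) (z : ℂ) :
    ℂ :=
  complexGammaProd A a z / complexGammaProd B b z

/-- The logarithm of `ρ = (∏ i, A i ^ A i) * ∏ j, B j ^ (-B j)`. -/
noncomputable def logScale (A : ι → ℝ) (B : ι' → ℝ) : ℝ :=
  ∑ i, A i * Real.log (A i) - ∑ j, B j * Real.log (B j)

/-- The exponent `μ = ∑ b - ∑ a + (p - q) / 2` of the decay `x ^ (-μ)` of `W(x) ρ ^ (-x)`. -/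
noncomputable def gammaExponent (a : ι → ℝ) (b : ι' → ℝ) : ℝ :=
  ∑ j, (b j - 1 / 2) - ∑ i, (a i - 1 / 2)

/-- The kernel whose Laplace transform is the Stirling remainder of `log W`. -/
noncomputable def ratioBinet (A : ι → ℝ) (B : ι' → ℝ) (a : ι → ℝ) (b : ι' → ℝ) (t : ℝ) : ℝ :=
  binetSum A a t - binetSum B b t

/-- The kernel whose Laplace transform is `log ρ - (log W)'`, when `∑ A = ∑ B`. -/
noncomputable def ratioKernel (A : ι → ℝ) (B : ι' → ℝ) (a : ι → ℝ) (b : ι' → ℝ) (t : ℝ) : ℝ :=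
  expSum A a t - expSum B b t

theorem prod_rpow_self_eq_exp (hA : ∀ i, 0 < A i) :
    ∏ i, A i ^ A i = Real.exp (∑ i, A i * Real.log (A i)) := by
  rw [Real.exp_sum]
  exact Finset.prod_congr rfl fun i _ => by rw [Real.rpow_def_of_pos (hA i), mul_comm]

theorem prod_rpow_mul_prod_rpow_neg_eq_exp (hA : ∀ i, 0 < A i) (hB : ∀ j, 0 < B j) :
    (∏ i, A i ^ A i) * ∏ j, B j ^ (-B j) = Real.exp (logScale A B) := by
  simp only [Real.rpow_neg (hB _).le, Finset.prod_inv_distrib]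
  rw [logScale, Real.exp_sub, prod_rpow_self_eq_exp hA, prod_rpow_self_eq_exp hB, div_eq_mul_inv]

theorem gammaExponent_eq (a : ι → ℝ) (b : ι' → ℝ) : gammaExponent a b =
    ∑ j, b j - ∑ i, a i + ((Fintype.card ι : ℝ) - Fintype.card ι') / 2 := by
  simp only [gammaExponent, Finset.sum_sub_distrib, Finset.sum_const, Finset.card_univ,
    nsmul_eq_mul]
  ring

theorem gammaExponent_sub_mul (hAB : ∑ i, A i = ∑ j, B j) (a : ι → ℝ) (b : ι' → ℝ) (κ : ℝ) :
    gammaExponent (fun i => a i - κ * A i) (fun j => b j - κ * B j) = gammaExponent a b := by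
  simp only [gammaExponent, Finset.sum_sub_distrib, ← Finset.mul_sum, hAB]
  ring

theorem complexGammaRatio_ofReal (A : ι → ℝ) (B : ι' → ℝ) (a : ι → ℝ) (b : ι' → ℝ) (x : ℝ) :
    complexGammaRatio A B a b (x : ℂ) = (gammaRatio A B a b x : ℂ) := by
  rw [complexGammaRatio, gammaRatio, complexGammaProd_ofReal, complexGammaProd_ofReal,
    Complex.ofReal_div]

theorem ratioKernel_eq (hA : ∀ i, 0 < A i) (hB : ∀ j, 0 < B j) (hAB : ∑ i, A i = ∑ j, B j)
    (a : ι → ℝ) (b : ι' → ℝ) {t : ℝ} (ht : 0 < t) :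
    ratioKernel A B a b t = gammaExponent a b + t * ratioBinet A B a b t := by
  rw [ratioKernel, expSum_eq (fun i => (hA i).ne') a ht.ne',
    expSum_eq (fun j => (hB j).ne') b ht.ne', hAB, gammaExponent, ratioBinet]
  ring

-- As `t → ∞` the term of the smallest `b j / B j` would dominate and make the kernel negative.
theorem le_div_of_ratioKernel_nonneg (hA : ∀ i, 0 < A i) (hB : ∀ j, 0 < B j)
    (hpos : ∀ t > 0, 0 ≤ ratioKernel A B a b t) (hκ : ∀ i, κ ≤ a i / A i) (j : ι') :
    κ ≤ b j / B j := by
  by_contra! hlt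
  refine not_tendsto_nhds_of_tendsto_atTop (tendsto_atTop_mono' atTop ?_
    (Real.tendsto_exp_atTop.comp (tendsto_id.const_mul_atTop (sub_pos.2 hlt)))) _
    (tendsto_sum_one_div_one_sub_exp_neg hA)
  filter_upwards [eventually_gt_atTop 0] with t ht
  have hle : Real.exp (-(b j / B j * t)) ≤
      Real.exp (-(κ * t)) * ∑ i, 1 / (1 - Real.exp (-(t / A i))) :=
    (exp_neg_mul_le_expSum hB b ht j).trans ((sub_nonneg.1 (hpos t ht)).trans
      (expSum_le_exp_neg_mul hA hκ ht))
  have hexp : Real.exp ((κ - b j / B j) * t) =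
      Real.exp (-(b j / B j * t)) / Real.exp (-(κ * t)) := by
    rw [← Real.exp_sub]
    ring_nf
  rw [Function.comp_apply, id, hexp]
  exact (div_le_iff₀' (Real.exp_pos _)).2 hle

section PositiveScales

variable (hA : ∀ i, 0 < A i) (hB : ∀ j, 0 < B j)
include hA hB

theorem continuousOn_ratioBinet (a : ι → ℝ) (b : ι' → ℝ) :
    ContinuousOn (ratioBinet A B a b) (Ioi 0) :=
  (continuousOn_binetSum hA a).sub (continuousOn_binetSum hB b)

theorem continuousOn_ratioKernel (hAB : ∑ i, A i = ∑ j, B j) (a : ι → ℝ) (b : ι' → ℝ) :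
    ContinuousOn (ratioKernel A B a b) (Ioi 0) :=
  (continuousOn_const.add (continuousOn_id.mul (continuousOn_ratioBinet hA hB a b))).congr
    fun _ ht => ratioKernel_eq hA hB hAB a b ht

variable (ha : ∀ i, 0 ≤ a i) (hb : ∀ j, 0 ≤ b j)
include ha hb

theorem exists_abs_ratioBinet_le : ∃ M, ∀ t > 0, |ratioBinet A B a b t| ≤ M := by
  obtain ⟨M, hM⟩ := exists_abs_binetSum_le hA ha
  obtain ⟨N, hN⟩ := exists_abs_binetSum_le hB hb
  exact ⟨M + N, fun t ht => (abs_sub _ _).trans (add_le_add (hM t ht) (hN t ht))⟩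

theorem laplaceConvergent_ratioBinet (hx : 0 < x) : LaplaceConvergent (ratioBinet A B a b) x :=
  (laplaceConvergent_binetSum hA ha hx).sub (laplaceConvergent_binetSum hB hb hx)

theorem gammaRatio_pos (hx : 0 < x) : 0 < gammaRatio A B a b x :=
  div_pos (gammaProd_pos hA ha hx) (gammaProd_pos hB hb hx)

theorem exists_log_gammaRatio_eq :
    ∃ K, ∀ x > 0, Real.log (gammaRatio A B a b x) =
      (∑ i, A i - ∑ j, B j) * (x * Real.log x - x) + x * logScale A B -
        gammaExponent a b * Real.log x + K + laplace (ratioBinet A B a b) x := by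
  refine ⟨∑ i, ((a i - 1 / 2) * Real.log (A i) + Real.log (2 * Real.pi) / 2) -
    ∑ j, ((b j - 1 / 2) * Real.log (B j) + Real.log (2 * Real.pi) / 2), fun x hx => ?_⟩
  have hsub : laplace (ratioBinet A B a b) x =
      laplace (binetSum A a) x - laplace (binetSum B b) x :=
    (laplaceConvergent_binetSum hA ha hx).laplace_sub (laplaceConvergent_binetSum hB hb hx)
  rw [gammaRatio, Real.log_div (gammaProd_pos hA ha hx).ne' (gammaProd_pos hB hb hx).ne',
    log_gammaProd_eq hA ha hx, log_gammaProd_eq hB hb hx, hsub, logScale, gammaExponent]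
  ring

theorem neg_deriv_log_gammaRatio (hx : 0 < x) :
    -deriv (fun y => Real.log (gammaRatio A B a b y)) x =
      (∑ j, B j - ∑ i, A i) * Real.log x - logScale A B + gammaExponent a b * (1 / x) +
        laplace (fun t => t * ratioBinet A B a b t) x := by
  obtain ⟨K, hK⟩ := exists_log_gammaRatio_eq hA hB ha hb
  have hlog := Real.hasDerivAt_log hx.ne'
  have hid := hasDerivAt_id' x
  have hderiv := ((((((hid.fun_mul hlog).fun_sub hid).const_mul (∑ i, A i - ∑ j, B j)).fun_add
    (hid.mul_const (logScale A B))).fun_sub (hlog.const_mul (gammaExponent a b))).add_const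
    K).fun_add ((laplaceConvergent_ratioBinet hA hB ha hb (half_pos hx)).hasDerivAt_laplace
      (half_lt_self hx))
  have hcongr : (fun y => Real.log (gammaRatio A B a b y)) =ᶠ[𝓝 x] _ :=
    eventually_of_mem (Ioi_mem_nhds hx) hK
  rw [hcongr.deriv_eq, hderiv.deriv]
  field_simp
  ring

theorem sum_eq_sum_of_completelyMonotonicOn (hcm : CompletelyMonotonicOn
    fun x => -deriv (fun y => Real.log (gammaRatio A B a b y)) x) : ∑ i, A i = ∑ j, B j := by
  have hinv : Tendsto (fun x : ℝ => 1 / x) atTop (𝓝 0) := tendsto_const_nhds.div_atTop tendsto_id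
  have hlim := ((hinv.const_mul (gammaExponent a b)).const_add (-logScale A B)).add
    ((laplaceConvergent_ratioBinet hA hB ha hb one_pos).id_mul one_lt_two).tendsto_laplace_atTop
  refine (sub_eq_zero.1 (eq_zero_of_antitoneOn_of_eq_mul_log_add hcm.antitoneOn
    (fun x hx => hcm.nonneg hx) (fun x hx => ?_) hlim)).symm
  rw [neg_deriv_log_gammaRatio hA hB ha hb hx]
  ring

variable (hAB : ∑ i, A i = ∑ j, B j)
include hAB

theorem laplaceConvergent_ratioKernel (hx : 0 < x) :
    LaplaceConvergent (ratioKernel A B a b) x :=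
  (((laplaceConvergent_one hx).const_mul _).add
    ((laplaceConvergent_ratioBinet hA hB ha hb (half_pos hx)).id_mul (half_lt_self hx))).congr
      fun _ ht => by rw [ratioKernel_eq hA hB hAB a b ht, mul_one]

theorem laplace_ratioKernel (hx : 0 < x) :
    laplace (ratioKernel A B a b) x =
      logScale A B - deriv (fun y => Real.log (gammaRatio A B a b y)) x := by
  have hkernel : EqOn (ratioKernel A B a b)
      (fun t => gammaExponent a b * 1 + t * ratioBinet A B a b t) (Ioi 0) :=
    fun _ ht => by rw [ratioKernel_eq hA hB hAB a b ht, mul_one]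
  rw [laplace_congr hkernel,
    ((laplaceConvergent_one hx).const_mul _).laplace_add
      ((laplaceConvergent_ratioBinet hA hB ha hb (half_pos hx)).id_mul (half_lt_self hx)),
    laplace_const_mul, laplace_one hx, sub_eq_add_neg,
    neg_deriv_log_gammaRatio hA hB ha hb hx, hAB]
  ring

theorem ratioKernel_nonneg_of_completelyMonotonicOn (hcm : CompletelyMonotonicOn
    fun x => -deriv (fun y => Real.log (gammaRatio A B a b y)) x) :
    ∀ t > 0, 0 ≤ ratioKernel A B a b t := by
  have hconv (x : ℝ) (hx : 0 < x) := laplaceConvergent_ratioKernel hA hB ha hb hAB hx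
  refine fun t => nonneg_of_laplace_pow_mul_nonneg (continuousOn_ratioKernel hA hB hAB a b) hconv
    fun n hn x hx => ?_
  have hderiv : (fun x => -deriv (fun y => Real.log (gammaRatio A B a b y)) x) =ᶠ[𝓝 x]
      fun y => -logScale A B + laplace (ratioKernel A B a b) y := by
    filter_upwards [Ioi_mem_nhds hx] with y hy
    rw [laplace_ratioKernel hA hB ha hb hAB hy]
    ring
  have hsign := hcm.2 n x hx
  rwa [hderiv.iteratedDeriv_eq n, iteratedDeriv_const_add hn,
    (hconv _ (half_pos hx)).iteratedDeriv_laplace (half_lt_self hx), ← mul_assoc, ← mul_pow,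
    neg_one_mul, neg_neg, one_pow, one_mul] at hsign

end PositiveScales

end GammaRatio

section Density

open Set Topology

variable {ι ι' : Type*} [Fintype ι] [Fintype ι'] {A a : ι → ℝ} {B b : ι' → ℝ}

theorem gammaRatio_eq_of_complexGammaRatio_eq {f : ℝ → ℝ} {x l : ℝ}
    (h : complexGammaRatio A B a b x = Complex.exp (x * l) * complexLaplace f x) :
    gammaRatio A B a b x = Real.exp (x * l) * laplace f x := by
  rw [complexGammaRatio_ofReal, complexLaplace_ofReal] at h
  exact_mod_cast h

variable (hA : ∀ i, 0 < A i) (hB : ∀ j, 0 < B j) (hAB : ∑ i, A i = ∑ j, B j)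
include hA hB hAB

theorem exists_gammaRatio_eq_exp_mul_laplace (ha : ∀ i, 0 ≤ a i) (hb : ∀ j, 0 ≤ b j)
    (hμ : 0 < gammaExponent a b) :
    ∃ f : ℝ → ℝ, ContinuousOn f (Ioi 0) ∧ (∀ x > 0, LaplaceConvergent f x) ∧
      ∀ x > 0, gammaRatio A B a b x = Real.exp (x * logScale A B) * laplace f x := by
  obtain ⟨K, hK⟩ := exists_log_gammaRatio_eq hA hB ha hb
  obtain ⟨M, hM⟩ := exists_abs_ratioBinet_le hA hB ha hb
  have hr (x : ℝ) (hx : 0 < x) := laplaceConvergent_ratioBinet hA hB ha hb hx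
  refine ⟨fun t => Real.exp K * gammaExpDensity (gammaExponent a b) (ratioBinet A B a b) t,
    continuousOn_const.mul
      (continuousOn_gammaExpDensity hμ (continuousOn_ratioBinet hA hB a b) hM),
    fun x hx => (laplaceConvergent_gammaExpDensity hμ hx (hr x hx)).const_mul _, fun x hx => ?_⟩
  rw [laplace_const_mul, laplace_gammaExpDensity hμ hx (hr x hx), Real.rpow_def_of_pos hx,
    ← Real.exp_log (gammaRatio_pos hA hB ha hb hx), hK x hx, hAB]
  simp only [← Real.exp_add]
  ring_nf

theorem exists_complexGammaRatio_eq_exp_mul_complexLaplace (ha : ∀ i, 0 ≤ a i)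
    (hb : ∀ j, 0 ≤ b j) (hμ : 0 < gammaExponent a b) :
    ∃ f : ℝ → ℝ, ContinuousOn f (Ioi 0) ∧ (∀ x > 0, LaplaceConvergent f x) ∧
      ∀ z : ℂ, 0 < z.re → complexGammaRatio A B a b z =
        Complex.exp (z * logScale A B) * complexLaplace f z := by
  obtain ⟨f, hfc, hconv, hf⟩ := exists_gammaRatio_eq_exp_mul_laplace hA hB hAB ha hb hμ
  refine ⟨f, hfc, hconv, eqOn_re_pos_of_eq_ofReal (fun z hz => ?_) (fun z hz => ?_) fun x hx => ?_⟩
  · exact (differentiableAt_complexGammaProd hA ha hz).fun_div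
      (differentiableAt_complexGammaProd hB hb hz) (complexGammaProd_ne_zero hB hb hz)
  · exact DifferentiableAt.fun_mul (by fun_prop)
      ((hconv _ (half_pos hz)).hasDerivAt_complexLaplace (half_lt_self hz)).differentiableAt
  · rw [complexGammaRatio_ofReal, complexLaplace_ofReal, hf x hx]
    push_cast
    rfl

-- The shift `z ↦ z + κ` turns the parameters `a`, `b` into `a - κ A`, `b - κ B`.
theorem exists_complexGammaRatio_eq_of_le_div {κ : ℝ} (ha : ∀ i, κ ≤ a i / A i)
    (hb : ∀ j, κ ≤ b j / B j) (hμ : 0 < gammaExponent a b) :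
    ∃ f : ℝ → ℝ, ContinuousOn f (Ioi 0) ∧ (∀ x > -κ, LaplaceConvergent f x) ∧
      ∀ z : ℂ, -κ < z.re → complexGammaRatio A B a b z =
        Complex.exp (z * logScale A B) * complexLaplace f z := by
  obtain ⟨f, hfc, hconv, hf⟩ := exists_complexGammaRatio_eq_exp_mul_complexLaplace hA hB hAB
    (a := fun i => a i - κ * A i) (b := fun j => b j - κ * B j)
    (fun i => sub_nonneg.2 ((le_div_iff₀ (hA i)).1 (ha i)))
    (fun j => sub_nonneg.2 ((le_div_iff₀ (hB j)).1 (hb j)))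
    (by rwa [gammaExponent_sub_mul hAB])
  refine ⟨fun t => Real.exp (κ * logScale A B) * (Real.exp (-(κ * t)) * f t),
    continuousOn_const.mul (ContinuousOn.mul (by fun_prop) hfc),
    fun x hx => (hconv _ (neg_lt_iff_pos_add.1 hx)).exp_neg_mul.const_mul _, fun z hz => ?_⟩
  have hshift := hf (z + κ) (by simpa using neg_lt_iff_pos_add.1 hz)
  rw [complexGammaRatio, complexGammaProd_sub_mul_add, complexGammaProd_sub_mul_add] at hshift
  rw [complexGammaRatio, hshift, complexLaplace_const_mul, complexLaplace_exp_neg_mul,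
    add_mul, Complex.exp_add, mul_assoc]
  push_cast
  rfl

theorem laplace_id_mul_eq_mul_laplace_ratioKernel (ha : ∀ i, 0 ≤ a i) (hb : ∀ j, 0 ≤ b j)
    {f : ℝ → ℝ} (hconv : ∀ x > 0, LaplaceConvergent f x)
    (hf : ∀ x > 0, gammaRatio A B a b x = Real.exp (x * logScale A B) * laplace f x) {x : ℝ}
    (hx : 0 < x) :
    laplace (fun t => t * f t) x = laplace f x * laplace (ratioKernel A B a b) x := by
  have hpos (y : ℝ) (hy : 0 < y) : laplace f y ≠ 0 :=
    right_ne_zero_of_mul (hf y hy ▸ (gammaRatio_pos hA hB ha hb hy).ne')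
  have hlog : (fun y => Real.log (gammaRatio A B a b y)) =ᶠ[𝓝 x]
      fun y => y * logScale A B + Real.log (laplace f y) := by
    filter_upwards [Ioi_mem_nhds hx] with y hy
    rw [hf y hy, Real.log_mul (Real.exp_pos _).ne' (hpos y hy), Real.log_exp]
  have hderiv := ((hasDerivAt_id' x).mul_const (logScale A B)).fun_add
    (((hconv _ (half_pos hx)).hasDerivAt_laplace (half_lt_self hx)).log (hpos x hx))
  rw [laplace_ratioKernel hA hB ha hb hAB hx, hlog.deriv_eq, hderiv.deriv]
  have := hpos x hx
  field_simp
  ring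

theorem nonneg_of_gammaRatio_eq_exp_mul_laplace (ha : ∀ i, 0 ≤ a i) (hb : ∀ j, 0 ≤ b j)
    {f : ℝ → ℝ} (hfc : ContinuousOn f (Ioi 0)) (hconv : ∀ x > 0, LaplaceConvergent f x)
    (hf : ∀ x > 0, gammaRatio A B a b x = Real.exp (x * logScale A B) * laplace f x)
    (hpos : ∀ t > 0, 0 ≤ ratioKernel A B a b t) {s : ℝ} (hs : 0 < s) : 0 ≤ f s := by
  have hlap (x : ℝ) (hx : 0 < x) : 0 ≤ laplace f x :=
    (pos_of_mul_pos_right (hf x hx ▸ gammaRatio_pos hA hB ha hb hx) (Real.exp_pos _).le).le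
  exact nonneg_of_laplace_pow_mul_nonneg hfc hconv (fun n _ x hx => laplace_pow_mul_nonneg hconv
    (fun x hx => laplaceConvergent_ratioKernel hA hB ha hb hAB hx)
    (fun x hx => laplace_id_mul_eq_mul_laplace_ratioKernel hA hB hAB ha hb hconv hf hx)
    hlap hpos n hx) hs

theorem exists_nonneg_complexGammaRatio_eq {κ : ℝ} (ha : ∀ i, 0 ≤ a i) (hb : ∀ j, 0 ≤ b j)
    (hκ : 0 ≤ κ) (hκa : ∀ i, κ ≤ a i / A i) (hμ : 0 < gammaExponent a b)
    (hpos : ∀ t > 0, 0 ≤ ratioKernel A B a b t) :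
    ∃ f : ℝ → ℝ, ContinuousOn f (Ioi 0) ∧ (∀ t > 0, 0 ≤ f t) ∧
      (∀ x > -κ, LaplaceConvergent f x) ∧ ∀ z : ℂ, -κ < z.re → complexGammaRatio A B a b z =
        Complex.exp (z * logScale A B) * complexLaplace f z := by
  obtain ⟨f, hfc, hconv, hf⟩ := exists_complexGammaRatio_eq_of_le_div hA hB hAB hκa
    (le_div_of_ratioKernel_nonneg hA hB hpos hκa) hμ
  have hlt (x : ℝ) (hx : 0 < x) : -κ < x := (neg_nonpos.2 hκ).trans_lt hx
  exact ⟨f, hfc, fun _ ht => nonneg_of_gammaRatio_eq_exp_mul_laplace hA hB hAB ha hb hfc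
    (fun x hx => hconv x (hlt x hx))
    (fun x hx => gammaRatio_eq_of_complexGammaRatio_eq (hf x (hlt x hx))) hpos ht, hconv, hf⟩

end Density

theorem stmt16 (p q : ℕ) (hp : 1 ≤ p) (hq : 1 ≤ q)
    (A : Fin p → ℝ) (B : Fin q → ℝ) (a : Fin p → ℝ) (b : Fin q → ℝ)
    (hA : ∀ k, 0 < A k) (hB : ∀ j, 0 < B j)
    (ha : ∀ k, 0 ≤ a k) (hb : ∀ j, 0 ≤ b j)
    (hμ : 0 < (∑ j, b j) - (∑ k, a k) + ((p : ℝ) - (q : ℝ)) / 2)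
    (W : ℝ → ℝ)
    (hW : ∀ x, W x = (∏ i, Real.Gamma (A i * x + a i)) / ∏ j, Real.Gamma (B j * x + b j))
    (ρ : ℝ) (hρ : ρ = (∏ k, A k ^ A k) * ∏ j, B j ^ (-B j))
    (γ : ℝ) (hγ : γ = -(⨅ k, a k / A k))
    (c : ℝ) (hc : γ < c)
    (H : ℝ → ℝ)
    (hH : ∀ u ∈ Set.Ioo (0 : ℝ) ρ,
      Tendsto (fun R : ℝ => (((2 * Real.pi)⁻¹ : ℝ) : ℂ) *
        ∫ t in -R..R,
          (∏ k, Complex.Gamma ((A k : ℂ) * ((c : ℂ) + (t : ℂ) * Complex.I) + (a k : ℂ))) /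
            (∏ j, Complex.Gamma ((B j : ℂ) * ((c : ℂ) + (t : ℂ) * Complex.I) + (b j : ℂ))) *
            (u : ℂ) ^ (-((c : ℂ) + (t : ℂ) * Complex.I)))
        atTop (nhds ((H u : ℂ))))
    (hlcm : LogCompletelyMonotonic W) :
    (∀ x > (0 : ℝ), W x =
        ∫ t in Set.Ioi (Real.log (1 / ρ)), Real.exp (-t * x) * H (Real.exp (-t))) ∧
      ∀ u ∈ Set.Ioo (0 : ℝ) ρ, 0 ≤ H u := by
  obtain rfl : W = gammaRatio A B a b := funext hW
  obtain rfl : ρ = Real.exp (logScale A B) :=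
    hρ.trans (prod_rpow_mul_prod_rpow_neg_eq_exp hA hB)
  have hγ0 : γ ≤ 0 :=
    hγ ▸ neg_nonpos.2 (Real.iInf_nonneg fun k => div_nonneg (ha k) (hA k).le)
  have hγa (k) : -γ ≤ a k / A k := by
    rw [hγ, neg_neg]
    exact ciInf_le (Set.finite_range _).bddBelow k
  have hAB := sum_eq_sum_of_completelyMonotonicOn hA hB ha hb hlcm.2
  have hμ' : 0 < gammaExponent a b := by simpa [gammaExponent_eq] using hμ
  obtain ⟨f, hfc, hf0, hconv, hf⟩ := exists_nonneg_complexGammaRatio_eq hA hB hAB ha hb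
    (neg_nonneg.2 hγ0) hγa hμ' (ratioKernel_nonneg_of_completelyMonotonicOn hA hB ha hb hAB hlcm.2)
  rw [neg_neg] at hconv hf
  have hHf (s : ℝ) (hs : 0 < s) : H (Real.exp (logScale A B - s)) = f s :=
    Complex.ofReal_injective <| eq_of_tendsto_mellin_inversion (hconv c hc)
      (fun z hz => hf z (hz ▸ hc)) hs (hfc.continuousAt (Ioi_mem_nhds hs))
      (hH _ ⟨Real.exp_pos _, Real.exp_lt_exp.2 (sub_lt_self _ hs)⟩)
  constructor
  · intro x hx
    rw [gammaRatio_eq_of_complexGammaRatio_eq (hf x (hγ0.trans_lt hx)), exp_mul_laplace,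
      one_div, Real.log_inv, Real.log_exp]
    refine setIntegral_congr_fun measurableSet_Ioi fun t ht => ?_
    rw [← hHf _ (neg_lt_iff_pos_add.1 ht), sub_add_cancel_right]
  · intro u hu
    have hs := sub_pos.2 ((Real.log_lt_iff_lt_exp hu.1).2 hu.2)
    rw [← Real.exp_log hu.1, ← sub_sub_cancel (logScale A B) (Real.log u), hHf _ hs]
    exact hf0 _ hs
end
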